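/- arXiv:1712.03504 — 3 statements merged into one kernel-verified Lean document; each statement's English description precedes it below -/
import Mathlib

section
/- Let G be a finite connected simple graph and K a field. If the edge ring K[G] has a 3-linear resolution, then K[G] is a hypersurface, i.e., the toric ideal I_G is a principal ideal. -/
open MvPolynomial Pointwise

/-- `ρ({i,j}) = e_i + e_j` : the 0/1 (incidence) vector of an edge. -/
noncomputable def rho {N : ℕ} (e : Sym2 (Fin N)) : Fin N → ℝ :=
  fun v => if v ∈ e then 1 else 0

/-- The edge polytope of a graph on `Fin N`. -/
noncomputable def edgePolytope {N : ℕ} (G : SimpleGraph (Fin N)) : Set (Fin N → ℝ) :=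
  convexHull ℝ (rho '' G.edgeSet)

/-- Number of lattice points of the `t`-th dilation (`= 1` for `t = 0`). -/
noncomputable def ehr {N : ℕ} (P : Set (Fin N → ℝ)) (t : ℕ) : ℕ :=
  if t = 0 then 1 else Nat.card {x : Fin N → ℤ // (fun i => (x i : ℝ)) ∈ (t : ℝ) • P}

/-- The dimension of a polytope: the rank of the direction of its affine span. -/
noncomputable def polyDim {N : ℕ} (P : Set (Fin N → ℝ)) : ℕ :=
  Module.finrank ℝ (affineSpan ℝ P).direction

/-- The `i`-th coefficient of `(1-λ)^{d+1} (1 + Σ_{t≥1} |tP ∩ Z^N| λ^t)`. -/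
noncomputable def deltaCoeff {N : ℕ} (P : Set (Fin N → ℝ)) (i : ℕ) : ℤ :=
  ∑ j ∈ Finset.range (i + 1),
    (-1 : ℤ) ^ j * (Nat.choose (polyDim P + 1) j : ℤ) * (ehr P (i - j) : ℤ)

/-- The degree of the δ-polynomial of `P`. -/
noncomputable def polyDeg {N : ℕ} (P : Set (Fin N → ℝ)) : ℕ :=
  sSup {i : ℕ | deltaCoeff P i ≠ 0}

/-- The monomial `t_i t_j s` attached to an edge `{i,j}`; `s` is the variable `none`. -/
noncomputable def edgeMonom (K : Type*) [Field K] {V : Type*} (e : Sym2 V) :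
    MvPolynomial (Option V) K :=
  Sym2.lift ⟨fun i j => X (some i) * X (some j) * X none, fun i j => by ring⟩ e

/-- The edge ring `K[G]`, the subalgebra generated by the monomials `t^{ρ(e)} s`. -/
noncomputable def edgeRing (K : Type*) [Field K] {V : Type*} (G : SimpleGraph V) :
    Subalgebra K (MvPolynomial (Option V) K) :=
  Algebra.adjoin K (edgeMonom K '' G.edgeSet)

/-- The toric ideal `I_G`: kernel of `x_e ↦ t^{ρ(e)} s`. -/
noncomputable def toricIdeal (K : Type*) [Field K] {V : Type*} (G : SimpleGraph V) :
    Ideal (MvPolynomial G.edgeSet K) :=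
  RingHom.ker (MvPolynomial.aeval (fun e : G.edgeSet => edgeMonom K (e : Sym2 V)) :
    MvPolynomial G.edgeSet K →ₐ[K] MvPolynomial (Option V) K)

/-- `S/I` has a `q`-linear (minimal graded free) resolution: there is a graded free
resolution of `S/I` in which the free module at homological step `i ≥ 1` is generated
in the single degree `q + i - 1`; equivalently all Betti numbers `β_{i,j}` with
`j ≠ q + i - 1` vanish. -/
def HasLinearResolution {σ K : Type*} [Field K] (q : ℕ)
    (I : Ideal (MvPolynomial σ K)) : Prop :=
  ∃ (b : ℕ → ℕ)
    (φ₀ : (Fin (b 0) →₀ MvPolynomial σ K) →ₗ[MvPolynomial σ K] MvPolynomial σ K)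
    (φ : ∀ i : ℕ,
      (Fin (b (i + 1)) →₀ MvPolynomial σ K) →ₗ[MvPolynomial σ K]
        (Fin (b i) →₀ MvPolynomial σ K)),
    LinearMap.range φ₀ = I ∧
    LinearMap.ker φ₀ = LinearMap.range (φ 0) ∧
    (∀ i, LinearMap.ker (φ i) = LinearMap.range (φ (i + 1))) ∧
    (∀ j, (φ₀ (Finsupp.single j 1)).IsHomogeneous q) ∧
    (∀ i j k, ((φ i (Finsupp.single j 1)) k).IsHomogeneous 1)

section LinearSyzygies

variable {σ K : Type*} [Field K]

lemma coeff_mul_of_isHomogeneous {q : ℕ} {g : MvPolynomial σ K} (hg : g.IsHomogeneous q)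
    {m : σ →₀ ℕ} (hm : m.degree = q) (a : MvPolynomial σ K) :
    coeff m (a * g) = coeff 0 a * coeff m g := by
  classical
  rw [coeff_mul, Finset.sum_eq_single (0, m)]
  · rintro ⟨x, y⟩ hxy hne
    have hxy' : x + y = m := by simpa using hxy
    by_cases hx : x = 0
    · subst hx
      simp at hxy'
      simp [hxy'] at hne
    · have : y.degree ≠ q := by
        intro hy
        have h := congrArg Finsupp.degree hxy'
        rw [map_add] at h
        have : x.degree = 0 := by omega
        exact hx ((Finsupp.degree_eq_zero_iff x).1 this)
      simp [hg.coeff_eq_zero this]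
  · simp

lemma card_toMultiset_eq_degree (m : σ →₀ ℕ) : m.toMultiset.card = m.degree := by
  rw [Finsupp.card_toMultiset, Finsupp.degree_apply]
  rfl

lemma exists_eq_single_of_degree_eq_one {m : σ →₀ ℕ} (hm : m.degree = 1) :
    ∃ e, m = Finsupp.single e 1 := by
  classical
  rw [← card_toMultiset_eq_degree, Multiset.card_eq_one] at hm
  obtain ⟨e, he⟩ := hm
  exact ⟨e, by rw [Finsupp.toMultiset_eq_iff.1 he, Multiset.toFinsupp_singleton]⟩

lemma eq_sum_X_of_isHomogeneous_one [Fintype σ] {s : MvPolynomial σ K}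
    (hs : s.IsHomogeneous 1) : ∑ e, X e * C (coeff (Finsupp.single e 1) s) = s := by
  classical
  ext m
  simp only [coeff_sum, mul_comm (X _), coeff_C_mul, coeff_X]
  by_cases hm : m.degree = 1
  · obtain ⟨e, rfl⟩ := exists_eq_single_of_degree_eq_one hm
    rw [Finset.sum_eq_single e] <;> simp +contextual [Finsupp.single_left_inj]
  · rw [hs.coeff_eq_zero hm]
    refine Finset.sum_eq_zero fun e _ => ?_
    rw [if_neg, mul_zero]
    rintro rfl
    simp at hm

/-- Membership of a Koszul relation in the span of the linear syzygies, read off at a single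
monomial `u`. -/
lemma HasLinearResolution.exists_linear_syzygy [Fintype σ] {q : ℕ} {I : Ideal (MvPolynomial σ K)}
    (hI : HasLinearResolution q I) {f g : MvPolynomial σ K} (hf : f ∈ I) (hg : g ∈ I)
    (hfq : f.IsHomogeneous q) (hgq : g.IsHomogeneous q) {u m : σ →₀ ℕ}
    (huf : coeff u f ≠ 0) (hug : coeff u g = 0) (hm : coeff m g ≠ 0) :
    ∃ e, m e ≠ 0 ∧ ∃ h : σ → MvPolynomial σ K,
      (∀ e', h e' ∈ I ∧ (h e').IsHomogeneous q) ∧ ∑ e', X e' * h e' = 0 ∧ coeff u (h e) ≠ 0 := by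
  classical
  obtain ⟨b, φ₀, φ, hr, hk, -, hq, h1⟩ := hI
  have hφ₀ : ∀ A, φ₀ A = ∑ j, A j * φ₀ (Finsupp.single j 1) := by
    intro A
    conv_lhs => rw [← Finsupp.univ_sum_single A]
    rw [map_sum]
    refine Finset.sum_congr rfl fun j _ => ?_
    rw [← smul_eq_mul, ← map_smul, Finsupp.smul_single, smul_eq_mul, mul_one]
  have hu : u.degree = q := by
    by_contra h
    exact huf (hfq.coeff_eq_zero h)
  have hmq : m.degree = q := by
    by_contra h
    exact hm (hgq.coeff_eq_zero h)
  let L : (Fin (b 0) →₀ MvPolynomial σ K) →ₗ[MvPolynomial σ K] MvPolynomial σ K :=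
    Finsupp.linearCombination _ fun j => C (coeff u (φ₀ (Finsupp.single j 1)))
  have hL : ∀ A, L A = ∑ j, A j * C (coeff u (φ₀ (Finsupp.single j 1))) := by
    intro A
    simp [L, Finsupp.linearCombination_apply, Finsupp.sum_fintype]
  have hL0 : ∀ A, coeff 0 (L A) = coeff u (φ₀ A) := by
    intro A
    rw [hL, hφ₀, coeff_sum, coeff_sum]
    refine Finset.sum_congr rfl fun j _ => ?_
    rw [coeff_mul_of_isHomogeneous (hq j) hu, mul_comm, coeff_C_mul, mul_comm]
  obtain ⟨A, hA⟩ : f ∈ LinearMap.range φ₀ := by rw [hr]; exact hf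
  obtain ⟨B, hB⟩ : g ∈ LinearMap.range φ₀ := by rw [hr]; exact hg
  obtain ⟨c, hc⟩ : g • A - f • B ∈ LinearMap.range (φ 0) := by
    rw [← hk, LinearMap.mem_ker, map_sub, map_smul, map_smul, hA, hB, smul_eq_mul, smul_eq_mul,
      mul_comm, sub_self]
  have hne : coeff m (L (φ 0 c)) ≠ 0 := by
    rw [hc, map_sub, map_smul, map_smul, smul_eq_mul, smul_eq_mul, mul_comm g, mul_comm f,
      coeff_sub, coeff_mul_of_isHomogeneous hgq hmq, coeff_mul_of_isHomogeneous hfq hmq, hL0, hL0,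
      hA, hB, hug, zero_mul, sub_zero]
    exact mul_ne_zero huf hm
  obtain ⟨k, hk'⟩ : ∃ k, coeff m (c k * L (φ 0 (Finsupp.single k 1))) ≠ 0 := by
    by_contra! hall
    apply hne
    conv_lhs => rw [← Finsupp.univ_sum_single c]
    rw [map_sum, map_sum, coeff_sum]
    refine Finset.sum_eq_zero fun k _ => ?_
    rw [← hall k, ← smul_eq_mul (c k), ← map_smul, ← map_smul, Finsupp.smul_single, smul_eq_mul,
      mul_one]
  set s := φ 0 (Finsupp.single k 1) with hs
  have hLs : (L s).IsHomogeneous 1 := by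
    rw [hL]
    refine IsHomogeneous.sum _ _ _ fun j _ => ?_
    simpa using (h1 0 k j).mul (isHomogeneous_C σ (coeff u (φ₀ (Finsupp.single j 1))))
  rw [coeff_mul] at hk'
  obtain ⟨⟨x, y⟩, hxy, hne'⟩ := Finset.exists_ne_zero_of_sum_ne_zero hk'
  have hy : coeff y (L s) ≠ 0 := right_ne_zero_of_mul hne'
  have hy1 : y.degree = 1 := by
    by_contra h
    exact hy (hLs.coeff_eq_zero h)
  obtain ⟨e, rfl⟩ := exists_eq_single_of_degree_eq_one hy1
  refine ⟨e, ?_, fun e' => ∑ j, C (coeff (Finsupp.single e' 1) (s j)) * φ₀ (Finsupp.single j 1),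
    fun e' => ⟨?_, ?_⟩, ?_, ?_⟩
  · have : x + Finsupp.single e 1 = m := by simpa using hxy
    rw [← this]
    simp
  · refine Ideal.sum_mem _ fun j _ => Ideal.mul_mem_left _ _ ?_
    rw [← hr]
    exact LinearMap.mem_range_self _ _
  · refine IsHomogeneous.sum _ _ _ fun j _ => ?_
    simpa using (isHomogeneous_C σ (coeff (Finsupp.single e' 1) (s j))).mul (hq j)
  · simp_rw [Finset.mul_sum, ← mul_assoc]
    rw [Finset.sum_comm]
    simp_rw [← Finset.sum_mul]
    have h0 : φ₀ s = 0 := by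
      rw [← LinearMap.mem_ker, hk]
      exact LinearMap.mem_range_self _ _
    rw [← h0, hφ₀]
    exact Finset.sum_congr rfl fun j _ => by rw [eq_sum_X_of_isHomogeneous_one (h1 0 k j)]
  · rw [hL, coeff_sum] at hy
    rw [coeff_sum]
    refine ne_of_eq_of_ne (Finset.sum_congr rfl fun j _ => ?_) hy
    rw [coeff_C_mul, mul_comm (s j), coeff_C_mul, mul_comm]

end LinearSyzygies

section ToricIdeal

variable {V : Type*}

/-- The endpoints of a multiset of edges, with multiplicity. -/
def endpoints (u : Multiset (Sym2 V)) : Multiset V := (u.map Sym2.toMultiset).sum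

@[simp]
lemma endpoints_zero : endpoints (0 : Multiset (Sym2 V)) = 0 := rfl

@[simp]
lemma endpoints_cons (e : Sym2 V) (u : Multiset (Sym2 V)) :
    endpoints (e ::ₘ u) = e.toMultiset + endpoints u := by
  simp [endpoints]

@[simp]
lemma endpoints_singleton (e : Sym2 V) : endpoints {e} = e.toMultiset := by
  simp [endpoints]

@[simp]
lemma toMultiset_mk (a b : V) : Sym2.toMultiset s(a, b) = {a, b} := rfl

lemma card_endpoints (u : Multiset (Sym2 V)) : (endpoints u).card = 2 * u.card := by
  induction u using Multiset.induction_on with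
  | empty => rfl
  | cons e u ih =>
    rw [endpoints_cons, Multiset.card_add, ih, Multiset.card_cons, Sym2.card_toMultiset]
    ring

/-- The exponent of the product of the monomials attached to a multiset of edges. -/
noncomputable def edgeExponent [DecidableEq V] (u : Multiset (Sym2 V)) : Option V →₀ ℕ :=
  Multiset.toFinsupp ((endpoints u).map some + Multiset.replicate u.card none)

lemma edgeExponent_inj [DecidableEq V] {u w : Multiset (Sym2 V)} :
    edgeExponent u = edgeExponent w ↔ endpoints u = endpoints w := by
  refine ⟨fun h => ?_, fun h => ?_⟩
  · have h' := congrArg (Multiset.filterMap id) (Multiset.toFinsupp.injective h)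
    have h0 : ∀ n, Multiset.filterMap id (Multiset.replicate n (none : Option V)) = 0 := by
      intro n
      induction n with
      | zero => rfl
      | succ n ih => simp [Multiset.replicate_succ, ih]
    simpa [Multiset.filterMap_add, Multiset.filterMap_map, h0] using h'
  · have hc := congrArg Multiset.card h
    rw [card_endpoints, card_endpoints] at hc
    rw [edgeExponent, edgeExponent, h, Nat.eq_of_mul_eq_mul_left two_pos hc]

variable (K : Type*) [Field K]

lemma prod_edgeMonom [DecidableEq V] (u : Multiset (Sym2 V)) :
    (u.map (edgeMonom K)).prod = monomial (edgeExponent u) 1 := by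
  induction u using Multiset.induction_on with
  | empty => simp [edgeExponent]
  | cons e u ih =>
    induction e with
    | h a b =>
      rw [Multiset.map_cons, Multiset.prod_cons, ih]
      have : edgeExponent (s(a, b) ::ₘ u) = Finsupp.single (some a) 1 + Finsupp.single (some b) 1
          + Finsupp.single none 1 + edgeExponent u := by
        simp only [edgeExponent, endpoints_cons, toMultiset_mk, Multiset.insert_eq_cons,
          Multiset.map_add, Multiset.map_cons, Multiset.map_singleton, Multiset.card_cons,
          Multiset.replicate_add, Multiset.replicate_one]
        simp only [← Multiset.singleton_add, map_add, Multiset.toFinsupp_singleton]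
        abel
      rw [this]
      simp [edgeMonom, X, monomial_mul]

/-- The multiset of edges underlying an exponent of `K[x_e : e ∈ E(G)]`. -/
noncomputable def edgesOf {G : SimpleGraph V} (m : G.edgeSet →₀ ℕ) : Multiset (Sym2 V) :=
  m.toMultiset.map (↑)

lemma edgesOf_injective {G : SimpleGraph V} :
    Function.Injective (edgesOf : (G.edgeSet →₀ ℕ) → Multiset (Sym2 V)) := by
  classical
  exact (Multiset.map_injective Subtype.val_injective).comp Multiset.toFinsupp.symm.injective

lemma card_edgesOf {G : SimpleGraph V} (m : G.edgeSet →₀ ℕ) : (edgesOf m).card = m.degree := by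
  rw [edgesOf, Multiset.card_map, card_toMultiset_eq_degree]

lemma exists_edgesOf_eq {G : SimpleGraph V} {u : Multiset (Sym2 V)} (hu : ∀ e ∈ u, e ∈ G.edgeSet) :
    ∃ m : G.edgeSet →₀ ℕ, edgesOf m = u := by
  classical
  lift u to Multiset G.edgeSet using hu
  exact ⟨Multiset.toFinsupp u, by simp [edgesOf]⟩

variable {G : SimpleGraph V}

/-- The exponents of a binomial of degree `3` in the toric ideal. -/
structure IsCubicPair (G : SimpleGraph V) (u w : Multiset (Sym2 V)) : Prop where
  left_mem : ∀ e ∈ u, e ∈ G.edgeSet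
  right_mem : ∀ e ∈ w, e ∈ G.edgeSet
  card_left : u.card = 3
  ne : u ≠ w
  endpoints_eq : endpoints u = endpoints w

lemma edgesOf_mem (m : G.edgeSet →₀ ℕ) : ∀ e ∈ edgesOf m, e ∈ G.edgeSet := by
  intro e he
  obtain ⟨e', -, rfl⟩ := Multiset.mem_map.1 he
  exact e'.2

lemma isCubicPair_edgesOf {m n : G.edgeSet →₀ ℕ} (hm : m.degree = 3) (hne : m ≠ n)
    (h : endpoints (edgesOf m) = endpoints (edgesOf n)) : IsCubicPair G (edgesOf m) (edgesOf n) :=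
  ⟨edgesOf_mem m, edgesOf_mem n, by rw [card_edgesOf, hm], edgesOf_injective.ne hne, h⟩

variable {K}

lemma isHomogeneous_monomial_sub {m n : G.edgeSet →₀ ℕ} {q : ℕ} (hm : m.degree = q)
    (hn : n.degree = q) : (monomial m (1 : K) - monomial n 1).IsHomogeneous q :=
  (isHomogeneous_monomial 1 hm).sub (isHomogeneous_monomial 1 hn)

variable [DecidableEq V]

lemma aeval_edgeMonom_monomial (m : G.edgeSet →₀ ℕ) (c : K) :
    aeval (fun e : G.edgeSet => edgeMonom K (e : Sym2 V)) (monomial m c) =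
      monomial (edgeExponent (edgesOf m)) c := by
  have h : (m.prod fun e k => edgeMonom K (e : Sym2 V) ^ k) =
      ((edgesOf m).map (edgeMonom K)).prod := by
    rw [edgesOf, Multiset.map_map, Finsupp.toMultiset_map, Finsupp.prod_toMultiset,
      Finsupp.prod_mapDomain_index] <;> simp [pow_add]
  rw [aeval_monomial, h, prod_edgeMonom, algebraMap_eq, C_mul_monomial, mul_one]

lemma coeff_aeval_edgeMonom (h : MvPolynomial G.edgeSet K) (d : Option V →₀ ℕ) :
    coeff d (aeval (fun e : G.edgeSet => edgeMonom K (e : Sym2 V)) h) =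
      ∑ m ∈ h.support, if edgeExponent (edgesOf m) = d then coeff m h else 0 := by
  conv_lhs => rw [h.as_sum, map_sum, coeff_sum]
  simp only [aeval_edgeMonom_monomial, coeff_monomial]

lemma monomial_sub_monomial_mem_toricIdeal {m n : G.edgeSet →₀ ℕ}
    (h : endpoints (edgesOf m) = endpoints (edgesOf n)) :
    monomial m (1 : K) - monomial n 1 ∈ toricIdeal K G := by
  rw [toricIdeal, RingHom.mem_ker, map_sub]
  erw [aeval_edgeMonom_monomial, aeval_edgeMonom_monomial]
  rw [edgeExponent_inj.2 h, sub_self]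

lemma exists_ne_of_mem_toricIdeal {h : MvPolynomial G.edgeSet K} (hh : h ∈ toricIdeal K G)
    {m : G.edgeSet →₀ ℕ} (hm : coeff m h ≠ 0) :
    ∃ n, n ≠ m ∧ endpoints (edgesOf n) = endpoints (edgesOf m) ∧ coeff n h ≠ 0 := by
  by_contra! hcon
  have h0 := coeff_aeval_edgeMonom h (edgeExponent (edgesOf m))
  have h1 : aeval (fun e : G.edgeSet => edgeMonom K (e : Sym2 V)) h = 0 := hh
  rw [h1, coeff_zero, Finset.sum_eq_single m, if_pos rfl] at h0
  · exact hm h0.symm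
  · intro n _ hn
    split_ifs with hd
    · exact hcon n hn (edgeExponent_inj.1 hd)
    · rfl
  · intro hms
    rw [if_pos rfl]
    simpa using hms

lemma coeff_eq_zero_of_degree_lt {q : ℕ} (hI : HasLinearResolution q (toricIdeal K G))
    {f : MvPolynomial G.edgeSet K} (hf : f ∈ toricIdeal K G) {m : G.edgeSet →₀ ℕ}
    (hm : m.degree < q) : coeff m f = 0 := by
  obtain ⟨b, φ₀, φ, hr, -, -, hq, -⟩ := hI
  obtain ⟨A, rfl⟩ : f ∈ LinearMap.range φ₀ := by rw [hr]; exact hf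
  rw [← Finsupp.univ_sum_single A, map_sum, coeff_sum]
  refine Finset.sum_eq_zero fun j _ => ?_
  have : φ₀ (Finsupp.single j (A j)) = A j * φ₀ (Finsupp.single j 1) := by
    rw [← smul_eq_mul, ← map_smul, Finsupp.smul_single, smul_eq_mul, mul_one]
  rw [this, coeff_mul]
  refine Finset.sum_eq_zero fun x hx => ?_
  rw [(hq j).coeff_eq_zero, mul_zero]
  have h := congrArg Finsupp.degree (Finset.HasAntidiagonal.mem_antidiagonal.1 hx)
  rw [map_add] at h
  omega

lemma eq_of_endpoints_eq_of_card_lt {q : ℕ} (hI : HasLinearResolution q (toricIdeal K G))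
    {u w : Multiset (Sym2 V)} (hu : ∀ e ∈ u, e ∈ G.edgeSet) (hw : ∀ e ∈ w, e ∈ G.edgeSet)
    (hc : u.card < q) (h : endpoints u = endpoints w) : u = w := by
  obtain ⟨m, rfl⟩ := exists_edgesOf_eq hu
  obtain ⟨n, rfl⟩ := exists_edgesOf_eq hw
  by_contra hne
  have hmn : n ≠ m := fun h => hne (by rw [h])
  have := coeff_eq_zero_of_degree_lt hI (monomial_sub_monomial_mem_toricIdeal (K := K) h)
    (card_edgesOf m ▸ hc)
  simp [coeff_monomial, hmn] at this

/-- A linear syzygy exchanges an edge of one cubic pair for an edge of another. -/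
lemma IsCubicPair.exists_exchange [Finite V] (hI : HasLinearResolution 3 (toricIdeal K G))
    {u w u' w' : Multiset (Sym2 V)} (h : IsCubicPair G u w) (h' : IsCubicPair G u' w')
    (huu : u ≠ u') (huw : u ≠ w') :
    ∃ e ∈ u', ∃ e' ∈ u, e ≠ e' ∧ ∃ v, IsCubicPair G (e ::ₘ u.erase e') v := by
  have : Fintype G.edgeSet := Fintype.ofFinite _
  have hc := congrArg Multiset.card h.endpoints_eq
  have hc' := congrArg Multiset.card h'.endpoints_eq
  obtain ⟨m, rfl⟩ := exists_edgesOf_eq h.left_mem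
  obtain ⟨n, rfl⟩ := exists_edgesOf_eq h.right_mem
  obtain ⟨m', rfl⟩ := exists_edgesOf_eq h'.left_mem
  obtain ⟨n', rfl⟩ := exists_edgesOf_eq h'.right_mem
  have hm := h.card_left
  have hm' := h'.card_left
  rw [card_endpoints, card_endpoints] at hc hc'
  rw [card_edgesOf] at hm hm' 
  rw [card_edgesOf, card_edgesOf] at hc hc'
  have hmn : n ≠ m := fun hh => h.ne (by rw [hh])
  have hmm' : m' ≠ m := fun hh => huu (by rw [hh])
  have hmn' : n' ≠ m := fun hh => huw (by rw [hh])
  have hnm' : n' ≠ m' := fun hh => h'.ne (by rw [hh])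
  obtain ⟨e, hem, g, hg, hsum, hge⟩ := hI.exists_linear_syzygy
    (monomial_sub_monomial_mem_toricIdeal (K := K) h.endpoints_eq)
    (monomial_sub_monomial_mem_toricIdeal (K := K) h'.endpoints_eq)
    (isHomogeneous_monomial_sub hm (by omega)) (isHomogeneous_monomial_sub hm' (by omega))
    (u := m) (m := m') (by simp [coeff_monomial, hmn]) (by simp [coeff_monomial, hmm', hmn'])
    (by simp [coeff_monomial, hnm'])
  have hcoeff := congrArg (coeff (Finsupp.single e 1 + m)) hsum
  rw [coeff_sum, coeff_zero] at hcoeff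
  obtain ⟨e', hne, he'⟩ : ∃ e', e' ≠ e ∧ coeff (Finsupp.single e 1 + m) (X e' * g e') ≠ 0 := by
    by_contra! hcon
    rw [Finset.sum_eq_single e (fun e' _ hne => hcon e' hne) (by simp), coeff_X_mul] at hcoeff
    exact hge hcoeff
  rw [coeff_X_mul'] at he'
  split_ifs at he' with hsupp
  · have hme' : m e' ≠ 0 := by
      simpa [hne.symm] using hsupp
    set r := m - Finsupp.single e' 1 with hr
    have hmr : m = Finsupp.single e' 1 + r := by
      rw [hr, add_tsub_cancel_of_le]
      simpa [Nat.one_le_iff_ne_zero] using hme'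
    have hrw : Finsupp.single e 1 + m - Finsupp.single e' 1 = Finsupp.single e 1 + r := by
      rw [hmr, ← add_assoc, add_comm (Finsupp.single e 1), add_assoc, add_tsub_cancel_left]
    rw [hrw] at he'
    obtain ⟨t, htne, ht, -⟩ := exists_ne_of_mem_toricIdeal (hg e').1 he'
    have h1 : ∀ (x : G.edgeSet) (y : G.edgeSet →₀ ℕ),
        edgesOf (Finsupp.single x 1 + y) = (x : Sym2 V) ::ₘ edgesOf y := by
      intro x y
      simp [edgesOf]
    refine ⟨e, ?_, e', ?_, fun hh => hne (Subtype.ext hh.symm), edgesOf t, ?_⟩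
    · simpa [edgesOf] using hem
    · rw [hmr, h1]; simp
    · have h2 : (edgesOf m).erase (e' : Sym2 V) = edgesOf r := by
        rw [hmr, h1, Multiset.erase_cons_head]
      rw [h2, ← h1]
      refine isCubicPair_edgesOf ?_ htne.symm ht.symm
      by_contra hd
      exact he' ((hg e').2.coeff_eq_zero hd)
  · exact absurd rfl he'

/-- If there is at most one cubic pair then the toric ideal is principal. -/
lemma toricIdeal_principal_of_cubicPair_unique (hI : HasLinearResolution 3 (toricIdeal K G))
    (huniq : ∀ u w u' w', IsCubicPair G u w → IsCubicPair G u' w' → u' = u ∨ u' = w) :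
    ∃ f : MvPolynomial G.edgeSet K, toricIdeal K G = Ideal.span {f} := by
  obtain ⟨b, φ₀, φ, hr, -, -, hq, -⟩ := hI
  have hmem : ∀ A, φ₀ A ∈ toricIdeal K G := fun A => hr ▸ LinearMap.mem_range_self _ _
  have hspan : toricIdeal K G = Ideal.span (Set.range fun j => φ₀ (Finsupp.single j 1)) := by
    refine le_antisymm ?_ (Ideal.span_le.2 ?_)
    · rw [← hr]
      rintro - ⟨A, rfl⟩
      rw [← Finsupp.univ_sum_single A, map_sum]
      refine Ideal.sum_mem _ fun j _ => ?_
      have : φ₀ (Finsupp.single j (A j)) = A j * φ₀ (Finsupp.single j 1) := by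
        rw [← smul_eq_mul, ← map_smul, Finsupp.smul_single, smul_eq_mul, mul_one]
      rw [this]
      exact Ideal.mul_mem_left _ _ (Ideal.subset_span ⟨j, rfl⟩)
    · rintro - ⟨j, rfl⟩
      exact hmem _
  have hpair : ∀ j m, coeff m (φ₀ (Finsupp.single j 1)) ≠ 0 → ∃ n : G.edgeSet →₀ ℕ,
      IsCubicPair G (edgesOf m) (edgesOf n) := by
    intro j m hm
    obtain ⟨n, hn, he, -⟩ := exists_ne_of_mem_toricIdeal (hmem _) hm
    refine ⟨n, isCubicPair_edgesOf ?_ hn.symm he.symm⟩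
    by_contra hd
    exact hm ((hq j).coeff_eq_zero hd)
  by_cases hex : ∃ u w, IsCubicPair G u w
  · obtain ⟨u, w, h⟩ := hex
    obtain ⟨m, rfl⟩ := exists_edgesOf_eq h.left_mem
    obtain ⟨n, rfl⟩ := exists_edgesOf_eq h.right_mem
    have hmn : m ≠ n := fun hh => h.ne (by rw [hh])
    have hb := monomial_sub_monomial_mem_toricIdeal (K := K) h.endpoints_eq
    refine ⟨monomial m 1 - monomial n 1, le_antisymm ?_ ((Ideal.span_singleton_le_iff_mem _).2 hb)⟩
    rw [hspan, Ideal.span_le]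
    rintro - ⟨j, rfl⟩
    set g := φ₀ (Finsupp.single j 1) with hg
    have hzero : g - C (coeff m g) * (monomial m 1 - monomial n 1) = 0 := by
      set g' := g - C (coeff m g) * (monomial m 1 - monomial n 1) with hg'
      have hg'I : g' ∈ toricIdeal K G := sub_mem (hmem _) (Ideal.mul_mem_left _ _ hb)
      have hsupp : ∀ t, t ≠ n → coeff t g' = 0 := by
        intro t htn
        by_cases htm : t = m
        · subst htm
          simp [hg', coeff_monomial, hmn.symm]
        · have : coeff t g = 0 := by
            by_contra ht
            obtain ⟨s, hs⟩ := hpair j t ht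
            rcases huniq _ _ _ _ h hs with h1 | h1
            · exact htm (edgesOf_injective h1)
            · exact htn (edgesOf_injective h1)
          simp [hg', coeff_monomial, Ne.symm htm, Ne.symm htn, this]
      ext t
      rw [coeff_zero]
      by_contra ht
      obtain ⟨s, hst, -, hs⟩ := exists_ne_of_mem_toricIdeal hg'I ht
      have h1 : t = n := by_contra fun h1 => ht (hsupp t h1)
      have h2 : s = n := by_contra fun h1 => hs (hsupp s h1)
      exact hst (h2.trans h1.symm)
    rw [sub_eq_zero] at hzero
    change g ∈ _
    rw [hzero]
    exact Ideal.mul_mem_left _ _ (Ideal.mem_span_singleton_self _)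
  · refine ⟨0, ?_⟩
    rw [hspan]
    refine le_antisymm (Ideal.span_le.2 ?_) (by simp)
    rintro - ⟨j, rfl⟩
    have : φ₀ (Finsupp.single j 1) = 0 := by
      ext m
      by_contra hm
      obtain ⟨n, hn⟩ := hpair j m hm
      exact hex ⟨_, _, hn⟩
    simp [this]

end ToricIdeal

section CubicPairs

variable {V : Type*} {G : SimpleGraph V}

/-- Distinct pairs of edges of `G` have distinct endpoints, i.e. `I_G` contains no quadric. -/
def NoQuadrics (G : SimpleGraph V) : Prop :=
  ∀ u w : Multiset (Sym2 V), (∀ e ∈ u, e ∈ G.edgeSet) → (∀ e ∈ w, e ∈ G.edgeSet) →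
    u.card = 2 → endpoints u = endpoints w → u = w

lemma NoQuadrics.eq_or_eq (hQ : NoQuadrics G) {a b c d : V} (hab : G.Adj a b) (hbc : G.Adj b c)
    (hcd : G.Adj c d) (hda : G.Adj d a) : a = c ∨ b = d := by
  have h := hQ {s(a, b), s(c, d)} {s(b, c), s(d, a)} (by simp [hab, hcd]) (by simp [hbc, hda])
    (by simp) (by
      simp only [Multiset.insert_eq_cons, endpoints_cons, endpoints_singleton, toMultiset_mk]
      simp only [← Multiset.singleton_add]
      abel)
  have hmem : s(a, b) ∈ ({s(b, c), s(d, a)} : Multiset (Sym2 V)) := h ▸ by simp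
  simp only [Multiset.insert_eq_cons, Multiset.mem_cons, Multiset.mem_singleton, Sym2.eq_iff]
    at hmem
  grind

lemma toMultiset_injective : Function.Injective (Sym2.toMultiset : Sym2 V → Multiset V) := by
  intro e f h
  induction e with | h a b =>
  induction f with | h c d =>
  simp only [toMultiset_mk, Multiset.insert_eq_cons] at h
  have hc := h ▸ Multiset.mem_cons_self a _
  rw [Sym2.eq_iff]
  simp only [Multiset.mem_cons, Multiset.mem_singleton] at hc
  rcases hc with rfl | rfl
  · simp_all
  · rw [← Multiset.insert_eq_cons, ← Multiset.insert_eq_cons, Multiset.pair_comm c] at h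
    simp_all

lemma mem_endpoints {u : Multiset (Sym2 V)} {x : V} : x ∈ endpoints u ↔ ∃ e ∈ u, x ∈ e := by
  induction u using Multiset.induction_on with
  | empty => simp
  | cons e u ih => simp [ih]

lemma exists_mk_mem_of_mem_endpoints {u : Multiset (Sym2 V)} {x : V} (hx : x ∈ endpoints u) :
    ∃ y ∈ endpoints u, s(x, y) ∈ u := by
  obtain ⟨e, he, hxe⟩ := mem_endpoints.1 hx
  obtain ⟨y, rfl⟩ := Sym2.mem_iff_exists.1 hxe
  exact ⟨y, mem_endpoints.2 ⟨_, he, by simp⟩, he⟩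

lemma IsCubicPair.symm {u w : Multiset (Sym2 V)} (h : IsCubicPair G u w) : IsCubicPair G w u := by
  refine ⟨h.right_mem, h.left_mem, ?_, h.ne.symm, h.endpoints_eq.symm⟩
  have hc := congrArg Multiset.card h.endpoints_eq
  rw [card_endpoints, card_endpoints, h.card_left] at hc
  omega

lemma endpoints_triple (a₀ a₁ a₂ a₃ a₄ a₅ : V) :
    endpoints {s(a₀, a₁), s(a₂, a₃), s(a₄, a₅)} = {a₀, a₁, a₂, a₃, a₄, a₅} := by
  simp only [Multiset.insert_eq_cons, endpoints_cons, endpoints_singleton, toMultiset_mk]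
  simp only [← Multiset.singleton_add]
  abel

/-- A closed walk of length six whose consecutive edges are distinct. -/
structure IsHexWalk (G : SimpleGraph V) (a₀ a₁ a₂ a₃ a₄ a₅ : V) : Prop where
  adj₀ : G.Adj a₀ a₁
  adj₁ : G.Adj a₁ a₂
  adj₂ : G.Adj a₂ a₃
  adj₃ : G.Adj a₃ a₄
  adj₄ : G.Adj a₄ a₅
  adj₅ : G.Adj a₅ a₀
  ne₀ : a₀ ≠ a₂
  ne₁ : a₁ ≠ a₃
  ne₂ : a₂ ≠ a₄
  ne₃ : a₃ ≠ a₅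
  ne₄ : a₄ ≠ a₀
  ne₅ : a₅ ≠ a₁

lemma IsHexWalk.isCubicPair {a₀ a₁ a₂ a₃ a₄ a₅ : V} (h : IsHexWalk G a₀ a₁ a₂ a₃ a₄ a₅)
    (h' : ¬ (a₀ = a₃ ∧ a₁ = a₄)) :
    IsCubicPair G {s(a₀, a₁), s(a₂, a₃), s(a₄, a₅)} {s(a₁, a₂), s(a₃, a₄), s(a₅, a₀)} := by
  obtain ⟨h0, h1, h2, h3, h4, h5, n0, n1, n2, n3, n4, n5⟩ := h
  refine ⟨by simp [h0, h2, h4], by simp [h1, h3, h5], by simp, fun heq => ?_, ?_⟩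
  · have : s(a₀, a₁) ∈ ({s(a₁, a₂), s(a₃, a₄), s(a₅, a₀)} : Multiset (Sym2 V)) := heq ▸ by simp
    simp only [Multiset.insert_eq_cons, Multiset.mem_cons, Multiset.mem_singleton, Sym2.eq_iff]
      at this
    have := h0.ne
    grind
  · simp only [Multiset.insert_eq_cons, endpoints_cons, endpoints_singleton, toMultiset_mk]
    simp only [← Multiset.singleton_add]
    abel

variable [DecidableEq V]

lemma endpoints_erase {u : Multiset (Sym2 V)} {e : Sym2 V} (he : e ∈ u) :
    e.toMultiset + endpoints (u.erase e) = endpoints u := by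
  rw [← endpoints_cons, Multiset.cons_erase he]

lemma IsCubicPair.notMem_right (hQ : NoQuadrics G) {u w : Multiset (Sym2 V)}
    (h : IsCubicPair G u w) {e : Sym2 V} (he : e ∈ u) : e ∉ w := by
  intro hw
  apply h.ne
  rw [← Multiset.cons_erase he, ← Multiset.cons_erase hw]
  congr 1
  refine hQ _ _ (fun x hx => h.left_mem x (Multiset.mem_of_mem_erase hx))
    (fun x hx => h.right_mem x (Multiset.mem_of_mem_erase hx)) ?_ ?_
  · rw [Multiset.card_erase_of_mem he, h.card_left]
    rfl
  · have := h.endpoints_eq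
    rwa [← endpoints_erase he, ← endpoints_erase hw, add_right_inj] at this

/-- A cubic pair alternates along a closed walk of length six, which may start at any endpoint. -/
lemma IsCubicPair.exists_hexWalk (hQ : NoQuadrics G) {u w : Multiset (Sym2 V)}
    (h : IsCubicPair G u w) {a₀ : V} (ha : a₀ ∈ endpoints u) :
    ∃ a₁ a₂ a₃ a₄ a₅, IsHexWalk G a₀ a₁ a₂ a₃ a₄ a₅ ∧
      u = {s(a₀, a₁), s(a₂, a₃), s(a₄, a₅)} ∧ w = {s(a₁, a₂), s(a₃, a₄), s(a₅, a₀)} := by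
  have hd : ∀ e ∈ u, ∀ e' ∈ w, e ≠ e' := by
    rintro e he e' he' rfl
    exact h.notMem_right hQ he he'
  obtain ⟨e, heu, hae⟩ := mem_endpoints.1 ha
  obtain ⟨a₁, rfl⟩ := Sym2.mem_iff_exists.1 hae
  have h01 : G.Adj a₀ a₁ := h.left_mem _ heu
  obtain ⟨e, hew, hae⟩ := mem_endpoints.1
    (h.endpoints_eq ▸ mem_endpoints.2 ⟨_, heu, by simp⟩ : a₁ ∈ endpoints w)
  obtain ⟨a₂, rfl⟩ := Sym2.mem_iff_exists.1 hae
  have h12 : G.Adj a₁ a₂ := h.right_mem _ hew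
  have ne02 : a₀ ≠ a₂ := by
    rintro rfl
    exact hd _ heu _ hew Sym2.eq_swap
  obtain ⟨e, heu2, hae⟩ := mem_endpoints.1
    (h.endpoints_eq ▸ mem_endpoints.2 ⟨_, hew, by simp⟩ : a₂ ∈ endpoints u)
  obtain ⟨a₃, rfl⟩ := Sym2.mem_iff_exists.1 hae
  have h23 : G.Adj a₂ a₃ := h.left_mem _ heu2
  have ne13 : a₁ ≠ a₃ := by
    rintro rfl
    exact hd _ heu2 _ hew Sym2.eq_swap
  obtain ⟨e, hew2, hae⟩ := mem_endpoints.1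
    (h.endpoints_eq ▸ mem_endpoints.2 ⟨_, heu2, by simp⟩ : a₃ ∈ endpoints w)
  obtain ⟨a₄, rfl⟩ := Sym2.mem_iff_exists.1 hae
  have h34 : G.Adj a₃ a₄ := h.right_mem _ hew2
  have ne04 : a₄ ≠ a₀ := by
    rintro rfl
    have := hQ.eq_or_eq h01 h12 h23 h34
    tauto
  obtain ⟨u₁, rfl⟩ := Multiset.exists_cons_of_mem heu
  obtain ⟨w₁, rfl⟩ := Multiset.exists_cons_of_mem hew
  have heu2' : s(a₂, a₃) ∈ u₁ := by
    refine (Multiset.mem_cons.1 heu2).resolve_left ?_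
    rw [Sym2.eq_iff]
    have := h12.ne
    grind
  have hew2' : s(a₃, a₄) ∈ w₁ := by
    refine (Multiset.mem_cons.1 hew2).resolve_left ?_
    rw [Sym2.eq_iff]
    have := h23.ne
    grind
  obtain ⟨u₂, rfl⟩ := Multiset.exists_cons_of_mem heu2'
  obtain ⟨w₂, rfl⟩ := Multiset.exists_cons_of_mem hew2'
  obtain ⟨f, rfl⟩ : ∃ f, u₂ = {f} := by
    rw [← Multiset.card_eq_one]
    simpa using h.card_left
  obtain ⟨g, rfl⟩ : ∃ g, w₂ = {g} := by
    rw [← Multiset.card_eq_one]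
    simpa using h.symm.card_left
  have hend : a₀ ::ₘ f.toMultiset = a₄ ::ₘ g.toMultiset := by
    have := h.endpoints_eq
    simp only [endpoints_cons, endpoints_singleton, toMultiset_mk, Multiset.insert_eq_cons] at this
    simp only [← Multiset.singleton_add] at this ⊢
    rw [← add_right_inj ({a₁} + {a₂} + {a₃} : Multiset V)]
    convert this using 1 <;> abel
  have h4f : a₄ ∈ f := by
    have : a₄ ∈ a₀ ::ₘ f.toMultiset := by simp [hend]
    simpa [ne04] using this
  obtain ⟨a₅, rfl⟩ := Sym2.mem_iff_exists.1 h4f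
  obtain rfl : s(a₅, a₀) = g := by
    apply toMultiset_injective
    rw [← Multiset.cons_inj_right a₄, ← hend]
    simp only [toMultiset_mk, Multiset.insert_eq_cons, ← Multiset.singleton_add]
    abel
  have h45 : G.Adj a₄ a₅ := h.left_mem s(a₄, a₅) (by simp)
  have h50 : G.Adj a₅ a₀ := h.right_mem s(a₅, a₀) (by simp)
  refine ⟨a₁, a₂, a₃, a₄, a₅, ⟨h01, h12, h23, h34, h45, h50, ne02, ne13, ?_, ?_, ne04, ?_⟩,
    rfl, rfl⟩
  · rintro rfl
    exact hd s(a₂, a₃) (by simp) s(a₃, a₂) (by simp) Sym2.eq_swap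
  · rintro rfl
    exact hd s(a₄, a₃) (by simp) s(a₃, a₄) (by simp) Sym2.eq_swap
  · rintro rfl
    exact hd s(a₀, a₅) (by simp) s(a₅, a₀) (by simp) Sym2.eq_swap

/-- Every cubic pair comes from a hexagon or from two triangles sharing a vertex. -/
lemma IsCubicPair.nodup_or_bowtie (hQ : NoQuadrics G) {u w : Multiset (Sym2 V)}
    (h : IsCubicPair G u w) : (endpoints u).Nodup ∨
      ∃ c a₁ a₂ a₄ a₅, IsHexWalk G c a₁ a₂ c a₄ a₅ ∧ a₁ ≠ a₄ ∧ a₂ ≠ a₅ ∧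
        u = {s(c, a₁), s(a₂, c), s(a₄, a₅)} ∧ w = {s(a₁, a₂), s(c, a₄), s(a₅, c)} := by
  obtain ⟨e, he⟩ := Multiset.card_pos_iff_exists_mem.1 (by rw [h.card_left]; norm_num : 0 < u.card)
  induction e with
  | h a₀ b =>
    obtain ⟨a₁, a₂, a₃, a₄, a₅, hw, hu, hw'⟩ :=
      h.exists_hexWalk hQ (mem_endpoints.2 ⟨_, he, Sym2.mem_mk_left a₀ b⟩)
    have hd : ∀ e ∈ u, ∀ e' ∈ w, e ≠ e' := by
      rintro e he e' he' rfl
      exact h.notMem_right hQ he he'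
    obtain ⟨h0, h1, h2, h3, h4, h5, n0, n1, n2, n3, n4, n5⟩ := hw
    have d1 := hd s(a₀, a₁) (by simp [hu]) s(a₃, a₄) (by simp [hw'])
    have d2 := hd s(a₂, a₃) (by simp [hu]) s(a₅, a₀) (by simp [hw'])
    have d3 := hd s(a₄, a₅) (by simp [hu]) s(a₁, a₂) (by simp [hw'])
    by_cases e0 : a₀ = a₃
    · subst e0
      refine Or.inr ⟨a₀, a₁, a₂, a₄, a₅, ⟨h0, h1, h2, h3, h4, h5, n0, n1, n2, n3, n4, n5⟩, ?_, ?_,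
        hu, hw'⟩ <;> rintro rfl
      · exact d1 rfl
      · exact d2 rfl
    by_cases e1 : a₁ = a₄
    · subst e1
      refine Or.inr ⟨a₁, a₅, a₀, a₂, a₃, ⟨h4, h5, h0, h1, h2, h3, n4, n5, n0, n1, n2, n3⟩, ?_,
        Ne.intro e0, ?_, ?_⟩
      · rintro rfl
        exact d3 rfl
      · rw [hu]
        simp only [Multiset.insert_eq_cons, ← Multiset.singleton_add]
        abel
      · rw [hw']
        simp only [Multiset.insert_eq_cons, ← Multiset.singleton_add]
        abel
    by_cases e2 : a₂ = a₅
    · subst e2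
      refine Or.inr ⟨a₂, a₃, a₄, a₀, a₁, ⟨h2, h3, h4, h5, h0, h1, n2, n3, n4, n5, n0, n1⟩,
        Ne.symm e0, Ne.symm e1, ?_, ?_⟩
      · rw [hu]
        simp only [Multiset.insert_eq_cons, ← Multiset.singleton_add]
        abel
      · rw [hw']
        simp only [Multiset.insert_eq_cons, ← Multiset.singleton_add]
        abel
    left
    have := h0.ne
    have := h1.ne
    have := h2.ne
    have := h3.ne
    have := h4.ne
    have := h5.ne
    rw [hu, endpoints_triple]
    simp only [Multiset.insert_eq_cons, Multiset.nodup_cons, Multiset.mem_cons,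
      Multiset.mem_singleton, Multiset.nodup_singleton]
    grind

/-- The endpoints of a cubic pair determine it. -/
lemma IsCubicPair.eq_or_eq_of_endpoints_eq (hQ : NoQuadrics G) {u w u' w' : Multiset (Sym2 V)}
    (h : IsCubicPair G u w) (h' : IsCubicPair G u' w') (he : endpoints u' = endpoints u) :
    u' = u ∨ u' = w := by
  by_contra! hne
  have hd₁ : IsCubicPair G u' u := ⟨h'.left_mem, h.left_mem, h'.card_left, hne.1, he⟩
  have hd₂ : IsCubicPair G u' w :=
    ⟨h'.left_mem, h.right_mem, h'.card_left, hne.2, he.trans h.endpoints_eq⟩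
  have hpartner : ∀ a ∈ endpoints u, ∃ y ∈ endpoints u, G.Adj a y ∧ s(a, y) ∉ u ∧ s(a, y) ∉ w := by
    intro a ha
    obtain ⟨y, hy, hay⟩ := exists_mk_mem_of_mem_endpoints (he.symm ▸ ha)
    exact ⟨y, he ▸ hy, h'.left_mem _ hay, hd₁.notMem_right hQ hay, hd₂.notMem_right hQ hay⟩
  rcases h.nodup_or_bowtie hQ with hnd | ⟨c, a₁, a₂, a₄, a₅, hx, n1, n2, rfl, rfl⟩
  · obtain ⟨a₀, ha₀⟩ := Multiset.card_pos_iff_exists_mem.1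
      (by rw [card_endpoints, h.card_left]; norm_num : 0 < (endpoints u).card)
    obtain ⟨a₁, a₂, a₃, a₄, a₅, hx, rfl, rfl⟩ := h.exists_hexWalk hQ ha₀
    obtain ⟨x, hx1, hax, hxu, hxw⟩ := hpartner a₁ (by simp)
    obtain ⟨y, hy1, hay, hyu, hyw⟩ := hpartner a₀ ha₀
    rw [endpoints_triple] at hnd hx1 hy1
    simp only [Multiset.insert_eq_cons, Multiset.nodup_cons, Multiset.mem_cons,
      Multiset.mem_singleton, Multiset.nodup_singleton, Sym2.eq_iff] at hnd hx1 hy1 hxu hxw hyu hyw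
    have k₁ : x = a₃ ∨ x = a₅ := by
      have := hax.ne
      rcases hx1 with rfl | rfl | rfl | rfl | rfl | rfl
      any_goals grind
      have := hQ.eq_or_eq hax hx.adj₄ hx.adj₅ hx.adj₀
      grind
    have k₂ : y = a₂ ∨ y = a₄ := by
      have := hay.ne
      rcases hy1 with rfl | rfl | rfl | rfl | rfl | rfl
      any_goals grind
      have := hQ.eq_or_eq hx.adj₀ hx.adj₁ hx.adj₂ hay.symm
      grind
    rcases k₁ with rfl | rfl <;> rcases k₂ with rfl | rfl
    · have := hQ.eq_or_eq hx.adj₀ hax hx.adj₂.symm hay.symm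
      grind
    · have := hQ.eq_or_eq hay hx.adj₃.symm hax.symm hx.adj₀.symm
      grind
    · have := hQ.eq_or_eq hay hx.adj₁.symm hax hx.adj₅
      grind
    · have := hQ.eq_or_eq hay hx.adj₄ hax.symm hx.adj₀.symm
      grind
  · obtain ⟨x, hx1, hax, hxu, hxw⟩ := hpartner a₁ (by simp)
    rw [endpoints_triple] at hx1
    obtain ⟨h0, h1, h2, h3, h4, h5, m0, m1, m2, m3, m4, m5⟩ := hx
    simp only [Multiset.insert_eq_cons, Multiset.mem_cons, Multiset.mem_singleton, Sym2.eq_iff]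
      at hx1 hxu hxw
    have := hax.ne
    rcases hx1 with rfl | rfl | rfl | rfl | rfl | rfl
    any_goals grind
    · have := hQ.eq_or_eq hax h4 h5 h0
      grind
    · have := hQ.eq_or_eq hax h4.symm h3.symm h0
      grind

/-- A cubic pair supported on a bowtie and one more vertex has the endpoints of the bowtie. -/
lemma IsCubicPair.endpoints_eq_of_subset_bowtie (hQ : NoQuadrics G) {u w : Multiset (Sym2 V)}
    (h : IsCubicPair G u w) {c a₁ a₂ a₄ a₅ x : V} (hb : IsHexWalk G c a₁ a₂ c a₄ a₅)
    (n1 : a₁ ≠ a₄) (n2 : a₂ ≠ a₅)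
    (hsub : ∀ y ∈ endpoints u, y ∈ ({c, a₁, a₂, a₄, a₅} : Multiset V) ∨ y = x) :
    endpoints u = {c, a₁, a₂, c, a₄, a₅} := by
  obtain ⟨h0, h1, h2, h3, h4, h5, m0, m1, m2, m3, m4, m5⟩ := hb
  have hcommon : ∀ p ∈ ({c, a₁, a₂, a₄, a₅} : Multiset V), ∀ q ∈ ({c, a₁, a₂, a₄, a₅} : Multiset V),
      p ≠ q → ∃ r ∈ ({c, a₁, a₂, a₄, a₅} : Multiset V), G.Adj p r ∧ G.Adj r q := by
    intro p hp q hq hpq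
    simp only [Multiset.insert_eq_cons, Multiset.mem_cons, Multiset.mem_singleton] at hp hq ⊢
    rcases hp with rfl | rfl | rfl | rfl | rfl <;> rcases hq with rfl | rfl | rfl | rfl | rfl <;>
      grind [SimpleGraph.adj_comm]
  have hin : ∀ y ∈ endpoints u, y ∈ ({c, a₁, a₂, a₄, a₅} : Multiset V) := by
    intro y hy
    by_contra hyB
    obtain ⟨z, hz, hyz⟩ := exists_mk_mem_of_mem_endpoints hy
    obtain ⟨z', hz', hyz'⟩ := exists_mk_mem_of_mem_endpoints (h.endpoints_eq ▸ hy)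
    rw [← h.endpoints_eq] at hz'
    have hadj : G.Adj y z := h.left_mem _ hyz
    have hadj' : G.Adj y z' := h.right_mem _ hyz'
    have hzz' : z ≠ z' := by
      rintro rfl
      exact h.notMem_right hQ hyz hyz'
    have hyx := (hsub y hy).resolve_left hyB
    have hzB := (hsub z hz).resolve_right fun hh => hadj.ne (hyx.trans hh.symm)
    have hzB' := (hsub z' hz').resolve_right fun hh => hadj'.ne (hyx.trans hh.symm)
    obtain ⟨r, hr, hzr, hrz'⟩ := hcommon z hzB z' hzB' hzz'
    rcases hQ.eq_or_eq hadj hzr hrz' hadj'.symm with rfl | rfl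
    · exact hyB hr
    · exact hzz' rfl
  rcases h.nodup_or_bowtie hQ with hnd | ⟨c', b₁, b₂, b₄, b₅, hx, n1', n2', rfl, rfl⟩
  · have := Multiset.card_le_card ((Multiset.le_iff_subset hnd).2 hin)
    rw [card_endpoints, h.card_left] at this
    simp at this
  · obtain ⟨g0, g1, g2, g3, g4, g5, k0, k1, k2, k3, k4, k5⟩ := hx
    have hnd : ({c', b₁, b₂, b₄, b₅} : Multiset V).Nodup := by
      have := g0.ne
      have := g1.ne
      have := g2.ne
      have := g3.ne
      have := g4.ne
      have := g5.ne
      simp only [Multiset.insert_eq_cons, Multiset.nodup_cons, Multiset.mem_cons,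
        Multiset.mem_singleton, Multiset.nodup_singleton]
      grind
    have heq : ({c', b₁, b₂, b₄, b₅} : Multiset V) = {c, a₁, a₂, a₄, a₅} := by
      refine Multiset.eq_of_le_of_card_le ((Multiset.le_iff_subset hnd).2 fun y hy => hin y ?_)
        (by simp)
      rw [endpoints_triple]
      simp only [Multiset.insert_eq_cons, Multiset.mem_cons, Multiset.mem_singleton] at hy ⊢
      tauto
    have hadj : ∀ z ∈ ({c, a₁, a₂, a₄, a₅} : Multiset V), z ≠ c' → G.Adj c' z := by
      intro z hz hzc
      rw [← heq] at hz
      simp only [Multiset.insert_eq_cons, Multiset.mem_cons, Multiset.mem_singleton] at hz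
      rcases hz with rfl | rfl | rfl | rfl | rfl
      exacts [absurd rfl hzc, g0, g2.symm, g3, g5.symm]
    have hcc : c' = c := by
      have hc' : c' ∈ ({c, a₁, a₂, a₄, a₅} : Multiset V) := heq ▸ by simp
      simp only [Multiset.insert_eq_cons, Multiset.mem_cons, Multiset.mem_singleton] at hc'
      rcases hc' with rfl | rfl | rfl | rfl | rfl
      · rfl
      · have := hQ.eq_or_eq (hadj a₄ (by simp) n1.symm) h4 h5 h0
        grind
      · have := hQ.eq_or_eq (hadj a₅ (by simp) n2.symm) h4.symm h3.symm h2.symm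
        grind
      · have := hQ.eq_or_eq (hadj a₁ (by simp) n1) h1 h2 h3
        grind
      · have := hQ.eq_or_eq (hadj a₂ (by simp) n2) h1.symm h0.symm h5.symm
        grind
    subst hcc
    have h6 := congrArg (c' ::ₘ ·) heq
    rw [endpoints_triple]
    simp only [Multiset.insert_eq_cons, ← Multiset.singleton_add] at h6 ⊢
    convert h6 using 1 <;> abel

/-- Every cubic pair can be moved one step towards any other one by exchanging a single edge. -/
def HasExchange (G : SimpleGraph V) : Prop :=
  ∀ u w u' w' : Multiset (Sym2 V), IsCubicPair G u w → IsCubicPair G u' w' → u ≠ u' → u ≠ w' →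
    ∃ e ∈ u', ∃ e' ∈ u, e ≠ e' ∧ ∃ v, IsCubicPair G (e ::ₘ u.erase e') v

/-- Two cubic pairs with different endpoints and the smallest possible joint support. -/
structure IsTight (G : SimpleGraph V) (u w u' w' : Multiset (Sym2 V)) : Prop where
  left : IsCubicPair G u w
  right : IsCubicPair G u' w'
  ne : endpoints u ≠ endpoints u'
  le : ∀ v z v' z', IsCubicPair G v z → IsCubicPair G v' z' → endpoints v ≠ endpoints v' →
    (endpoints u + endpoints u').toFinset.card ≤ (endpoints v + endpoints v').toFinset.card

namespace IsTight

variable {u w u' w' : Multiset (Sym2 V)}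

lemma symm (h : IsTight G u w u' w') : IsTight G u' w' u w :=
  ⟨h.right, h.left, h.ne.symm, by rw [add_comm]; exact h.le⟩

lemma swap_right (h : IsTight G u w u' w') : IsTight G u w w' u' := by
  refine ⟨h.left, h.right.symm, ?_, ?_⟩ <;> rw [← h.right.endpoints_eq]
  exacts [h.ne, h.le]

lemma of_subset (h : IsTight G u w u' w') {v z v' z' : Multiset (Sym2 V)}
    (hv : IsCubicPair G v z) (hv' : IsCubicPair G v' z') (hne : endpoints v ≠ endpoints v')
    (hsub : endpoints v + endpoints v' ⊆ endpoints u + endpoints u') :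
    IsTight G v z v' z' ∧ endpoints u + endpoints u' ⊆ endpoints v + endpoints v' := by
  have hfs := Multiset.toFinset_subset.2 hsub
  refine ⟨⟨hv, hv', hne, fun a b a' b' ha hb hab =>
    (Finset.card_le_card hfs).trans (h.le a b a' b' ha hb hab)⟩, ?_⟩
  rw [← Multiset.toFinset_subset, Finset.eq_of_subset_of_card_le hfs (h.le _ _ _ _ hv hv' hne)]

lemma exists_exchange (hX : HasExchange G) (h : IsTight G u w u' w') :
    ∃ e ∈ u', ∃ e' ∈ u, ∃ v, IsTight G u w (e ::ₘ u.erase e') v ∧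
      ∀ y ∈ endpoints u', y ∈ endpoints u ∨ y ∈ e := by
  obtain ⟨e, he, e', he', hee', v, hv⟩ := hX u w u' w' h.left h.right
    (fun hh => h.ne (by rw [hh])) (fun hh => h.ne (by rw [hh, h.right.endpoints_eq]))
  have herase : endpoints (u.erase e') ⊆ endpoints u := by
    rw [← endpoints_erase he']
    exact Multiset.subset_of_le (Multiset.le_add_left _ _)
  have hne : endpoints u ≠ endpoints (e ::ₘ u.erase e') := by
    intro hh
    rw [← endpoints_erase he', endpoints_cons, add_left_inj] at hh
    exact hee' (toMultiset_injective hh).symm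
  have hsub : endpoints u + endpoints (e ::ₘ u.erase e') ⊆ endpoints u + endpoints u' := by
    intro y hy
    simp only [endpoints_cons, Multiset.mem_add, Sym2.mem_toMultiset] at hy ⊢
    rcases hy with h1 | h1 | h1
    exacts [Or.inl h1, Or.inr (mem_endpoints.2 ⟨e, he, h1⟩), Or.inl (herase h1)]
  obtain ⟨ht, hcover⟩ := h.of_subset h.left hv hne hsub
  refine ⟨e, he, e', he', v, ht, fun y hy => ?_⟩
  have := hcover (Multiset.mem_add.2 (Or.inr hy))
  simp only [endpoints_cons, Multiset.mem_add, Sym2.mem_toMultiset] at this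
  rcases this with h1 | h1 | h1
  exacts [Or.inl h1, Or.inr h1, Or.inl (herase h1)]

lemma exists_vertex (hQ : NoQuadrics G) (hX : HasExchange G) (h : IsTight G u w u' w') :
    ∃ x, ∀ y ∈ endpoints u', y ∈ endpoints u ∨ y = x := by
  obtain ⟨e, he, -, -, -, -, hcov⟩ := h.exists_exchange hX
  obtain ⟨f, hf, -, -, -, -, hcov'⟩ := h.swap_right.exists_exchange hX
  rw [← h.right.endpoints_eq] at hcov'
  by_cases hall : ∀ y ∈ endpoints u', y ∈ endpoints u
  · exact ⟨e.out.1, fun y hy => Or.inl (hall y hy)⟩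
  push Not at hall
  obtain ⟨x, hx, hxu⟩ := hall
  refine ⟨x, fun y hy => or_iff_not_imp_left.2 fun hyu => ?_⟩
  by_contra hyx
  have h1 := (Sym2.mem_and_mem_iff hyx).1
    ⟨(hcov y hy).resolve_left hyu, (hcov x hx).resolve_left hxu⟩
  have h2 := (Sym2.mem_and_mem_iff hyx).1
    ⟨(hcov' y hy).resolve_left hyu, (hcov' x hx).resolve_left hxu⟩
  exact h.right.notMem_right hQ he (h1.trans h2.symm ▸ hf)

lemma nodup_left (hQ : NoQuadrics G) (hX : HasExchange G) (h : IsTight G u w u' w') :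
    (endpoints u).Nodup := by
  obtain ⟨x, hx⟩ := h.exists_vertex hQ hX
  rcases h.left.nodup_or_bowtie hQ with hnd | ⟨c, a₁, a₂, a₄, a₅, hb, n1, n2, rfl, rfl⟩
  · exact hnd
  · refine absurd ?_ h.ne
    rw [h.right.endpoints_eq_of_subset_bowtie hQ hb n1 n2 (x := x), endpoints_triple]
    intro y hy
    have := hx y hy
    rw [endpoints_triple] at this
    simp only [Multiset.insert_eq_cons, Multiset.mem_cons, Multiset.mem_singleton] at this ⊢
    tauto

/-- Exchanging an edge of a hexagon for an edge leaving it creates a chord of the hexagon. -/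
lemma adj_of_hexWalk (hQ : NoQuadrics G) (hX : HasExchange G) {e' : Sym2 V}
    {v : Multiset (Sym2 V)} {x a₀ a₁ a₂ a₃ a₄ a₅ : V} (hw : IsHexWalk G a₀ a₁ a₂ a₃ a₄ a₅)
    (hu : u = {s(a₀, a₁), s(a₂, a₃), s(a₄, a₅)}) (he' : e' ∈ u) (hx : x ∉ endpoints u)
    (h : IsTight G u w (s(x, a₀) ::ₘ u.erase e') v) : G.Adj x a₃ ∧ G.Adj a₂ a₄ := by
  have hnd := h.nodup_left hQ hX
  have hnd' := h.symm.nodup_left hQ hX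
  have he : e' = s(a₀, a₁) := by
    by_contra hne
    obtain ⟨r, hr⟩ := Multiset.exists_cons_of_mem
      ((Multiset.mem_erase_of_ne (Ne.symm hne)).2 (by simp [hu] : s(a₀, a₁) ∈ u))
    rw [hr] at hnd'
    simp at hnd'
  subst he hu
  rw [Multiset.insert_eq_cons, Multiset.erase_cons_head, ← Multiset.insert_eq_cons] at h
  have hux : x ∈ endpoints (s(x, a₀) ::ₘ {s(a₂, a₃), s(a₄, a₅)}) := by simp
  obtain ⟨c, b₂, b₃, b₄, b₅, hb, hub, -⟩ := h.right.exists_hexWalk hQ hux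
  rw [endpoints_triple] at hnd hx
  simp only [Multiset.insert_eq_cons, Multiset.nodup_cons, Multiset.mem_cons,
      Multiset.mem_singleton, Multiset.nodup_singleton, not_or] at hnd hx
  have hxa : G.Adj x a₀ := h.right.left_mem s(x, a₀) (by simp)
  obtain rfl : c = a₀ := by
    have : s(x, c) ∈ s(x, a₀) ::ₘ ({s(a₂, a₃), s(a₄, a₅)} : Multiset (Sym2 V)) := hub ▸ by simp
    simp only [Multiset.insert_eq_cons, Multiset.mem_cons, Multiset.mem_singleton, Sym2.eq_iff]
      at this
    grind
  rw [Multiset.insert_eq_cons s(x, c), Multiset.cons_inj_right] at hub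
  have hcases : s(b₂, b₃) = s(a₂, a₃) ∧ s(b₄, b₅) = s(a₄, a₅) ∨
      s(b₂, b₃) = s(a₄, a₅) ∧ s(b₄, b₅) = s(a₂, a₃) := by
    have : s(b₂, b₃) ∈ ({s(a₂, a₃), s(a₄, a₅)} : Multiset (Sym2 V)) := hub ▸ by simp
    simp only [Multiset.insert_eq_cons, Multiset.mem_cons, Multiset.mem_singleton] at this
    rcases this with h1 | h1
    · rw [h1] at hub
      simp only [Multiset.insert_eq_cons, Multiset.cons_inj_right, Multiset.singleton_inj] at hub
      exact Or.inl ⟨h1, hub.symm⟩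
    · rw [h1, Multiset.pair_comm] at hub
      simp only [Multiset.insert_eq_cons, Multiset.cons_inj_right, Multiset.singleton_inj] at hub
      exact Or.inr ⟨h1, hub.symm⟩
  obtain ⟨h0, h1, h2, h3, h4, h5, m0, m1, m2, m3, m4, m5⟩ := hw
  obtain ⟨-, g1, -, g3, -, g5, -⟩ := hb
  simp only [Sym2.eq_iff] at hcases
  rcases hcases with ⟨⟨rfl, rfl⟩ | ⟨rfl, rfl⟩, ⟨rfl, rfl⟩ | ⟨rfl, rfl⟩⟩ |
    ⟨⟨rfl, rfl⟩ | ⟨rfl, rfl⟩, ⟨rfl, rfl⟩ | ⟨rfl, rfl⟩⟩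
  · have hwalk : IsHexWalk G c a₁ b₂ c x b₅ :=
      ⟨h0, h1, g1.symm, hxa.symm, g5.symm, h5, m0, h0.ne', by grind, h5.ne', hxa.ne, by grind⟩
    have hpair := hwalk.isCubicPair (by grind)
    have hnd₂ := (h.of_subset hpair h.left (fun hh => ?_) ?_).1.nodup_left hQ hX
    · rw [endpoints_triple] at hnd₂
      simp at hnd₂
    · have : x ∈ endpoints {s(c, a₁), s(b₂, b₃), s(b₄, b₅)} := hh ▸ by simp
      rw [endpoints_triple] at this
      simp only [Multiset.insert_eq_cons, Multiset.mem_cons, Multiset.mem_singleton] at this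
      grind
    · intro y hy
      simp only [← Multiset.insert_eq_cons, endpoints_triple] at hy ⊢
      simp only [Multiset.insert_eq_cons, Multiset.mem_add, Multiset.mem_cons,
        Multiset.mem_singleton] at hy ⊢
      grind
  · have := hQ.eq_or_eq g1 h2 g3 h5
    grind
  · have := hQ.eq_or_eq h0 h1 h2 g1.symm
    grind
  · have := hQ.eq_or_eq h0 h1 h2 g1.symm
    grind
  · have := hQ.eq_or_eq g3 h1.symm h0.symm h5.symm
    grind
  · have := hQ.eq_or_eq g1 h3.symm g3.symm h5
    grind
  · exact ⟨g5.symm, g3.symm⟩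
  · have := hQ.eq_or_eq hxa h0 h1 g5
    grind

lemma false (hQ : NoQuadrics G) (hX : HasExchange G) (h : IsTight G u w u' w') : False := by
  obtain ⟨e, he, d, hd, v, ht, hcov⟩ := h.exists_exchange hX
  obtain ⟨f, hf, d', hd', v', ht', hcov'⟩ := h.swap_right.exists_exchange hX
  rw [← h.right.endpoints_eq] at hcov'
  have hef : e ≠ f := fun hh => h.right.notMem_right hQ he (hh ▸ hf)
  obtain ⟨x, hx, hxu⟩ : ∃ x ∈ endpoints u', x ∉ endpoints u := by
    by_contra! hall
    refine h.ne (Multiset.eq_of_le_of_card_le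
      ((Multiset.le_iff_subset (h.symm.nodup_left hQ hX)).2 hall) ?_).symm
    rw [card_endpoints, card_endpoints, h.left.card_left, h.right.card_left]
  obtain ⟨p, rfl⟩ := Sym2.mem_iff_exists.1 ((hcov x hx).resolve_left hxu)
  obtain ⟨q, rfl⟩ := Sym2.mem_iff_exists.1 ((hcov' x hx).resolve_left hxu)
  have hpq : p ≠ q := fun hh => hef (by rw [hh])
  have hxp : G.Adj x p := h.right.left_mem _ he
  have hxq : G.Adj x q := h.right.right_mem _ hf
  have hp : p ∈ endpoints u := by
    refine (hcov' p (mem_endpoints.2 ⟨_, he, by simp⟩)).resolve_right fun hh => ?_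
    exact (Sym2.mem_iff.1 hh).elim hxp.ne' hpq
  have hq : q ∈ endpoints u := by
    refine (hcov q ?_).resolve_right fun hh => ?_
    · rw [h.right.endpoints_eq]
      exact mem_endpoints.2 ⟨_, hf, by simp⟩
    · exact (Sym2.mem_iff.1 hh).elim hxq.ne' hpq.symm
  obtain ⟨a₁, a₂, a₃, a₄, a₅, hw, hu, -⟩ := h.left.exists_hexWalk hQ hp
  obtain ⟨hx3, h24⟩ := ht.adj_of_hexWalk hQ hX hw hu hd hxu
  have hnd := h.nodup_left hQ hX
  have hq' := hq
  have hxu' := hxu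
  obtain ⟨h0, h1, h2, h3, h4, h5, m0, m1, m2, m3, m4, m5⟩ := hw
  rw [hu, endpoints_triple] at hnd hq' hxu'
  simp only [Multiset.insert_eq_cons, Multiset.nodup_cons, Multiset.mem_cons,
    Multiset.mem_singleton, Multiset.nodup_singleton, not_or] at hnd hq' hxu'
  rcases hq' with rfl | rfl | rfl | rfl | rfl | rfl
  · exact hpq rfl
  · have := hQ.eq_or_eq hxq h1 h2 hx3.symm
    grind
  · have := hQ.eq_or_eq hxp h0 h1 hxq.symm
    grind
  · obtain ⟨-, h15⟩ := ht'.adj_of_hexWalk hQ hX (a₁ := a₂) (a₂ := a₁) (a₃ := p) (a₄ := a₅)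
      (a₅ := a₄) ⟨h2.symm, h1.symm, h0.symm, h5.symm, h4.symm, h3.symm, m1.symm, m0.symm,
        m5.symm, m4.symm, m3.symm, m2.symm⟩ (by
          rw [hu, Sym2.eq_swap (a := q), Sym2.eq_swap (a := a₁), Sym2.eq_swap (a := a₅)]
          simp only [Multiset.insert_eq_cons]
          rw [Multiset.cons_swap]) hd' hxu
    have := hQ.eq_or_eq h1 h24 h4 h15.symm
    grind
  · have := hQ.eq_or_eq hxp h5.symm h4.symm hxq.symm
    grind
  · have := hQ.eq_or_eq hxq h4.symm h3.symm hx3.symm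
    grind

end IsTight

lemma IsCubicPair.eq_or_eq_of_hasExchange (hQ : NoQuadrics G) (hX : HasExchange G)
    {u w u' w' : Multiset (Sym2 V)} (h : IsCubicPair G u w) (h' : IsCubicPair G u' w') :
    u' = u ∨ u' = w := by
  refine h.eq_or_eq_of_endpoints_eq hQ h' ?_
  by_contra hne
  have hex : ∃ n u w u' w', IsCubicPair G u w ∧ IsCubicPair G u' w' ∧ endpoints u ≠ endpoints u' ∧
      (endpoints u + endpoints u').toFinset.card = n :=
    ⟨_, u, w, u', w', h, h', Ne.symm hne, rfl⟩
  classical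
  obtain ⟨v, z, v', z', hv, hv', hvv', hn⟩ := Nat.find_spec hex
  refine IsTight.false hQ hX ⟨hv, hv', hvv', fun a b a' b' ha hb hab => ?_⟩
  rw [hn]
  exact Nat.find_min' hex ⟨a, b, a', b', ha, hb, hab, rfl⟩

end CubicPairs

/-- If the edge ring `K[G]` of a finite connected simple graph `G`
has a `3`-linear resolution, then `K[G]` is a hypersurface, i.e. the toric ideal
`I_G` is principal. -/
theorem edgeRing_three_linear_resolution_hypersurface
    {N : ℕ} (K : Type*) [Field K] (G : SimpleGraph (Fin N)) (hG : G.Connected)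
    (h3 : HasLinearResolution 3 (toricIdeal K G)) :
    ∃ f : MvPolynomial G.edgeSet K, toricIdeal K G = Ideal.span {f} := by
  have hQ : NoQuadrics G := fun _ _ hu hw hc h =>
    eq_of_endpoints_eq_of_card_lt h3 hu hw (by omega) h
  have hX : HasExchange G := fun _ _ _ _ h h' huu huw => h.exists_exchange h3 h' huu huw
  exact toricIdeal_principal_of_cubicPair_unique h3 fun _ _ _ _ h h' =>
    h.eq_or_eq_of_hasExchange hQ hX h'
end

section
/- Let G be a finite (possibly disconnected) simple graph whose connected components G_1,...,G_s each have at least one edge, and let K be a field. Then K[G] has a d-linear resolution if and only if there exists an index i with 1 ≤ i ≤ s such that K[G_i] has a d-linear resolution and for every j ≠ i the toric ideal I_{G_j} is the zero ideal (i.e., K[G_j] is a polynomial ring). In particular, if at least two components have nonzero toric ideal, then K[G] has no linear resolution. -/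
open MvPolynomial Pointwise

section MatrixResolution

open Matrix

/-- Exactness of `B` followed by `A`, both acting on row vectors. -/
def ExactPair {R l m n : Type*} [CommRing R] [Fintype l] [Fintype m]
    (A : Matrix m n R) (B : Matrix l m R) : Prop :=
  ∀ v, v ᵥ* A = 0 ↔ ∃ u, u ᵥ* B = v

/-- The matrices `h, M 0, M 1, …` form a free resolution of `R ⧸ I`. -/
structure IsMatrixResolution {R : Type*} [CommRing R] (I : Ideal R) (b : ℕ → ℕ)
    (h : Matrix (Fin (b 0)) Unit R)
    (M : ∀ i, Matrix (Fin (b (i + 1))) (Fin (b i)) R) : Prop where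
  mem_iff : ∀ f, f ∈ I ↔ ∃ v, v ᵥ* h = fun _ => f
  exact_zero : ExactPair h (M 0)
  exact_succ : ∀ i, ExactPair (M i) (M (i + 1))

lemma LinearMap.apply_eq_sum_smul_single {R N ι : Type*} [CommRing R] [AddCommGroup N] [Module R N]
    [Fintype ι] [DecidableEq ι] (L : (ι →₀ R) →ₗ[R] N) (v : ι →₀ R) :
    L v = ∑ j, v j • L (Finsupp.single j 1) := by
  conv_lhs => rw [← Finsupp.univ_sum_single v]
  rw [map_sum]
  refine Finset.sum_congr rfl fun j _ => ?_
  rw [← map_smul, Finsupp.smul_single, smul_eq_mul, mul_one]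

lemma hasLinearResolution_iff {σ K : Type*} [Field K] (q : ℕ) (I : Ideal (MvPolynomial σ K)) :
    HasLinearResolution q I ↔ ∃ b h M, IsMatrixResolution I b h M ∧
      (∀ j k, (h j k).IsHomogeneous q) ∧ ∀ i j k, (M i j k).IsHomogeneous 1 := by
  constructor
  · rintro ⟨b, φ₀, φ, hI, h0, hs, hq, h1⟩
    have e0 : ∀ v : Fin (b 0) → MvPolynomial σ K,
        (v ᵥ* (Matrix.of fun j (_ : Unit) => φ₀ (Finsupp.single j 1))) =
          fun _ => φ₀ (Finsupp.equivFunOnFinite.symm v) := by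
      intro v
      ext1 k
      rw [LinearMap.apply_eq_sum_smul_single φ₀]
      simp [Matrix.vecMul, dotProduct]
    have e1 : ∀ i (v : Fin (b (i + 1)) → MvPolynomial σ K),
        (v ᵥ* (Matrix.of fun j k => φ i (Finsupp.single j 1) k)) =
          φ i (Finsupp.equivFunOnFinite.symm v) := by
      intro i v
      ext1 k
      rw [LinearMap.apply_eq_sum_smul_single (φ i)]
      simp [Matrix.vecMul, dotProduct, Finsupp.finsetSum_apply]
    refine ⟨b, Matrix.of fun j _ => φ₀ (Finsupp.single j 1),
      fun i => Matrix.of fun j k => φ i (Finsupp.single j 1) k,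
      ⟨fun f => ?_, fun v => ?_, fun i v => ?_⟩, fun j _ => hq j,
      fun i j k => h1 i j k⟩
    · rw [← hI]
      simp only [e0, LinearMap.mem_range]
      rw [Finsupp.equivFunOnFinite.symm.surjective.exists]
      exact exists_congr fun v => ⟨fun h => funext fun _ => h, fun h => congrFun h ()⟩
    · have := SetLike.ext_iff.1 h0 (Finsupp.equivFunOnFinite.symm v)
      rw [LinearMap.mem_ker, LinearMap.mem_range,
        Finsupp.equivFunOnFinite.symm.surjective.exists] at this
      simp only [e1, e0]
      refine Iff.trans ⟨fun h => congrFun h (), fun h => funext fun _ => h⟩ (this.trans ?_)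
      exact exists_congr fun u => by
        rw [Equiv.eq_symm_apply]; rfl
    · have := SetLike.ext_iff.1 (hs i) (Finsupp.equivFunOnFinite.symm v)
      rw [LinearMap.mem_ker, LinearMap.mem_range,
        Finsupp.equivFunOnFinite.symm.surjective.exists] at this
      simp only [e1]
      refine Iff.trans ?_ (this.trans ?_)
      · exact ⟨fun h => DFunLike.coe_injective h, fun h => by rw [h]; rfl⟩
      exact exists_congr fun u => by
        rw [Equiv.eq_symm_apply]; rfl
  · rintro ⟨b, h, M, hR, hq, h1⟩
    have e0 : ∀ v : Fin (b 0) →₀ MvPolynomial σ K,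
        Finsupp.linearCombination (MvPolynomial σ K) (fun j => h j ()) v = (v ᵥ* h) () := by
      intro v
      rw [LinearMap.apply_eq_sum_smul_single]
      simp [Matrix.vecMul, dotProduct]
    have e1 : ∀ i (v : Fin (b (i + 1)) →₀ MvPolynomial σ K),
        ⇑(Finsupp.linearCombination (MvPolynomial σ K)
          (fun j => Finsupp.equivFunOnFinite.symm (M i j)) v) = (v ᵥ* M i) := by
      intro i v
      ext1 k
      rw [LinearMap.apply_eq_sum_smul_single]
      simp [Matrix.vecMul, dotProduct, Finsupp.finsetSum_apply]
    refine ⟨b, Finsupp.linearCombination _ (fun j => h j ()),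
      fun i => Finsupp.linearCombination _ (fun j => Finsupp.equivFunOnFinite.symm (M i j)),
      ?_, ?_, fun i => ?_, fun j => by simpa using hq j (), fun i j k => by simpa using h1 i j k⟩
    · ext f
      rw [hR.mem_iff, LinearMap.mem_range, Finsupp.equivFunOnFinite.surjective.exists]
      simp only [e0]
      exact exists_congr fun v => ⟨fun h => funext fun _ => h, fun h => congrFun h ()⟩
    · ext1 v
      have := hR.exact_zero v
      rw [Finsupp.equivFunOnFinite.surjective.exists] at this
      rw [LinearMap.mem_ker, LinearMap.mem_range, e0]
      refine Iff.trans ⟨fun h => funext fun _ => h, fun h => congrFun h ()⟩ (this.trans ?_)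
      exact exists_congr fun u => by
        rw [DFunLike.ext'_iff (f := Finsupp.linearCombination _ _ u), e1]; rfl
    · ext1 v
      have := hR.exact_succ i v
      rw [Finsupp.equivFunOnFinite.surjective.exists] at this
      rw [LinearMap.mem_ker, LinearMap.mem_range, ← DFunLike.coe_injective.eq_iff, e1]
      refine this.trans ?_
      exact exists_congr fun u => by
        rw [DFunLike.ext'_iff (f := Finsupp.linearCombination _ _ u), e1]; rfl

lemma Matrix.comp_vecMul {R S m n : Type*} [CommRing R] [CommRing S] [Fintype m] (f : R →+* S)
    (v : m → R) (A : Matrix m n R) : (f ∘ v) ᵥ* A.map f = f ∘ (v ᵥ* A) := by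
  ext k
  exact (RingHom.map_vecMul f A v k).symm

lemma constantCoeff_comp_C_comp {R m : Type*} [CommRing R] (v : m → R) :
    Polynomial.constantCoeff ∘ (Polynomial.C ∘ v) = v := by
  ext
  simp

section Transport

variable {R S l m n : Type*} [CommRing R] [CommRing S] [Fintype l] [Fintype m]

lemma ExactPair.map_ringEquiv {A : Matrix m n R} {B : Matrix l m R} (h : ExactPair A B)
    (e : R ≃+* S) : ExactPair (A.map e) (B.map e) := by
  intro v
  obtain ⟨v, rfl⟩ : ∃ w, v = (e : R →+* S) ∘ w := ⟨e.symm ∘ v, by ext; simp⟩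
  have h1 : (e : R →+* S) ∘ v ᵥ* A.map e = (e : R →+* S) ∘ (v ᵥ* A) :=
    Matrix.comp_vecMul (e : R →+* S) v A
  have h2 : ∀ u, (e : R →+* S) ∘ u ᵥ* B.map e = (e : R →+* S) ∘ (u ᵥ* B) :=
    fun u => Matrix.comp_vecMul (e : R →+* S) u B
  have hinj : Function.Injective (fun w : m → R => (e : R →+* S) ∘ w) :=
    fun a b hab => funext fun i => e.injective (congrFun hab i)
  rw [h1]
  constructor
  · intro h0
    obtain ⟨u, hu⟩ := (h v).1 (funext fun i => e.injective (by simpa using congrFun h0 i))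
    exact ⟨_, (h2 u).trans (by rw [hu])⟩
  · rintro ⟨u, hu⟩
    obtain ⟨u, rfl⟩ : ∃ w, u = (e : R →+* S) ∘ w := ⟨e.symm ∘ u, by ext; simp⟩
    rw [h2] at hu
    rw [(h v).2 ⟨u, hinj hu⟩]
    ext; simp

lemma coeff_vecMul_map_C (v : m → Polynomial R) (A : Matrix m n R) (k : ℕ) :
    (fun j => ((v ᵥ* A.map Polynomial.C) j).coeff k) = (fun i => (v i).coeff k) ᵥ* A := by
  ext j
  simp [Matrix.vecMul, dotProduct]

lemma exists_vecMul_map_C_iff (B : Matrix l m R) (v : m → Polynomial R) :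
    (∃ u, u ᵥ* B.map Polynomial.C = v) ↔ ∀ k, ∃ u, u ᵥ* B = fun i => (v i).coeff k := by
  constructor
  · rintro ⟨u, rfl⟩ k
    exact ⟨_, (coeff_vecMul_map_C u B k).symm⟩
  · intro h
    choose u hu using h
    set N := Finset.univ.sup fun i => (v i).natDegree + 1
    refine ⟨fun i => ∑ k ∈ Finset.range N, Polynomial.monomial k (u k i), funext fun j => ?_⟩
    ext k
    rw [congrFun (coeff_vecMul_map_C _ B k) j]
    by_cases hk : k < N
    · rw [← congrFun (hu k) j]
      congr! 2 with i
      simp [Polynomial.coeff_monomial, hk]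
    · rw [Polynomial.coeff_eq_zero_of_natDegree_lt]
      · simp [Polynomial.coeff_monomial, hk,
          Matrix.vecMul, dotProduct]
      · have : (v j).natDegree + 1 ≤ N :=
          Finset.le_sup (f := fun i => (v i).natDegree + 1) (Finset.mem_univ j)
        omega

lemma ExactPair.map_C {A : Matrix m n R} {B : Matrix l m R} (h : ExactPair A B) :
    ExactPair (A.map Polynomial.C) (B.map Polynomial.C) := by
  intro v
  rw [exists_vecMul_map_C_iff]
  simp_rw [← h _, ← coeff_vecMul_map_C]
  constructor
  · intro h0 k
    rw [h0]
    rfl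
  · intro h0
    ext j k
    exact congrFun (h0 k) j

/-- The row space of a matrix over `R[X]` is closed under division by `X`. -/
def RowSpaceSaturated (A : Matrix m n (Polynomial R)) : Prop :=
  ∀ u, (∃ v, v ᵥ* A = (Polynomial.X : Polynomial R) • u) → ∃ v, v ᵥ* A = u

lemma ExactPair.rowSpaceSaturated {A : Matrix m n (Polynomial R)} {B : Matrix l m (Polynomial R)}
    (h : ExactPair A B) : RowSpaceSaturated B := by
  intro u hu
  rw [← h] at hu ⊢
  rw [Matrix.smul_vecMul] at hu
  ext1 j
  have := congrFun hu j
  rw [Pi.smul_apply, smul_eq_mul] at this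
  exact Polynomial.isRegular_X.left.mul_left_eq_zero_iff.1 this

lemma ExactPair.map_constantCoeff {A : Matrix m n (Polynomial R)}
    {B : Matrix l m (Polynomial R)} (h : ExactPair A B) (hA : RowSpaceSaturated A) :
    ExactPair (A.map Polynomial.constantCoeff) (B.map Polynomial.constantCoeff) := by
  intro v
  constructor
  · intro h0
    rw [← constantCoeff_comp_C_comp v, Matrix.comp_vecMul] at h0
    have hX : ∀ j, Polynomial.X ∣ ((Polynomial.C ∘ v) ᵥ* A) j := fun j => by
      rw [Polynomial.X_dvd_iff]
      exact congrFun h0 j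
    choose u hu using hX
    obtain ⟨w, hw⟩ := hA u ⟨Polynomial.C ∘ v, funext fun j => hu j⟩
    obtain ⟨z, hz⟩ := (h (Polynomial.C ∘ v - (Polynomial.X : Polynomial R) • w)).1 (by
      rw [Matrix.sub_vecMul, Matrix.smul_vecMul, hw]
      ext1 j
      simp [hu])
    refine ⟨Polynomial.constantCoeff ∘ z, ?_⟩
    rw [Matrix.comp_vecMul, hz]
    ext j
    simp
  · rintro ⟨u, rfl⟩
    rw [← constantCoeff_comp_C_comp u, Matrix.comp_vecMul, Matrix.comp_vecMul, (h _).2 ⟨_, rfl⟩]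
    ext
    simp

end Transport

namespace IsMatrixResolution

variable {R S : Type*} [CommRing R] [CommRing S] {I : Ideal R} {b : ℕ → ℕ}

lemma map_ringEquiv {h : Matrix (Fin (b 0)) Unit R}
    {M : ∀ i, Matrix (Fin (b (i + 1))) (Fin (b i)) R} (H : IsMatrixResolution I b h M)
    (e : R ≃+* S) :
    IsMatrixResolution (I.map (e : R →+* S)) b (h.map e) (fun i => (M i).map e) where
  mem_iff f := by
    rw [show I.map (e : R →+* S) = I.comap (e.symm : S →+* R) from Ideal.map_comap_of_equiv e,
      Ideal.mem_comap, H.mem_iff]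
    constructor
    · rintro ⟨v, hv⟩
      refine ⟨(e : R →+* S) ∘ v, (Matrix.comp_vecMul (e : R →+* S) v h).trans ?_⟩
      rw [hv]
      ext; simp
    · rintro ⟨v, hv⟩
      obtain ⟨v, rfl⟩ : ∃ w, v = (e : R →+* S) ∘ w := ⟨e.symm ∘ v, by ext; simp⟩
      refine ⟨v, funext fun k => e.injective ?_⟩
      have := congrFun ((Matrix.comp_vecMul (e : R →+* S) v h).symm.trans hv) k
      simpa using this
  exact_zero := H.exact_zero.map_ringEquiv e
  exact_succ i := (H.exact_succ i).map_ringEquiv e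

lemma map_C {h : Matrix (Fin (b 0)) Unit R}
    {M : ∀ i, Matrix (Fin (b (i + 1))) (Fin (b i)) R} (H : IsMatrixResolution I b h M) :
    IsMatrixResolution (I.map Polynomial.C) b (h.map Polynomial.C)
      (fun i => (M i).map Polynomial.C) where
  mem_iff f := by
    rw [Ideal.mem_map_C_iff, exists_vecMul_map_C_iff]
    exact forall_congr' fun k => H.mem_iff _
  exact_zero := H.exact_zero.map_C
  exact_succ i := (H.exact_succ i).map_C

lemma map_constantCoeff {h : Matrix (Fin (b 0)) Unit (Polynomial R)}
    {M : ∀ i, Matrix (Fin (b (i + 1))) (Fin (b i)) (Polynomial R)}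
    (H : IsMatrixResolution (I.map Polynomial.C) b h M) :
    IsMatrixResolution I b (h.map Polynomial.constantCoeff)
      (fun i => (M i).map Polynomial.constantCoeff) where
  mem_iff f := by
    constructor
    · intro hf
      obtain ⟨v, hv⟩ := (H.mem_iff (Polynomial.C f)).1 (Ideal.mem_map_of_mem _ hf)
      refine ⟨Polynomial.constantCoeff ∘ v, ?_⟩
      rw [Matrix.comp_vecMul, hv]
      ext; simp
    · rintro ⟨v, hv⟩
      have hm := (H.mem_iff (((Polynomial.C ∘ v) ᵥ* h) ())).2 ⟨_, rfl⟩
      have := Ideal.mem_map_C_iff.1 hm 0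
      convert this
      rw [← congrFun hv (), ← constantCoeff_comp_C_comp v,
        Matrix.comp_vecMul]
      simp [Function.comp_def]
  exact_zero := H.exact_zero.map_constantCoeff (by
    rintro u ⟨v, hv⟩
    have hm := (H.mem_iff (Polynomial.X * u ())).2 ⟨v, hv⟩
    obtain ⟨w, hw⟩ := (H.mem_iff (u ())).1 (Ideal.mem_map_C_iff.2 fun n => by
      simpa using Ideal.mem_map_C_iff.1 hm (n + 1))
    exact ⟨w, hw⟩)
  exact_succ i := (H.exact_succ i).map_constantCoeff (by
    cases i with
    | zero => exact H.exact_zero.rowSpaceSaturated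
    | succ i => exact (H.exact_succ i).rowSpaceSaturated)

end IsMatrixResolution

lemma MvPolynomial.optionEquivLeft_rename_some {σ K : Type*} [CommRing K] (p : MvPolynomial σ K) :
    optionEquivLeft K σ (rename some p) = Polynomial.C p := by
  induction p using MvPolynomial.induction_on with
  | C a => simp [optionEquivLeft_C]
  | add p q hp hq => simp [hp, hq]
  | mul_X p i hp => simp [hp, optionEquivLeft_X_some]

namespace HasLinearResolution

variable {σ τ K : Type*} [Field K] {q : ℕ}

lemma rename_equiv {I : Ideal (MvPolynomial σ K)} (H : HasLinearResolution q I) (e : σ ≃ τ) :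
    HasLinearResolution q (I.map (rename e : MvPolynomial σ K →ₐ[K] MvPolynomial τ K)) := by
  rw [hasLinearResolution_iff] at H ⊢
  obtain ⟨b, h, M, hR, hq, h1⟩ := H
  exact ⟨b, _, _, hR.map_ringEquiv (renameEquiv K e).toRingEquiv,
    fun j k => (hq j k).rename_isHomogeneous, fun i j k => (h1 i j k).rename_isHomogeneous⟩

lemma rename_some {I : Ideal (MvPolynomial σ K)} (H : HasLinearResolution q I) :
    HasLinearResolution q
      (I.map (rename some : MvPolynomial σ K →ₐ[K] MvPolynomial (Option σ) K)) := by
  rw [hasLinearResolution_iff] at H ⊢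
  obtain ⟨b, h, M, hR, hq, h1⟩ := H
  have key : ∀ p : MvPolynomial σ K,
      (optionEquivLeft K σ).symm (Polynomial.C p) = rename some p := fun p => by
    rw [AlgEquiv.symm_apply_eq, optionEquivLeft_rename_some]
  have hR' := hR.map_C.map_ringEquiv (optionEquivLeft K σ).symm.toRingEquiv
  have hI : (I.map Polynomial.C).map
      ((optionEquivLeft K σ).symm.toRingEquiv : _ →+* MvPolynomial (Option σ) K) =
      I.map (rename some : MvPolynomial σ K →ₐ[K] MvPolynomial (Option σ) K) := by
    rw [Ideal.map_map, ← Ideal.map_coe (rename some : MvPolynomial σ K →ₐ[K] _)]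
    congr 1
    exact RingHom.ext key
  rw [hI] at hR'
  refine ⟨b, _, _, hR', fun j k => ?_, fun i j k => ?_⟩
  · exact (congrArg (IsHomogeneous · q) (key (h j k))).mpr (hq j k).rename_isHomogeneous
  · exact (congrArg (IsHomogeneous · 1) (key (M i j k))).mpr (h1 i j k).rename_isHomogeneous

lemma of_rename_some {I : Ideal (MvPolynomial σ K)}
    (H : HasLinearResolution q
      (I.map (rename some : MvPolynomial σ K →ₐ[K] MvPolynomial (Option σ) K))) :
    HasLinearResolution q I := by
  rw [hasLinearResolution_iff] at H ⊢
  obtain ⟨b, h, M, hR, hq, h1⟩ := H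
  have key : ∀ p : MvPolynomial (Option σ) K,
      Polynomial.constantCoeff (optionEquivLeft K σ p) =
        aeval (fun o : Option σ => o.elim 0 (X : σ → MvPolynomial σ K)) p := by
    intro p
    induction p using MvPolynomial.induction_on with
    | C a => simp [optionEquivLeft_C]
    | add p q hp hq => simp only [map_add, hp, hq]
    | mul_X p i hp =>
      rw [map_mul, map_mul, map_mul, hp]
      cases i <;> simp [optionEquivLeft_X_some, optionEquivLeft_X_none]
  have hom : ∀ (n : ℕ) (p : MvPolynomial (Option σ) K), p.IsHomogeneous n →
      (Polynomial.constantCoeff (optionEquivLeft K σ p)).IsHomogeneous n := by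
    intro n p hp
    rw [key]
    rw [← one_mul n]
    refine hp.aeval _ fun i => ?_
    cases i
    · exact isHomogeneous_zero _ _ _
    · exact isHomogeneous_X _ _
  have hR' := hR.map_ringEquiv (optionEquivLeft K σ).toRingEquiv
  have hI : (I.map (rename some : MvPolynomial σ K →ₐ[K] MvPolynomial (Option σ) K)).map
      ((optionEquivLeft K σ).toRingEquiv : _ →+* Polynomial (MvPolynomial σ K)) =
      I.map Polynomial.C := by
    rw [← Ideal.map_coe (rename some : MvPolynomial σ K →ₐ[K] _), Ideal.map_map]
    congr 1
    exact RingHom.ext optionEquivLeft_rename_some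
  rw [hI] at hR'
  exact ⟨b, _, _, hR'.map_constantCoeff, fun j k => hom _ _ (hq j k),
    fun i j k => hom _ _ (h1 i j k)⟩

lemma rename_equiv_iff {I : Ideal (MvPolynomial σ K)} (e : σ ≃ τ) :
    HasLinearResolution q (I.map (rename e : MvPolynomial σ K →ₐ[K] MvPolynomial τ K)) ↔
      HasLinearResolution q I := by
  refine ⟨fun H => ?_, fun H => H.rename_equiv e⟩
  have := H.rename_equiv e.symm
  rw [Ideal.map_mapₐ] at this
  convert this
  rw [show (rename e.symm : MvPolynomial τ K →ₐ[K] MvPolynomial σ K).comp (rename e) =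
    AlgHom.id K _ by ext; simp]
  exact (Ideal.map_id I).symm

lemma rename_inl_iff [Finite τ] {I : Ideal (MvPolynomial σ K)} :
    HasLinearResolution q
      (I.map (rename Sum.inl : MvPolynomial σ K →ₐ[K] MvPolynomial (σ ⊕ τ) K)) ↔
      HasLinearResolution q I := by
  induction τ using Finite.induction_empty_option with
  | @of_equiv α β e ih =>
    rw [← ih, ← rename_equiv_iff (Equiv.sumCongr (Equiv.refl σ) e), Ideal.map_mapₐ]
    congr!
    ext
    simp
  | h_empty => exact rename_equiv_iff (Equiv.sumEmpty σ PEmpty).symm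
  | @h_option α _ ih =>
    have step : HasLinearResolution q
        ((I.map (rename Sum.inl : MvPolynomial σ K →ₐ[K] MvPolynomial (σ ⊕ α) K)).map
          (rename some : _ →ₐ[K] MvPolynomial (Option (σ ⊕ α)) K)) ↔ HasLinearResolution q
        (I.map (rename Sum.inl : MvPolynomial σ K →ₐ[K] MvPolynomial (σ ⊕ α) K)) :=
      ⟨of_rename_some, rename_some⟩
    let e : Option (σ ⊕ α) ≃ σ ⊕ Option α :=
      ((Equiv.sumCongr (Equiv.refl σ) (Equiv.optionEquivSumPUnit.{0} α)).trans
        ((Equiv.sumAssoc σ α PUnit).symm.trans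
          (Equiv.optionEquivSumPUnit.{0} (σ ⊕ α)).symm)).symm
    rw [← ih, ← step, ← rename_equiv_iff e, Ideal.map_mapₐ, Ideal.map_mapₐ]
    congr!
    ext
    simp [e]

/-- Adjoining finitely many variables does not affect linearity of the resolution. -/
lemma rename_injective_iff [Finite τ] {I : Ideal (MvPolynomial σ K)} {f : σ → τ}
    (hf : Function.Injective f) :
    HasLinearResolution q (I.map (rename f : MvPolynomial σ K →ₐ[K] MvPolynomial τ K)) ↔
      HasLinearResolution q I := by
  classical
  let e : σ ⊕ ↥(Set.range f)ᶜ ≃ τ :=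
    (Equiv.sumCongr (Equiv.ofInjective f hf) (Equiv.refl _)).trans (Equiv.Set.sumCompl _)
  rw [← rename_inl_iff (τ := ↥(Set.range f)ᶜ) (I := I), ← rename_equiv_iff e, Ideal.map_mapₐ]
  congr!
  ext
  simp [e]

end HasLinearResolution

/-- The endomorphism of a polynomial ring that sends the variables outside `A` to zero. -/
noncomputable def keepVars {σ : Type*} (K : Type*) [Field K] (A : Set σ) :
    MvPolynomial σ K →ₐ[K] MvPolynomial σ K :=
  open Classical in aeval fun i => if i ∈ A then X i else 0

section KeepVars

variable {σ K : Type*} [Field K] {A : Set σ}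

open Classical in
lemma keepVars_X (i : σ) : keepVars K A (X i) = if i ∈ A then X i else 0 := by
  rw [keepVars, aeval_X]

open Classical in
lemma keepVars_monomial (m : σ →₀ ℕ) (c : K) :
    keepVars K A (monomial m c) = if (m.support : Set σ) ⊆ A then monomial m c else 0 := by
  rw [keepVars, aeval_monomial]
  split_ifs with hm
  · rw [monomial_eq, algebraMap_eq]
    congr 1
    exact Finset.prod_congr rfl fun i hi => by simp only [if_pos (hm hi)]
  · obtain ⟨i, hi, hiA⟩ := Set.not_subset.1 hm
    rw [Finsupp.prod, Finset.prod_eq_zero hi, mul_zero]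
    rw [if_neg hiA, zero_pow (Finsupp.mem_support_iff.1 hi)]

open Classical in
lemma coeff_keepVars (m : σ →₀ ℕ) (f : MvPolynomial σ K) :
    coeff m (keepVars K A f) = if (m.support : Set σ) ⊆ A then coeff m f else 0 := by
  induction f using MvPolynomial.induction_on' with
  | monomial n c =>
    rw [keepVars_monomial]
    by_cases h : n = m
    · subst h
      split_ifs <;> simp
    · split_ifs <;> simp [coeff_monomial, h]
  | add p q hp hq =>
    rw [map_add, coeff_add, hp, hq, coeff_add]
    split_ifs <;> simp

lemma keepVars_keepVars (f : MvPolynomial σ K) :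
    keepVars K A (keepVars K A f) = keepVars K A f := by
  ext m
  rw [coeff_keepVars, coeff_keepVars]
  split_ifs <;> rfl

lemma keepVars_keepVars_of_disjoint {B : Set σ} (h : Disjoint A B) {f : MvPolynomial σ K}
    (hf : coeff 0 f = 0) : keepVars K A (keepVars K B f) = 0 := by
  ext m
  rw [coeff_keepVars, coeff_keepVars, coeff_zero]
  split_ifs with h1 h2
  · have : m = 0 := by
      rw [← Finsupp.support_eq_empty, ← Finset.coe_eq_empty]
      exact Set.subset_empty_iff.1 (h h1 h2)
    rw [this, hf]
  · rfl
  · rfl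

lemma MvPolynomial.IsHomogeneous.keepVars {n : ℕ} {f : MvPolynomial σ K} (hf : f.IsHomogeneous n) :
    (keepVars K A f).IsHomogeneous n := by
  classical
  intro m hm
  rw [coeff_keepVars] at hm
  exact hf (by by_contra h; simp [h] at hm)

end KeepVars

section Homogeneous

variable {σ K : Type*} [Field K] {d : ℕ}

lemma MvPolynomial.IsHomogeneous.coeff_zero_eq_zero {f : MvPolynomial σ K} (hf : f.IsHomogeneous d)
    (hd : d ≠ 0) : coeff 0 f = 0 :=
  hf.coeff_eq_zero (by simpa using hd.symm)

lemma homogeneousComponent_mul_of_isHomogeneous {g : MvPolynomial σ K} (hg : g.IsHomogeneous d)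
    (u : MvPolynomial σ K) :
    homogeneousComponent d (u * g) = C (coeff 0 u) * g := by
  classical
  induction u using MvPolynomial.induction_on' with
  | monomial m c =>
    have : (monomial m c * g).IsHomogeneous (m.degree + d) :=
      (isHomogeneous_monomial c rfl).mul hg
    rw [homogeneousComponent_of_mem this, coeff_monomial]
    by_cases hm : m = 0
    · subst hm
      simp
    · have : m.degree ≠ 0 := fun h => hm ((Finsupp.degree_eq_zero_iff m).1 h)
      rw [if_neg (by omega), if_neg hm, map_zero, zero_mul]
  | add p q hp hq => rw [add_mul, map_add, hp, hq, coeff_add, map_add, add_mul]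

/-- A form of degree `d` in an ideal generated by forms of degree `d` is a scalar combination of
the generators. -/
lemma exists_scalars_of_mem_span {ι : Type*} [Fintype ι] {g : ι → MvPolynomial σ K}
    (hg : ∀ i, (g i).IsHomogeneous d) {f : MvPolynomial σ K} (hf : f.IsHomogeneous d)
    (hmem : f ∈ Ideal.span (Set.range g)) : ∃ c : ι → K, f = ∑ i, C (c i) * g i := by
  obtain ⟨u, hu⟩ := Ideal.mem_span_range_iff_exists_fun.1 hmem
  refine ⟨fun i => coeff 0 (u i), ?_⟩
  rw [← homogeneousComponent_eq_self hf, ← hu, map_sum]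
  exact Finset.sum_congr rfl fun i _ => homogeneousComponent_mul_of_isHomogeneous (hg i) _

/-- A monomial of a multiple of a form of degree `d` in the variables `A` has degree at least `d`
in these variables. -/
lemma le_degree_filter_of_coeff_mul_ne_zero {A : Set σ} [DecidablePred (· ∈ A)]
    {f g : MvPolynomial σ K} (hf : f.IsHomogeneous d) {m : σ →₀ ℕ}
    (hm : coeff m (g * keepVars K A f) ≠ 0) : d ≤ (m.filter (· ∈ A)).degree := by
  classical
  rw [coeff_mul] at hm
  obtain ⟨⟨p, r⟩, hpr, hne⟩ := Finset.exists_ne_zero_of_sum_ne_zero hm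
  rw [Finset.HasAntidiagonal.mem_antidiagonal] at hpr
  have hr := right_ne_zero_of_mul hne
  have hd : r.degree = d := by rw [Finsupp.degree_eq_weight_one]; exact hf.keepVars hr
  have hrA : (r.support : Set σ) ⊆ A := by
    by_contra h
    rw [coeff_keepVars, if_neg h] at hr
    exact hr rfl
  have hfil : r.filter (· ∈ A) = r := Finsupp.filter_eq_self_iff _ _ |>.2 fun i hi =>
    hrA (Finsupp.mem_support_iff.2 hi)
  rw [← hpr, Finsupp.filter_add, map_add, hfil, hd]
  exact Nat.le_add_left _ _

end Homogeneous

/-- An ideal that is a sum of two nonzero ideals in disjoint sets of variables has no `d`-linear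
resolution for `2 ≤ d`: the Koszul relations are not generated by linear relations. -/
lemma not_linear_of_two_blocks {σ K : Type*} [Field K] {d : ℕ} (hd : 2 ≤ d)
    {I : Ideal (MvPolynomial σ K)} (hI : HasLinearResolution d I) {A : Set σ}
    (hA : ∀ f ∈ I, keepVars K A f ∈ I) (hB : ∀ f ∈ I, keepVars K Aᶜ f ∈ I)
    (hspan : I ≤ Ideal.span (keepVars K A '' I ∪ keepVars K Aᶜ '' I))
    {f g : MvPolynomial σ K} (hf : f ∈ I) (hfA : keepVars K A f ≠ 0)
    (hg : g ∈ I) (hgB : keepVars K Aᶜ g ≠ 0) : False := by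
  classical
  obtain ⟨b, h, M, hR, hq, h1⟩ := (hasLinearResolution_iff d I).1 hI
  set H : Fin (b 0) → MvPolynomial σ K := fun j => h j () with hH
  have hHq : ∀ j, (H j).IsHomogeneous d := fun j => hq j ()
  have hmem : ∀ f, f ∈ I ↔ ∃ v, v ⬝ᵥ H = f := fun f => (hR.mem_iff f).trans
    (exists_congr fun v => ⟨fun h => congrFun h (), fun h => funext fun _ => h⟩)
  have hspanH : ∀ f ∈ I, f ∈ Ideal.span (Set.range H) := fun f hf => by
    obtain ⟨v, hv⟩ := (hmem f).1 hf
    exact Ideal.mem_span_range_iff_exists_fun.2 ⟨v, hv⟩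
  have hHI : ∀ j, H j ∈ I := fun j => (hmem _).2 ⟨Pi.single j 1, by simp⟩
  have keep_span : ∀ (B : Set σ), ∀ f ∈ I,
      keepVars K B f ∈ Ideal.span (Set.range fun j => keepVars K B (H j)) := by
    intro B f hf
    obtain ⟨v, rfl⟩ := (hmem f).1 hf
    rw [dotProduct, map_sum]
    refine Ideal.sum_mem _ fun j _ => ?_
    rw [map_mul]
    exact Ideal.mul_mem_left _ _ (Ideal.subset_span ⟨j, rfl⟩)
  have hzero : ∀ j, coeff 0 (H j) = 0 := fun j => (hHq j).coeff_zero_eq_zero (by omega)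
  have hAB : Disjoint A Aᶜ := disjoint_compl_right
  have split : ∀ j, H j = keepVars K A (H j) + keepVars K Aᶜ (H j) := by
    intro j
    have hj : H j ∈ Ideal.span (Set.range (Sum.elim (fun j => keepVars K A (H j))
        (fun j => keepVars K Aᶜ (H j)))) := by
      refine Ideal.span_le.2 ?_ (hspan (hHI j))
      rw [Set.Sum.elim_range]
      rintro _ (⟨f, hf, rfl⟩ | ⟨f, hf, rfl⟩)
      · exact Ideal.span_mono Set.subset_union_left (keep_span _ f hf)
      · exact Ideal.span_mono Set.subset_union_right (keep_span _ f hf)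
    obtain ⟨c, hc⟩ := exists_scalars_of_mem_span
      (by rintro (i | i) <;> exact (hHq i).keepVars) (hHq j) hj
    rw [Fintype.sum_sum_type] at hc
    have e1 : keepVars K A (H j) = ∑ i, C (c (Sum.inl i)) * keepVars K A (H i) := by
      rw [hc]
      simp [keepVars_keepVars, keepVars_keepVars_of_disjoint hAB (hzero _), ← algebraMap_eq]
    have e2 : keepVars K Aᶜ (H j) = ∑ i, C (c (Sum.inr i)) * keepVars K Aᶜ (H i) := by
      rw [hc]
      simp [keepVars_keepVars, keepVars_keepVars_of_disjoint hAB.symm (hzero _), ← algebraMap_eq]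
    rw [e1, e2]
    exact hc
  have hrow : ∀ k, M 0 k ⬝ᵥ (fun j => keepVars K A (H j)) = 0 := by
    intro k
    have hk : M 0 k ⬝ᵥ H = 0 :=
      congrFun ((hR.exact_zero (M 0 k)).2 ⟨Pi.single k 1, by simp [Matrix.row]⟩) ()
    by_contra hne
    obtain ⟨m, hm⟩ := exists_coeff_ne_zero hne
    have hsum : M 0 k ⬝ᵥ (fun j => keepVars K A (H j)) =
        - (M 0 k ⬝ᵥ fun j => keepVars K Aᶜ (H j)) := by
      rw [eq_neg_iff_add_eq_zero, ← dotProduct_add, ← hk]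
      exact congrArg _ (funext fun j => (split j).symm)
    have hdeg : m.degree = 1 + d := by
      rw [Finsupp.degree_eq_weight_one]
      exact IsHomogeneous.sum _ _ _ (fun j _ => (h1 0 k j).mul (hHq j).keepVars) hm
    have hmB : coeff m (M 0 k ⬝ᵥ fun j => keepVars K Aᶜ (H j)) ≠ 0 := by
      rw [hsum, coeff_neg] at hm
      exact neg_ne_zero.1 hm
    rw [dotProduct, coeff_sum] at hm hmB
    obtain ⟨i, -, hi⟩ := Finset.exists_ne_zero_of_sum_ne_zero hm
    obtain ⟨j, -, hj⟩ := Finset.exists_ne_zero_of_sum_ne_zero hmB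
    have l1 := le_degree_filter_of_coeff_mul_ne_zero (hHq i) hi
    have l2 := le_degree_filter_of_coeff_mul_ne_zero (hHq j) hj
    have l3 : (m.filter (· ∈ A)).degree + (m.filter (· ∈ Aᶜ)).degree = m.degree := by
      rw [← map_add]
      congr 1
      exact Finsupp.filter_add_filter_not m (· ∈ A)
    omega
  have hsyz : ∀ v, v ⬝ᵥ H = 0 → v ⬝ᵥ (fun j => keepVars K A (H j)) = 0 := by
    intro v hv
    obtain ⟨u, rfl⟩ := (hR.exact_zero v).1 (funext fun _ => hv)
    rw [← dotProduct_mulVec]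
    exact (congrArg _ (funext hrow)).trans (dotProduct_zero u)
  have exists_ne : ∀ (B : Set σ), ∀ f ∈ I, keepVars K B f ≠ 0 → ∃ j, keepVars K B (H j) ≠ 0 := by
    intro B f hf hne
    by_contra! h0
    have := keep_span B f hf
    simp only [h0] at this
    refine hne ?_
    rw [← Ideal.mem_bot, ← Ideal.span_singleton_zero]
    exact Ideal.span_mono (by rintro _ ⟨_, rfl⟩; rfl) this
  obtain ⟨k, hk⟩ := exists_ne A f hf hfA
  obtain ⟨j, hj⟩ := exists_ne Aᶜ g hg hgB
  obtain ⟨c, hc⟩ := exists_scalars_of_mem_span hHq (hHq k).keepVars (hspanH _ (hA _ (hHI k)))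
  obtain ⟨e, he⟩ := exists_scalars_of_mem_span hHq (hHq j).keepVars (hspanH _ (hB _ (hHI j)))
  have hc' := congrArg (keepVars K A) hc
  have he' := congrArg (keepVars K A) he
  rw [keepVars_keepVars] at hc'
  rw [keepVars_keepVars_of_disjoint hAB (hzero j)] at he'
  simp only [map_sum, map_mul, ← algebraMap_eq, AlgHom.commutes] at hc' he'
  simp only [← algebraMap_eq] at hc he
  have hsy := hsyz (keepVars K Aᶜ (H j) • (fun i => algebraMap K _ (c i)) -
      keepVars K A (H k) • fun i => algebraMap K _ (e i)) (by
    rw [sub_dotProduct, smul_dotProduct, smul_dotProduct, dotProduct, dotProduct, ← hc, ← he,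
      smul_eq_mul, smul_eq_mul]
    ring)
  rw [sub_dotProduct, smul_dotProduct, smul_dotProduct, dotProduct, dotProduct, ← hc', ← he',
    smul_zero, sub_zero, smul_eq_mul] at hsy
  exact mul_ne_zero hj hk hsy

end MatrixResolution

lemma rename_killCompl {σ τ K : Type*} [Field K] {f : σ → τ} (hf : Function.Injective f)
    (p : MvPolynomial τ K) : rename f (killCompl hf p) = keepVars K (Set.range f) p := by
  classical
  refine DFunLike.congr_fun (f := (rename f).comp (killCompl hf)) (algHom_ext fun i => ?_) p
  rw [AlgHom.comp_apply, keepVars_X, killCompl, aeval_X]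
  split_ifs with h
  · rw [rename_X]
    exact congrArg X (congrArg Subtype.val ((Equiv.ofInjective f hf).apply_symm_apply ⟨i, h⟩))
  · exact map_zero _

section Toric

variable (K : Type*) [Field K] {V : Type*} {G : SimpleGraph V}

lemma edgeMonom_mk (v w : V) :
    edgeMonom K s(v, w) = X (some v) * X (some w) * X none := rfl

lemma edgeMonom_map {W : Type*} (f : V → W) (e : Sym2 V) :
    edgeMonom K (e.map f) = rename (Option.map f) (edgeMonom K e) := by
  induction e using Sym2.ind with
  | _ v w => simp [edgeMonom_mk]

variable (G) in
/-- The map `x_e ↦ t^{ρ(e)} s` whose kernel is the toric ideal. -/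
noncomputable def toricMap : MvPolynomial G.edgeSet K →ₐ[K] MvPolynomial (Option V) K :=
  aeval fun e : G.edgeSet => edgeMonom K (e : Sym2 V)

variable {K}

lemma toricMap_X (e : G.edgeSet) : toricMap K G (X e) = edgeMonom K (e : Sym2 V) := by
  rw [toricMap, aeval_X]

lemma mem_toricIdeal {f : MvPolynomial G.edgeSet K} :
    f ∈ toricIdeal K G ↔ toricMap K G f = 0 := Iff.rfl

lemma exists_toricMap_monomial (m : G.edgeSet →₀ ℕ) :
    ∃ r, toricMap K G (monomial m 1) = monomial r 1 := by
  induction m using Finsupp.induction_linear with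
  | zero => exact ⟨0, by rw [monomial_zero', map_one, map_one, monomial_zero', map_one]⟩
  | add m n hm hn =>
    obtain ⟨r, hr⟩ := hm
    obtain ⟨s, hs⟩ := hn
    exact ⟨r + s, by rw [← mul_one (1 : K), ← monomial_mul, map_mul, hr, hs, monomial_mul]⟩
  | single e k =>
    obtain ⟨r, hr⟩ : ∃ r, edgeMonom K (e : Sym2 V) = monomial r 1 := by
      induction (e : Sym2 V) using Sym2.ind with
      | _ v w => exact ⟨_, by rw [edgeMonom_mk, X, X, X, monomial_mul, monomial_mul, mul_one,
          mul_one]⟩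
    exact ⟨k • r, by rw [← X_pow_eq_monomial, map_pow, toricMap_X, hr, monomial_pow, one_pow]⟩

lemma keepVars_mem_toricIdeal {W : Set V} {A : Set G.edgeSet}
    (hA : ∀ e : G.edgeSet, e ∈ A ↔ ∀ v ∈ (e : Sym2 V), v ∈ W) {f : MvPolynomial G.edgeSet K}
    (hf : f ∈ toricIdeal K G) : keepVars K A f ∈ toricIdeal K G := by
  classical
  let ψ : MvPolynomial (Option V) K →ₐ[K] MvPolynomial (Option V) K :=
    aeval fun o => o.elim (X none) fun v => if v ∈ W then X (some v) else 0
  have hψ : (toricMap K G).comp (keepVars K A) = ψ.comp (toricMap K G) := by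
    refine algHom_ext fun e => ?_
    rw [AlgHom.comp_apply, AlgHom.comp_apply, keepVars_X, toricMap_X]
    have he := hA e
    obtain ⟨e, hadj⟩ := e
    induction e using Sym2.ind with
    | _ v w =>
      simp only [Sym2.mem_iff, forall_eq_or_imp, forall_eq] at he
      rw [edgeMonom_mk]
      simp only [he, ψ, map_mul, aeval_X, Option.elim]
      by_cases hv : v ∈ W <;> by_cases hw : w ∈ W <;> simp [hv, hw, toricMap_X, edgeMonom_mk]
  rw [mem_toricIdeal] at hf ⊢
  rw [← AlgHom.comp_apply, hψ, AlgHom.comp_apply, hf, map_zero]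

lemma edgeMonom_ne_zero (e : Sym2 V) : edgeMonom K e ≠ 0 := by
  induction e using Sym2.ind with
  | _ v w =>
    rw [edgeMonom_mk]
    exact mul_ne_zero (mul_ne_zero (X_ne_zero _) (X_ne_zero _)) (X_ne_zero _)

/-- The toric ideal of a simple graph contains no forms of degree less than two. -/
lemma two_le_of_isHomogeneous_of_mem_toricIdeal {d : ℕ} {f : MvPolynomial G.edgeSet K}
    (hf : f ∈ toricIdeal K G) (hd : f.IsHomogeneous d) (h0 : f ≠ 0) : 2 ≤ d := by
  classical
  by_contra! hlt
  obtain rfl | rfl : d = 0 ∨ d = 1 := by omega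
  · have hC := homogeneousComponent_eq_self hd
    rw [homogeneousComponent_zero] at hC
    rw [mem_toricIdeal, ← hC, ← algebraMap_eq, AlgHom.commutes, algebraMap_eq, C_eq_zero] at hf
    rw [hf, map_zero] at hC
    exact h0 hC.symm
  · obtain ⟨m, hm⟩ := exists_coeff_ne_zero h0
    have hdeg : ∀ n, coeff n f ≠ 0 → n.degree = 1 := fun n hn => by
      rw [Finsupp.degree_eq_weight_one]
      exact hd hn
    obtain ⟨e, rfl⟩ := (Finsupp.sum_eq_one_iff m).1 (hdeg m hm)
    have hkeep : keepVars K {e} f = C (coeff (Finsupp.single e 1) f) * X e := by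
      ext n
      rw [coeff_keepVars, coeff_C_mul, coeff_X]
      by_cases hn : Finsupp.single e 1 = n
      · subst hn
        have hs : (↑(Finsupp.single e 1).support : Set G.edgeSet) ⊆ {e} := fun i hi =>
          Finset.mem_singleton.1 (Finsupp.support_single_subset hi)
        rw [if_pos hs, if_pos rfl, mul_one]
      · rw [if_neg hn, mul_zero]
        split_ifs with hs
        · by_contra hne
          obtain ⟨e', rfl⟩ := (Finsupp.sum_eq_one_iff n).1 (hdeg n hne)
          refine hn ?_
          rw [show e' = e from hs (by simp)]
        · rfl
    have hmem : keepVars K {e} f ∈ toricIdeal K G := by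
      refine keepVars_mem_toricIdeal (W := {v | v ∈ (e : Sym2 V)}) (fun e' => ?_) hf
      constructor
      · rintro rfl v hv
        exact hv
      · intro h
        obtain ⟨e, he⟩ := e
        obtain ⟨e', he'⟩ := e'
        refine Subtype.ext (?_ : e' = e)
        induction e' using Sym2.ind with
        | _ v w =>
          exact ((Sym2.mem_and_mem_iff (SimpleGraph.Adj.ne he')).1
            ⟨h v (Sym2.mem_mk_left v w), h w (Sym2.mem_mk_right v w)⟩).symm
    rw [mem_toricIdeal, hkeep, map_mul, toricMap_X, ← algebraMap_eq, AlgHom.commutes,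
      algebraMap_eq] at hmem
    exact mul_ne_zero ((C_ne_zero).2 hm) (edgeMonom_ne_zero _) hmem

/-- The connected component containing an edge. -/
noncomputable def edgeComponent (e : G.edgeSet) : G.ConnectedComponent :=
  G.connectedComponentMk (e : Sym2 V).out.1

lemma connectedComponentMk_eq_edgeComponent (e : G.edgeSet) {v : V} (hv : v ∈ (e : Sym2 V)) :
    G.connectedComponentMk v = edgeComponent e := by
  have key : ∀ w ∈ (e : Sym2 V), G.connectedComponentMk v = G.connectedComponentMk w := by
    obtain ⟨e, he⟩ := e
    intro w hw
    by_cases hvw : v = w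
    · rw [hvw]
    · have : e = s(v, w) := (Sym2.mem_and_mem_iff hvw).1 ⟨hv, hw⟩
      subst this
      exact SimpleGraph.ConnectedComponent.sound (SimpleGraph.Adj.reachable he)
  exact key _ (Sym2.out_fst_mem _)

lemma edgeComponent_eq_iff (e : G.edgeSet) (c : G.ConnectedComponent) :
    edgeComponent e = c ↔ ∀ v ∈ (e : Sym2 V), v ∈ c.supp := by
  constructor
  · rintro rfl v hv
    exact connectedComponentMk_eq_edgeComponent e hv
  · intro h
    exact h _ (Sym2.out_fst_mem _)

lemma edgeComponent_ne_iff (e : G.edgeSet) (c : G.ConnectedComponent) :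
    edgeComponent e ≠ c ↔ ∀ v ∈ (e : Sym2 V), v ∈ c.suppᶜ := by
  constructor
  · intro h v hv hc
    exact h ((connectedComponentMk_eq_edgeComponent e hv).symm.trans hc)
  · intro h he
    exact h _ (Sym2.out_fst_mem _) he

/-- The inclusion of the edges of a component into the edges of the graph. -/
def componentEdge (c : G.ConnectedComponent) : (G.induce c.supp).edgeSet ↪ G.edgeSet :=
  (SimpleGraph.Embedding.induce c.supp).mapEdgeSet

lemma coe_componentEdge (c : G.ConnectedComponent) (e : (G.induce c.supp).edgeSet) :
    (componentEdge c e : Sym2 V) = Sym2.map Subtype.val (e : Sym2 c.supp) := rfl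

lemma range_componentEdge (c : G.ConnectedComponent) :
    Set.range (componentEdge c) = {e | edgeComponent e = c} := by
  ext e
  rw [Set.mem_ofPred_eq, edgeComponent_eq_iff]
  constructor
  · rintro ⟨e, rfl⟩ v hv
    rw [coe_componentEdge, Sym2.mem_map] at hv
    obtain ⟨w, -, rfl⟩ := hv
    exact w.2
  · intro h
    obtain ⟨e, he⟩ := e
    induction e using Sym2.ind with
    | _ v w =>
      exact ⟨⟨s(⟨v, h v (Sym2.mem_mk_left v w)⟩, ⟨w, h w (Sym2.mem_mk_right v w)⟩), he⟩, rfl⟩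

lemma rename_componentEdge_mem_iff (c : G.ConnectedComponent)
    {f : MvPolynomial (G.induce c.supp).edgeSet K} :
    rename (componentEdge c) f ∈ toricIdeal K G ↔ f ∈ toricIdeal K (G.induce c.supp) := by
  have h : (toricMap K G).comp (rename (componentEdge c)) =
      (rename (Option.map Subtype.val)).comp (toricMap K (G.induce c.supp)) := by
    refine algHom_ext fun e => ?_
    rw [AlgHom.comp_apply, AlgHom.comp_apply, rename_X, toricMap_X, toricMap_X,
      coe_componentEdge, edgeMonom_map]
  rw [mem_toricIdeal, mem_toricIdeal, ← AlgHom.comp_apply, h, AlgHom.comp_apply]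
  exact map_eq_zero_iff _ (rename_injective _ (Option.map_injective Subtype.val_injective))

/-- The toric ideal of a component, extended to the polynomial ring of the whole graph. -/
noncomputable def componentIdeal (K : Type*) [Field K] (c : G.ConnectedComponent) :
    Ideal (MvPolynomial G.edgeSet K) :=
  (toricIdeal K (G.induce c.supp)).map
    (rename (componentEdge c) : MvPolynomial _ K →ₐ[K] MvPolynomial G.edgeSet K)

lemma componentIdeal_le (c : G.ConnectedComponent) : componentIdeal K c ≤ toricIdeal K G :=
  Ideal.map_le_iff_le_comap.2 fun _ hf => (rename_componentEdge_mem_iff c).2 hf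

lemma mem_componentIdeal {c : G.ConnectedComponent} {f : MvPolynomial G.edgeSet K}
    (hf : f ∈ toricIdeal K G) (hc : keepVars K {e | edgeComponent e = c} f = f) :
    f ∈ componentIdeal K c := by
  rw [← range_componentEdge, ← rename_killCompl (componentEdge c).injective] at hc
  rw [← hc] at hf ⊢
  exact Ideal.mem_map_of_mem _ ((rename_componentEdge_mem_iff c).1 hf)

open Classical in
/-- The image of a monomial under the toric map determines that of each of its components: up to
a square, the latter arises by `t_v ↦ t_v² s` inside the component, `t_v ↦ 1` outside of it and
`s ↦ 1`. -/
lemma toricMap_filter_eq {m n : G.edgeSet →₀ ℕ}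
    (h : toricMap K G (monomial m 1) = toricMap K G (monomial n 1)) (c : G.ConnectedComponent) :
    toricMap K G (monomial (m.filter fun e => edgeComponent e = c) 1) =
      toricMap K G (monomial (n.filter fun e => edgeComponent e = c) 1) := by
  let ψ : MvPolynomial (Option V) K →ₐ[K] MvPolynomial (Option V) K :=
    aeval fun o => o.elim 1 fun v => if v ∈ c.supp then X (some v) ^ 2 * X none else 1
  have hedge : ∀ e : G.edgeSet, ψ (edgeMonom K (e : Sym2 V)) =
      if edgeComponent e = c then edgeMonom K (e : Sym2 V) ^ 2 else 1 := by
    intro e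
    have h1 := edgeComponent_eq_iff e c
    have h2 := edgeComponent_ne_iff e c
    obtain ⟨e, he⟩ := e
    induction e using Sym2.ind with
    | _ v w =>
      simp only [Sym2.mem_iff, forall_eq_or_imp, forall_eq] at h1 h2
      rw [edgeMonom_mk]
      simp only [ψ, map_mul, aeval_X, Option.elim]
      split_ifs with hv hw hc hc hw hc hc
      · ring
      · exact absurd (h1.2 ⟨hv, hw⟩) hc
      · exact absurd (h1.1 hc).2 hw
      · exact absurd hv (h2.1 hc).1
      · exact absurd (h1.1 hc).1 hv
      · exact absurd hw (h2.1 hc).2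
      · exact absurd (h1.1 hc).1 hv
      · ring
  have hψ : ∀ m : G.edgeSet →₀ ℕ, ψ (toricMap K G (monomial m 1)) =
      toricMap K G (monomial (m.filter fun e => edgeComponent e = c) 1) ^ 2 := by
    intro m
    induction m using Finsupp.induction_linear with
    | zero => rw [Finsupp.filter_zero, monomial_zero', map_one, map_one, map_one, one_pow]
    | add m n hm hn =>
      rw [Finsupp.filter_add, ← mul_one (1 : K), ← monomial_mul, ← monomial_mul, map_mul, map_mul,
        hm, hn, map_mul, mul_pow]
    | single e k =>
      rw [← X_pow_eq_monomial, map_pow, map_pow, toricMap_X, hedge]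
      split_ifs with he
      · rw [Finsupp.filter_single_of_pos (fun e => edgeComponent e = c) he, ← X_pow_eq_monomial,
          map_pow, toricMap_X, ← pow_mul, ← pow_mul, mul_comm]
      · rw [Finsupp.filter_single_of_neg (fun e => edgeComponent e = c) he, monomial_zero',
          map_one, map_one, one_pow, one_pow]
  have hsq := congrArg ψ h
  rw [hψ, hψ] at hsq
  obtain ⟨r, hr⟩ := exists_toricMap_monomial (K := K) (m.filter fun e => edgeComponent e = c)
  obtain ⟨s, hs⟩ := exists_toricMap_monomial (K := K) (n.filter fun e => edgeComponent e = c)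
  rw [hr, hs, monomial_pow, monomial_pow, one_pow] at hsq
  have h2 := monomial_left_injective (one_ne_zero (α := K)) hsq
  have hrs : r = s := by
    ext o
    have := DFunLike.congr_fun h2 o
    simp only [Finsupp.smul_apply, smul_eq_mul] at this
    omega
  rw [hr, hs, hrs]

open Classical in
lemma monomial_eq_prod_filter [Fintype G.ConnectedComponent] (m : G.edgeSet →₀ ℕ) :
    (monomial m 1 : MvPolynomial G.edgeSet K) =
      ∏ c : G.ConnectedComponent, monomial (m.filter fun e => edgeComponent e = c) 1 := by
  have hsum : ∑ c : G.ConnectedComponent, m.filter (fun e => edgeComponent e = c) = m := by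
    ext e
    simp [Finsupp.finsetSum_apply, Finsupp.filter_apply]
  rw [← monomial_sum_one, hsum]

/-- The toric ideal of a graph is the sum of the extended toric ideals of its components. -/
lemma toricIdeal_le_iSup_componentIdeal [Finite V] :
    toricIdeal K G ≤ ⨆ c : G.ConnectedComponent, componentIdeal K c := by
  classical
  have := Fintype.ofFinite G.ConnectedComponent
  set J := ⨆ c : G.ConnectedComponent, componentIdeal K c with hJ
  choose ρ hρ using exists_toricMap_monomial (K := K) (G := G)
  have hcong : ∀ m n, ρ m = ρ n →
      Ideal.Quotient.mkₐ K J (monomial m 1) = Ideal.Quotient.mkₐ K J (monomial n 1) := by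
    intro m n hmn
    have hθ : toricMap K G (monomial m 1) = toricMap K G (monomial n 1) := by
      rw [hρ, hρ, hmn]
    rw [monomial_eq_prod_filter m, monomial_eq_prod_filter n, map_prod, map_prod]
    refine Finset.prod_congr rfl fun c _ => ?_
    rw [Ideal.Quotient.mkₐ_eq_mk, Ideal.Quotient.eq]
    refine (le_iSup (componentIdeal K) c : _ ≤ J) (mem_componentIdeal ?_ ?_)
    · rw [mem_toricIdeal, map_sub, toricMap_filter_eq hθ, sub_self]
    · rw [map_sub, keepVars_monomial, keepVars_monomial, if_pos, if_pos]
      all_goals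
        intro e he
        rw [Finset.mem_coe, Finsupp.support_filter, Finset.mem_filter] at he
        exact he.2
  let L : MvPolynomial (Option V) K →ₗ[K] MvPolynomial G.edgeSet K ⧸ J :=
    (basisMonomials (Option V) K).constr K fun r =>
      Ideal.Quotient.mkₐ K J (monomial (Function.invFun ρ r) 1)
  have hL : L ∘ₗ (toricMap K G).toLinearMap = (Ideal.Quotient.mkₐ K J).toLinearMap := by
    refine (basisMonomials G.edgeSet K).ext fun m => ?_
    rw [coe_basisMonomials, LinearMap.comp_apply, AlgHom.toLinearMap_apply,
      AlgHom.toLinearMap_apply, hρ]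
    have := (basisMonomials (Option V) K).constr_basis K (fun r =>
      Ideal.Quotient.mkₐ K J (monomial (Function.invFun ρ r) 1)) (ρ m)
    rw [coe_basisMonomials] at this
    exact this.trans (hcong _ _ (Function.invFun_eq ⟨m, rfl⟩))
  intro f hf
  rw [← Ideal.Quotient.eq_zero_iff_mem]
  have := DFunLike.congr_fun hL f
  rw [LinearMap.comp_apply, AlgHom.toLinearMap_apply, mem_toricIdeal.1 hf, map_zero] at this
  exact this.symm

lemma toricIdeal_eq_componentIdeal [Finite V] {c : G.ConnectedComponent}
    (hc : ∀ c' ≠ c, toricIdeal K (G.induce c'.supp) = ⊥) :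
    toricIdeal K G = componentIdeal K c := by
  refine le_antisymm (toricIdeal_le_iSup_componentIdeal.trans (iSup_le fun c' => ?_))
    (componentIdeal_le c)
  by_cases h : c' = c
  · rw [h]
  · rw [componentIdeal, hc c' h, Ideal.map_bot]
    exact bot_le

/-- Elements of the toric ideal of a component only involve the variables of this component. -/
lemma keepVars_rename_componentEdge {c : G.ConnectedComponent} {A : Set G.edgeSet}
    (hA : ∀ e, edgeComponent e = c → e ∈ A) (f : MvPolynomial (G.induce c.supp).edgeSet K) :
    keepVars K A (rename (componentEdge c) f) = rename (componentEdge c) f := by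
  refine DFunLike.congr_fun (f := (keepVars K A).comp (rename (componentEdge c)))
    (algHom_ext fun e => ?_) f
  rw [AlgHom.comp_apply, rename_X, keepVars_X, if_pos]
  exact hA _ ((Set.ext_iff.1 (range_componentEdge c) _).1 ⟨e, rfl⟩)

/-- If the toric ideal of a graph has a linear resolution, then at most one component has a nonzero
toric ideal. -/
lemma toricIdeal_induce_eq_bot [Finite V] {d : ℕ} (h : HasLinearResolution d (toricIdeal K G))
    {c c' : G.ConnectedComponent} (hne : c' ≠ c) (hc : toricIdeal K (G.induce c.supp) ≠ ⊥) :
    toricIdeal K (G.induce c'.supp) = ⊥ := by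
  by_contra hc'
  obtain ⟨f, hf, hf0⟩ := Submodule.exists_mem_ne_zero_of_ne_bot hc
  obtain ⟨g, hg, hg0⟩ := Submodule.exists_mem_ne_zero_of_ne_bot hc'
  rw [← rename_componentEdge_mem_iff] at hf hg
  have hf0' := (map_ne_zero_iff _ (rename_injective (R := K) _ (componentEdge c).injective)).2 hf0
  have hg0' := (map_ne_zero_iff _ (rename_injective (R := K) _ (componentEdge c').injective)).2 hg0
  set A : Set G.edgeSet := {e | edgeComponent e = c} with hA
  have hd : 2 ≤ d := by
    obtain ⟨b, φ₀, φ, hrange, -, -, hq, -⟩ := h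
    obtain ⟨j, hj⟩ : ∃ j, φ₀ (Finsupp.single j 1) ≠ 0 := by
      by_contra! h0
      have hz : φ₀ = 0 := Finsupp.lhom_ext' fun j => LinearMap.ext_ring (by simpa using h0 j)
      rw [hz, LinearMap.range_zero] at hrange
      rw [← hrange] at hf
      exact hf0' hf
    exact two_le_of_isHomogeneous_of_mem_toricIdeal
      (hrange ▸ LinearMap.mem_range_self φ₀ _) (hq j) hj
  have inA : ∀ e : G.edgeSet, edgeComponent e = c → e ∈ A := fun _ he => he
  have inB : ∀ c'' ≠ c, ∀ e : G.edgeSet, edgeComponent e = c'' → e ∈ Aᶜ :=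
    fun c'' hc'' e he he' => hc'' (he.symm.trans he')
  refine not_linear_of_two_blocks hd h (A := A)
    (fun p hp => keepVars_mem_toricIdeal (fun e => edgeComponent_eq_iff e c) hp)
    (fun p hp => keepVars_mem_toricIdeal (fun e => edgeComponent_ne_iff e c) hp)
    (toricIdeal_le_iSup_componentIdeal.trans (iSup_le fun c'' => ?_)) hf
    (by rwa [keepVars_rename_componentEdge inA]) hg
    (by rwa [keepVars_rename_componentEdge (inB c' hne)])
  refine Ideal.map_le_iff_le_comap.2 fun p hp => Ideal.subset_span ?_
  have hp' := (rename_componentEdge_mem_iff c'').2 hp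
  by_cases hc'' : c'' = c
  · subst hc''
    exact Or.inl ⟨_, hp', keepVars_rename_componentEdge inA p⟩
  · exact Or.inr ⟨_, hp', keepVars_rename_componentEdge (inB c'' hc'') p⟩

end Toric

/-- Let `G` be a finite (possibly disconnected) simple graph each of
whose connected components has at least one edge.  Then `K[G]` has a `d`-linear
resolution if and only if some component `c` has a `d`-linear resolution and the toric
ideal of every other component is zero (i.e. its edge ring is a polynomial ring). -/
theorem edgeRing_linear_resolution_of_disconnected
    {V : Type*} [Fintype V] [Nonempty V] (K : Type*) [Field K] (d : ℕ)
    (G : SimpleGraph V)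
    (hcomp : ∀ c : G.ConnectedComponent, ∃ v w, G.Adj v w ∧ G.connectedComponentMk v = c) :
    HasLinearResolution d (toricIdeal K G) ↔
      ∃ c : G.ConnectedComponent,
        HasLinearResolution d (toricIdeal K (G.induce c.supp)) ∧
        ∀ c' : G.ConnectedComponent, c' ≠ c →
          toricIdeal K (G.induce c'.supp) = ⊥ := by
  have key : ∀ c : G.ConnectedComponent,
      (∀ c' ≠ c, toricIdeal K (G.induce c'.supp) = ⊥) →
      (HasLinearResolution d (toricIdeal K G) ↔
        HasLinearResolution d (toricIdeal K (G.induce c.supp))) := fun c hc => by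
    rw [toricIdeal_eq_componentIdeal hc]
    exact HasLinearResolution.rename_injective_iff (componentEdge c).injective
  constructor
  · intro h
    obtain ⟨c, hc⟩ : ∃ c : G.ConnectedComponent,
        ∀ c' ≠ c, toricIdeal K (G.induce c'.supp) = ⊥ := by
      by_cases h0 : ∃ c : G.ConnectedComponent, toricIdeal K (G.induce c.supp) ≠ ⊥
      · obtain ⟨c, hc⟩ := h0
        exact ⟨c, fun c' hne => toricIdeal_induce_eq_bot h hne hc⟩
      · push Not at h0
        exact ⟨G.connectedComponentMk (Classical.arbitrary V), fun c' _ => h0 c'⟩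
    exact ⟨c, (key c hc).1 h, hc⟩
  · rintro ⟨c, h, hc⟩
    exact (key c hc).2 h
end

section
/- Let G be a finite connected simple graph. If G has two vertex-disjoint odd cycles, then deg(P_G) ≥ 3. -/
open MvPolynomial Pointwise

section LinearProgramming

open Matrix

variable {ι V : Type*} [AddCommGroup V] [Module ℝ V]

/-- No nonzero vector supported on `τ` is killed by `φ`. -/
def IsFree (φ : (ι → ℝ) →ₗ[ℝ] V) (τ : Finset ι) : Prop :=
  ∀ a : ι → ℝ, (∀ e ∉ τ, a e = 0) → φ a = 0 → a = 0

/-- The columns of `φ` indexed by `τ` form a basis of the range of `φ`. -/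
def IsBase (φ : (ι → ℝ) →ₗ[ℝ] V) (τ : Finset ι) : Prop :=
  IsFree φ τ ∧ ∀ a : ι → ℝ, ∃ b : ι → ℝ, (∀ e ∉ τ, b e = 0) ∧ φ b = φ a

theorem IsFree.eq {φ : (ι → ℝ) →ₗ[ℝ] V} {τ : Finset ι} (h : IsFree φ τ) {a b : ι → ℝ}
    (ha : ∀ e ∉ τ, a e = 0) (hb : ∀ e ∉ τ, b e = 0) (hab : φ a = φ b) : a = b := by
  refine sub_eq_zero.1 (h (a - b) (fun e he => ?_) (by simp [hab]))
  simp [ha e he, hb e he]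

theorem IsBase.exists_proj {φ : (ι → ℝ) →ₗ[ℝ] V} {τ : Finset ι} (h : IsBase φ τ) :
    ∃ P : (ι → ℝ) →ₗ[ℝ] (ι → ℝ), (∀ a, ∀ e ∉ τ, P a e = 0) ∧ ∀ a, φ (P a) = φ a := by
  choose P hP hφ using h.2
  refine ⟨⟨⟨P, fun a b => ?_⟩, fun r a => ?_⟩, hP, hφ⟩
  · refine h.1.eq (hP _) (fun e he => ?_) (by simp [hφ])
    simp [hP _ e he]
  · refine h.1.eq (hP _) (fun e he => ?_) (by simp [hφ])
    simp [hP _ e he]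

open Classical in
/-- The coordinates with respect to the base `τ`, as a projection of `ι → ℝ`. -/
noncomputable def baseProj (φ : (ι → ℝ) →ₗ[ℝ] V) (τ : Finset ι) : (ι → ℝ) →ₗ[ℝ] (ι → ℝ) :=
  if h : IsBase φ τ then h.exists_proj.choose else 0

namespace IsBase

variable {φ : (ι → ℝ) →ₗ[ℝ] V} {τ : Finset ι}

theorem baseProj_apply_of_notMem (h : IsBase φ τ) (a : ι → ℝ) {e : ι} (he : e ∉ τ) :
    baseProj φ τ a e = 0 := by
  rw [baseProj, dif_pos h]
  exact h.exists_proj.choose_spec.1 a e he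

theorem map_baseProj (h : IsBase φ τ) (a : ι → ℝ) : φ (baseProj φ τ a) = φ a := by
  rw [baseProj, dif_pos h]
  exact h.exists_proj.choose_spec.2 a

theorem baseProj_eq (h : IsBase φ τ) {a b : ι → ℝ} (hb : ∀ e ∉ τ, b e = 0) (hab : φ a = φ b) :
    baseProj φ τ a = b :=
  h.1.eq (fun _ he => h.baseProj_apply_of_notMem a he) hb ((h.map_baseProj a).trans hab)

theorem baseProj_congr (h : IsBase φ τ) {a b : ι → ℝ} (hab : φ a = φ b) :
    baseProj φ τ a = baseProj φ τ b :=
  h.baseProj_eq (fun _ he => h.baseProj_apply_of_notMem b he) (hab.trans (h.map_baseProj b).symm)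

theorem baseProj_self (h : IsBase φ τ) {a : ι → ℝ} (ha : ∀ e ∉ τ, a e = 0) :
    baseProj φ τ a = a :=
  h.baseProj_eq ha rfl

theorem baseProj_single [DecidableEq ι] (h : IsBase φ τ) {e : ι} (he : e ∈ τ) :
    baseProj φ τ (Pi.single e 1) = Pi.single e 1 :=
  h.baseProj_self fun _ hf => Pi.single_eq_of_ne (ne_of_mem_of_not_mem he hf).symm _

end IsBase

variable [Fintype ι]

/-- Move from a nonnegative vector along `c` until a coordinate vanishes. -/
theorem exists_pos_smul_add_vanishing {b c : ι → ℝ} (hb : ∀ e, 0 ≤ b e)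
    (hcb : ∀ e, b e = 0 → c e = 0) (hneg : ∃ e, c e < 0) :
    ∃ s : ℝ, 0 < s ∧ (∀ e, 0 ≤ b e + s * c e) ∧ ∃ e, b e ≠ 0 ∧ b e + s * c e = 0 := by
  obtain ⟨e₀, he₀, hmin⟩ := (Finset.univ.filter fun e => c e < 0).exists_min_image
    (fun e => b e / -c e) (by simpa [Finset.Nonempty] using hneg)
  simp only [Finset.mem_filter, Finset.mem_univ, true_and] at he₀ hmin
  have hb₀ : b e₀ ≠ 0 := fun h => he₀.ne (hcb e₀ h)
  have hs : 0 < b e₀ / -c e₀ := div_pos ((hb e₀).lt_of_ne' hb₀) (neg_pos.2 he₀)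
  refine ⟨b e₀ / -c e₀, hs, fun e => ?_, e₀, hb₀, ?_⟩
  · by_cases he : c e < 0
    · have := hmin e he
      rw [le_div_iff₀ (neg_pos.2 he)] at this
      linarith
    · exact add_nonneg (hb e) (mul_nonneg hs.le (not_lt.1 he))
  · field_simp [he₀.ne]
    ring

/-- Finitely many nonzero linear forms are simultaneously nonzero at points arbitrarily close to a
given one. -/
theorem exists_mem_nhds_forall_linearForm_ne_zero {κ : Type*} [Finite κ]
    (L : κ → (ι → ℝ) →ₗ[ℝ] ℝ) (hL : ∀ k, L k ≠ 0) {p : ι → ℝ} {U : Set (ι → ℝ)}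
    (hU : U ∈ nhds p) : ∃ x ∈ U, ∀ k, L k x ≠ 0 := by
  have hdense : Dense (⋂ k, {x | L k x ≠ 0}) := by
    refine dense_iInter_of_isOpen (fun k => ?_) fun k => ?_
    · exact isOpen_ne_fun (L k).continuous_of_finiteDimensional continuous_const
    · have : {x | L k x ≠ 0} = (LinearMap.ker (L k) : Set (ι → ℝ))ᶜ := by
        ext x
        simp
      rw [this]
      refine interior_eq_empty_iff_dense_compl.1 ?_
      by_contra h
      have := (LinearMap.ker (L k)).eq_top_of_nonempty_interior' (Set.nonempty_iff_ne_empty.2 h)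
      exact hL k (LinearMap.ker_eq_top.1 this)
  obtain ⟨x, hx, hxU⟩ := hdense.inter_nhds_nonempty hU
  exact ⟨x, hxU, by simpa using hx⟩

/-- A linear program over a bounded polyhedron has an optimal vertex. -/
theorem exists_minimizer_isFree {φ : (ι → ℝ) →ₗ[ℝ] V} (hφ : ∀ c, φ c = 0 → ∑ e, c e = 0)
    (w : ι → ℝ) {a : ι → ℝ} (ha : ∀ e, 0 ≤ a e) :
    ∃ b : ι → ℝ, (∀ e, 0 ≤ b e) ∧ φ b = φ a ∧
      (∀ b' : ι → ℝ, (∀ e, 0 ≤ b' e) → φ b' = φ a → w ⬝ᵥ b ≤ w ⬝ᵥ b') ∧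
      IsFree φ (Finset.univ.filter fun e => b e ≠ 0) := by
  let S : Set (ι → ℝ) := {b | (∀ e, 0 ≤ b e) ∧ φ b = φ a}
  have hS : IsCompact S := by
    have hclosed : IsClosed S := by
      have h1 : IsClosed {b : ι → ℝ | ∀ e, 0 ≤ b e} := by
        simp only [Set.ofPred_forall]
        exact isClosed_iInter fun e => isClosed_le continuous_const (continuous_apply e)
      have h2 : IsClosed {b : ι → ℝ | φ b = φ a} := by
        have : {b : ι → ℝ | φ b = φ a} = (fun b => b - a) ⁻¹' (LinearMap.ker φ : Set (ι → ℝ)) := by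
          ext b
          simp [sub_eq_zero]
        rw [this]
        exact (Submodule.closed_of_finiteDimensional _).preimage (continuous_sub_right a)
      exact h1.inter h2
    refine (isCompact_Icc (a := 0) (b := fun _ => ∑ e, a e)).of_isClosed_subset hclosed ?_
    rintro b ⟨hb, hba⟩
    refine ⟨hb, fun e => ?_⟩
    have hsum : ∑ e, b e = ∑ e, a e := by
      have := hφ (b - a) (by simp [hba])
      simpa [sub_eq_zero] using this
    show b e ≤ ∑ e, a e
    rw [← hsum]
    exact Finset.single_le_sum (fun e _ => hb e) (Finset.mem_univ e)
  have hcont : Continuous fun b : ι → ℝ => w ⬝ᵥ b := by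
    unfold dotProduct
    fun_prop
  obtain ⟨b₀, hb₀, hmin₀⟩ := hS.exists_isMinOn ⟨a, ha, rfl⟩ hcont.continuousOn
  let M : Set (ι → ℝ) := {b | b ∈ S ∧ ∀ b' ∈ S, w ⬝ᵥ b ≤ w ⬝ᵥ b'}
  have hM : M.Nonempty := ⟨b₀, hb₀, fun b' hb' => hmin₀ hb'⟩
  obtain ⟨b, ⟨⟨hb, hba⟩, hmin⟩, hcard⟩ :=
    (measure fun b : ι → ℝ => (Finset.univ.filter fun e => b e ≠ 0).card).wf.has_min M hM
  refine ⟨b, hb, hba, fun b' hb' hb'a => hmin b' ⟨hb', hb'a⟩, fun c hc hφc => ?_⟩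
  by_contra hc0
  have hcb : ∀ e, b e = 0 → c e = 0 := fun e he => hc e (by simp [he])
  have hsumc := hφ c hφc
  have hneg : ∃ e, c e < 0 := by
    by_contra! hnn
    exact hc0 (funext fun e =>
      (Finset.sum_eq_zero_iff_of_nonneg fun e _ => hnn e).1 hsumc e (Finset.mem_univ e))
  have hpos : ∃ e, (-c) e < 0 := by
    by_contra! hnn
    refine hc0 (funext fun e => neg_eq_zero.1
      ((Finset.sum_eq_zero_iff_of_nonneg fun e _ => hnn e).1 ?_ e (Finset.mem_univ e)))
    simp [hsumc]
  obtain ⟨s, hs, hbs, e₀, he₀, hbe₀⟩ := exists_pos_smul_add_vanishing hb hcb hneg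
  obtain ⟨s', hs', hbs', -⟩ :=
    exists_pos_smul_add_vanishing (c := -c) hb (fun e he => by simp [hcb e he]) hpos
  have h1 := hmin (b + s • c) ⟨hbs, by simp [hφc, hba]⟩
  have h2 := hmin (b + s' • -c) ⟨hbs', by simp [hφc, hba]⟩
  simp only [dotProduct_add, dotProduct_smul, dotProduct_neg, smul_eq_mul] at h1 h2
  have hwc : w ⬝ᵥ c = 0 := by
    apply le_antisymm
    · by_contra! h
      nlinarith [mul_pos hs' h]
    · by_contra! h
      nlinarith [mul_neg_of_pos_of_neg hs h]
  refine hcard (b + s • c) ⟨⟨hbs, by simp [hφc, hba]⟩, fun b' hb' => ?_⟩ ?_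
  · simpa [dotProduct_add, hwc] using hmin b' hb'
  · refine Finset.card_lt_card (Finset.ssubset_iff_of_subset (fun e => ?_) |>.2 ⟨e₀, ?_, ?_⟩)
    · simp only [Finset.mem_filter, Finset.mem_univ, true_and]
      intro he hbe
      exact he (by simp [hbe, hcb e hbe])
    · simpa using he₀
    · simpa using hbe₀

variable [DecidableEq ι]

theorem IsFree.exists_isBase_superset {φ : (ι → ℝ) →ₗ[ℝ] V} {σ : Finset ι} (h : IsFree φ σ) :
    ∃ τ, σ ⊆ τ ∧ IsBase φ τ := by
  obtain ⟨τ, ⟨hστ, hτ⟩, hmax⟩ :=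
    (Set.toFinite {τ : Finset ι | σ ⊆ τ ∧ IsFree φ τ}).exists_maximal ⟨σ, subset_rfl, h⟩
  refine ⟨τ, hστ, hτ, ?_⟩
  let S : Submodule ℝ (ι → ℝ) :=
    { carrier := {b | ∀ e ∉ τ, b e = 0}
      add_mem' := fun ha hb e he => by simp [ha e he, hb e he]
      zero_mem' := fun e _ => rfl
      smul_mem' := fun r a ha e he => by simp [ha e he] }
  have hsingle : ∀ f : ι, Pi.single f (1 : ℝ) ∈ (S.map φ).comap φ := by
    intro f
    by_cases hf : f ∈ τ
    · exact ⟨_, fun _ he => Pi.single_eq_of_ne (ne_of_mem_of_not_mem hf he).symm _, rfl⟩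
    have hdep : ¬ IsFree φ (insert f τ) := fun hfree =>
      hf (hmax ⟨hστ.trans (Finset.subset_insert f τ), hfree⟩ (Finset.subset_insert f τ)
        (Finset.mem_insert_self f τ))
    simp only [IsFree, not_forall] at hdep
    obtain ⟨c, hc, hφc, hc0⟩ := hdep
    have hcf : c f ≠ 0 := by
      intro hcf
      refine hc0 (hτ c (fun e he => ?_) hφc)
      by_cases hef : e = f
      · rw [hef, hcf]
      · exact hc e (by simp [hef, he])
    refine ⟨Pi.single f 1 - (c f)⁻¹ • c, fun e he => ?_, by simp [hφc]⟩
    by_cases hef : e = f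
    · subst hef
      simp [hcf]
    · simp [hef, hc e (by simp [hef, he])]
  intro a
  have ha : a ∈ (S.map φ).comap φ := by
    rw [pi_eq_sum_univ' a]
    refine Submodule.sum_mem _ fun f _ => Submodule.smul_mem _ _ ?_
    convert hsingle f using 1
  obtain ⟨b, hb, hφb⟩ := ha
  exact ⟨b, hb, hφb⟩

/-- The base `τ` is optimal for the cost vector `w`: all reduced costs outside `τ` are positive. -/
def IsOptimalBase (φ : (ι → ℝ) →ₗ[ℝ] V) (w : ι → ℝ) (τ : Finset ι) : Prop :=
  IsBase φ τ ∧ ∀ f ∉ τ, w ⬝ᵥ baseProj φ τ (Pi.single f 1) < w f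

theorem IsOptimalBase.cost_sub {φ : (ι → ℝ) →ₗ[ℝ] V} {w : ι → ℝ} {τ : Finset ι}
    (a : ι → ℝ) :
    w ⬝ᵥ a - w ⬝ᵥ baseProj φ τ a =
      ∑ f, a f * (w f - w ⬝ᵥ baseProj φ τ (Pi.single f 1)) := by
  have ha : a = ∑ f, a f • Pi.single f (1 : ℝ) := by
    ext e
    simp [Finset.sum_apply, Pi.single_apply]
  conv_lhs => rw [ha]
  simp only [map_sum, map_smul, dotProduct_sum, dotProduct_smul, smul_eq_mul, mul_sub,
    Finset.sum_sub_distrib, dotProduct_single_one]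

namespace IsOptimalBase

variable {φ : (ι → ℝ) →ₗ[ℝ] V} {w : ι → ℝ} {τ : Finset ι}

theorem cost_term_nonneg (h : IsOptimalBase φ w τ) {a : ι → ℝ} (ha : ∀ e, 0 ≤ a e) (f : ι) :
    0 ≤ a f * (w f - w ⬝ᵥ baseProj φ τ (Pi.single f 1)) := by
  by_cases hf : f ∈ τ
  · simp [h.1.baseProj_single hf]
  · exact mul_nonneg (ha f) (sub_nonneg.2 (h.2 f hf).le)

theorem cost_le (h : IsOptimalBase φ w τ) {a : ι → ℝ} (ha : ∀ e, 0 ≤ a e) :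
    w ⬝ᵥ baseProj φ τ a ≤ w ⬝ᵥ a := by
  rw [← sub_nonneg, cost_sub]
  exact Finset.sum_nonneg fun f _ => h.cost_term_nonneg ha f

theorem eq_zero_of_cost_le (h : IsOptimalBase φ w τ) {a : ι → ℝ} (ha : ∀ e, 0 ≤ a e)
    (hle : w ⬝ᵥ a ≤ w ⬝ᵥ baseProj φ τ a) {f : ι} (hf : f ∉ τ) : a f = 0 := by
  have hsum : ∑ f, a f * (w f - w ⬝ᵥ baseProj φ τ (Pi.single f 1)) = 0 := by
    rw [← cost_sub]
    linarith [h.cost_le ha]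
  have := (Finset.sum_eq_zero_iff_of_nonneg fun f _ => h.cost_term_nonneg ha f).1 hsum f
    (Finset.mem_univ f)
  exact (mul_eq_zero.1 this).resolve_right (sub_pos.2 (h.2 f hf)).ne'

theorem subset_of_pos {τ' : Finset ι} (h : IsOptimalBase φ w τ) (h' : IsOptimalBase φ w τ')
    {a : ι → ℝ} (ha : ∀ e ∈ τ, 0 < baseProj φ τ a e) (ha' : ∀ e ∈ τ', 0 < baseProj φ τ' a e) :
    τ ⊆ τ' := by
  have nonneg : ∀ {σ : Finset ι}, IsBase φ σ → (∀ e ∈ σ, 0 < baseProj φ σ a e) →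
      ∀ e, 0 ≤ baseProj φ σ a e := by
    intro σ hσ hpos e
    by_cases he : e ∈ σ
    · exact (hpos e he).le
    · rw [hσ.baseProj_apply_of_notMem a he]
  have hle := h.cost_le (nonneg h'.1 ha')
  rw [h.1.baseProj_congr (h'.1.map_baseProj a)] at hle
  intro e he
  by_contra hne
  refine (ha e he).ne' (h'.eq_zero_of_cost_le (nonneg h.1 ha) ?_ hne)
  rwa [h'.1.baseProj_congr (h.1.map_baseProj a)]

theorem eq_of_pos {τ' : Finset ι} (h : IsOptimalBase φ w τ) (h' : IsOptimalBase φ w τ')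
    {a : ι → ℝ} (ha : ∀ e ∈ τ, 0 < baseProj φ τ a e) (ha' : ∀ e ∈ τ', 0 < baseProj φ τ' a e) :
    τ = τ' :=
  (h.subset_of_pos h' ha ha').antisymm (h'.subset_of_pos h ha' ha)

end IsOptimalBase

/-- For generic data, an optimal base exists in which the given point is strictly positive. -/
theorem exists_isOptimalBase_pos {φ : (ι → ℝ) →ₗ[ℝ] V} (hφ : ∀ c, φ c = 0 → ∑ e, c e = 0)
    {w : ι → ℝ}
    (hw : ∀ σ, IsBase φ σ → ∀ f ∉ σ, w ⬝ᵥ baseProj φ σ (Pi.single f 1) ≠ w f)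
    {a : ι → ℝ} (ha : ∀ e, 0 ≤ a e) (hgen : ∀ σ, IsBase φ σ → ∀ e ∈ σ, baseProj φ σ a e ≠ 0) :
    ∃ τ, IsOptimalBase φ w τ ∧ ∀ e ∈ τ, 0 < baseProj φ τ a e := by
  obtain ⟨b, hb, hba, hmin, hfree⟩ := exists_minimizer_isFree hφ w ha
  obtain ⟨τ, hsub, hτ⟩ := hfree.exists_isBase_superset
  have hsupp : ∀ e ∉ τ, b e = 0 := fun e he => by
    by_contra h
    exact he (hsub (by simpa using h))
  have hproj : baseProj φ τ a = b := hτ.baseProj_eq hsupp hba.symm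
  have hpos : ∀ e ∈ τ, 0 < b e := fun e he =>
    (hb e).lt_of_ne' (hproj ▸ hgen τ hτ e he)
  refine ⟨τ, ⟨hτ, fun f hf => (hw τ hτ f hf).lt_of_le ?_⟩, by rwa [hproj]⟩
  let c : ι → ℝ := Pi.single f 1 - baseProj φ τ (Pi.single f 1)
  have hφc : φ c = 0 := by simp [c, hτ.map_baseProj]
  suffices 0 ≤ w ⬝ᵥ c by simpa [c, dotProduct_sub] using this
  have hsmall : ∀ᶠ s in nhdsWithin (0 : ℝ) (Set.Ioi 0), ∀ e, 0 ≤ b e + s * c e := by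
    rw [Filter.eventually_all]
    intro e
    by_cases he : e ∈ τ
    · have hlim : Filter.Tendsto (fun s : ℝ => b e + s * c e) (nhds 0) (nhds (b e)) :=
        Continuous.tendsto' (by fun_prop) _ _ (by simp)
      exact ((hlim.eventually (lt_mem_nhds (hpos e he))).filter_mono nhdsWithin_le_nhds).mono
        fun _ h => h.le
    · filter_upwards [self_mem_nhdsWithin] with s hs
      have hce : 0 ≤ c e := by
        simp only [c, Pi.sub_apply, hτ.baseProj_apply_of_notMem _ he, sub_zero, Pi.single_apply]
        split_ifs <;> norm_num
      exact add_nonneg (hb e) (mul_nonneg (le_of_lt hs) hce)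
  obtain ⟨s, hs, hs0⟩ := (hsmall.and self_mem_nhdsWithin).exists
  have h := hmin (b + s • c) hs (by simp [hφc, hba])
  simp only [dotProduct_add, dotProduct_smul, smul_eq_mul] at h
  exact nonneg_of_mul_nonneg_right (by linarith) hs0

/-- Integer part of `x`, rounding integers down by one when the perturbation `y` is not positive. -/
noncomputable def perturbedFloor (x y : ℝ) : ℤ := if 0 < y then ⌊x⌋ else ⌈x⌉ - 1

theorem perturbedFloor_add_natCast (x y : ℝ) (n : ℕ) :
    perturbedFloor (x + n) y = perturbedFloor x y + n := by
  unfold perturbedFloor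
  split_ifs
  · simp
  · simp
    ring

theorem nonneg_of_perturbedFloor_nonneg {x y : ℝ} (h : 0 ≤ perturbedFloor x y) : 0 ≤ x := by
  unfold perturbedFloor at h
  split_ifs at h
  · exact Int.floor_nonneg.1 h
  · exact (Int.ceil_pos.1 (by omega)).le

theorem eventually_pos_iff_perturbedFloor_nonneg (x : ℝ) {y : ℝ} (hy : y ≠ 0) :
    ∀ᶠ ε in nhdsWithin (0 : ℝ) (Set.Ioi 0),
      x + ε * y ≠ 0 ∧ (0 < x + ε * y ↔ 0 ≤ perturbedFloor x y) := by
  have hlim : Filter.Tendsto (fun ε : ℝ => x + ε * y) (nhdsWithin 0 (Set.Ioi 0)) (nhds x) :=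
    (Continuous.tendsto' (by fun_prop) _ _ (by simp)).mono_left nhdsWithin_le_nhds
  have hfl : 0 ≤ perturbedFloor x y ↔ 0 < x ∨ (x = 0 ∧ 0 < y) := by
    unfold perturbedFloor
    split_ifs with h
    · rw [Int.floor_nonneg, le_iff_lt_or_eq]
      simp [h, eq_comm]
    · have : 0 ≤ ⌈x⌉ - 1 ↔ 0 < ⌈x⌉ := by omega
      rw [this, Int.ceil_pos]
      simp [h]
  rw [hfl]
  rcases lt_trichotomy x 0 with hx | rfl | hx
  · filter_upwards [hlim.eventually (gt_mem_nhds hx)] with ε hε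
    exact ⟨hε.ne, by simp [hε.not_gt, hx.not_gt, hx.ne]⟩
  · filter_upwards [self_mem_nhdsWithin] with ε hε
    have hε : (0 : ℝ) < ε := hε
    exact ⟨by simp [hε.ne', hy], by simp [hε]⟩
  · filter_upwards [hlim.eventually (lt_mem_nhds hx)] with ε hε
    exact ⟨hε.ne', by simp [hε, hx]⟩

/-- The half-open cones over the optimal bases partition the cone of nonnegative combinations. -/
theorem existsUnique_isOptimalBase {φ : (ι → ℝ) →ₗ[ℝ] V} (hφ : ∀ c, φ c = 0 → ∑ e, c e = 0)
    {w s : ι → ℝ}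
    (hw : ∀ σ, IsBase φ σ → ∀ f ∉ σ, w ⬝ᵥ baseProj φ σ (Pi.single f 1) ≠ w f)
    (hs0 : ∀ e, 0 ≤ s e) (hs : ∀ σ, IsBase φ σ → ∀ e ∈ σ, baseProj φ σ s e ≠ 0)
    {a : ι → ℝ} (ha : ∀ e, 0 ≤ a e) :
    ∃! τ, IsOptimalBase φ w τ ∧
      ∀ e ∈ τ, 0 ≤ perturbedFloor (baseProj φ τ a e) (baseProj φ τ s e) := by
  have hev : ∀ᶠ ε in nhdsWithin (0 : ℝ) (Set.Ioi 0), ∀ σ : Finset ι, ∀ e, IsBase φ σ → e ∈ σ →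
      baseProj φ σ (a + ε • s) e ≠ 0 ∧ (0 < baseProj φ σ (a + ε • s) e ↔
        0 ≤ perturbedFloor (baseProj φ σ a e) (baseProj φ σ s e)) := by
    simp only [Filter.eventually_all]
    intro σ e hσ he
    simpa using eventually_pos_iff_perturbedFloor_nonneg (baseProj φ σ a e) (hs σ hσ e he)
  obtain ⟨ε, hε, hε0⟩ := (hev.and self_mem_nhdsWithin).exists
  have hε0 : (0 : ℝ) < ε := hε0
  obtain ⟨τ, hτ, hpos⟩ := exists_isOptimalBase_pos hφ hw (a := a + ε • s)
    (fun e => add_nonneg (ha e) (mul_nonneg hε0.le (hs0 e))) fun σ hσ e he => (hε σ e hσ he).1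
  refine ⟨τ, ⟨hτ, fun e he => (hε τ e hτ.1 he).2.1 (hpos e he)⟩, ?_⟩
  rintro τ' ⟨hτ', hpos'⟩
  exact hτ'.eq_of_pos hτ (fun e he => (hε τ' e hτ'.1 he).2.2 (hpos' e he)) hpos

end LinearProgramming

section HalfOpenDecomposition

open Matrix

variable {ι κ V : Type*} [AddCommGroup V] [Module ℝ V]

theorem IsBase.card_eq_finrank {φ : (ι → ℝ) →ₗ[ℝ] V} {τ : Finset ι} (h : IsBase φ τ) :
    τ.card = Module.finrank ℝ (LinearMap.range φ) := by
  classical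
  let ext : (τ → ℝ) →ₗ[ℝ] (ι → ℝ) :=
    LinearMap.pi fun e => if he : e ∈ τ then LinearMap.proj ⟨e, he⟩ else 0
  have hext : ∀ a, ∀ e ∉ τ, ext a e = 0 := fun a e he => by simp [ext, he]
  have hinj : Function.Injective (φ ∘ₗ ext) := by
    rw [injective_iff_map_eq_zero]
    intro a ha
    have := h.1 (ext a) (hext a) ha
    ext ⟨e, he⟩
    simpa [ext, he] using congrFun this e
  have hrange : LinearMap.range (φ ∘ₗ ext) = LinearMap.range φ := by
    refine le_antisymm (LinearMap.range_comp_le_range _ _) ?_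
    rintro _ ⟨a, rfl⟩
    refine ⟨fun e => baseProj φ τ a e, ?_⟩
    rw [← h.map_baseProj a, LinearMap.comp_apply]
    congr 1
    ext e
    by_cases he : e ∈ τ
    · simp [ext, he]
    · simp [ext, he, h.baseProj_apply_of_notMem]
  rw [← hrange, LinearMap.finrank_range_of_inj hinj]
  simp

theorem card_finsuppAntidiag_eq_coeff [DecidableEq ι] (τ : Finset ι) (j : ℕ) :
    ((τ.finsuppAntidiag j).card : ℤ) =
      PowerSeries.coeff j ((PowerSeries.mk 1 : PowerSeries ℤ) ^ τ.card) := by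
  rw [← Finset.prod_const, PowerSeries.coeff_prod]
  simp

variable [Fintype ι]

/-- The linear map sending a coefficient vector to the combination of the integer vectors `ρ e`. -/
noncomputable def realCombination (ρ : ι → κ → ℤ) : (ι → ℝ) →ₗ[ℝ] (κ → ℝ) :=
  Fintype.linearCombination ℝ fun e i => (ρ e i : ℝ)

theorem realCombination_apply (ρ : ι → κ → ℤ) (a : ι → ℝ) (i : κ) :
    realCombination ρ a i = ∑ e, a e * ρ e i := by
  simp [realCombination, Fintype.linearCombination_apply]

/-- The lattice points in the `t`-th dilate of the convex hull of the vectors `ρ e`. -/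
def dilateLatticePoints (ρ : ι → κ → ℤ) (t : ℕ) : Set (κ → ℤ) :=
  {z | ∃ a : ι → ℝ, (∀ e, 0 ≤ a e) ∧ (realCombination ρ a = fun i => (z i : ℝ)) ∧ ∑ e, a e = t}

theorem dilateLatticePoints_finite [Fintype κ] (ρ : ι → κ → ℤ) (t : ℕ) :
    (dilateLatticePoints ρ t).Finite := by
  classical
  refine (Set.finite_Icc (fun i => -∑ e, t * |ρ e i|) (fun i => ∑ e, t * |ρ e i|)).subset ?_
  rintro z ⟨a, ha, hz, hsum⟩
  have key : ∀ i, |z i| ≤ ∑ e, t * |ρ e i| := by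
    intro i
    have hzi : (z i : ℝ) = ∑ e, a e * ρ e i := by
      rw [← realCombination_apply, hz]
    have : |(z i : ℝ)| ≤ ∑ e, t * |(ρ e i : ℝ)| := by
      rw [hzi]
      refine (Finset.abs_sum_le_sum_abs _ _).trans (Finset.sum_le_sum fun e _ => ?_)
      rw [abs_mul, abs_of_nonneg (ha e), ← hsum]
      gcongr
      exact Finset.single_le_sum (fun e _ => ha e) (Finset.mem_univ e)
    exact_mod_cast this
  exact ⟨fun i => (abs_le.1 (key i)).1, fun i => (abs_le.1 (key i)).2⟩

variable [DecidableEq ι]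

theorem exists_generic_perturbation (φ : (ι → ℝ) →ₗ[ℝ] V) :
    ∃ s : ι → ℝ, (∀ e, 0 ≤ s e) ∧ ∀ σ, IsBase φ σ → ∀ e ∈ σ, baseProj φ σ s e ≠ 0 := by
  let κ := {p : Finset ι × ι // IsBase φ p.1 ∧ p.2 ∈ p.1}
  have hU : {s : ι → ℝ | ∀ e, 0 < s e} ∈ nhds (1 : ι → ℝ) := by
    refine IsOpen.mem_nhds ?_ fun e => one_pos
    simp only [Set.ofPred_forall]
    exact isOpen_iInter_of_finite fun e => isOpen_lt continuous_const (continuous_apply e)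
  let L : κ → (ι → ℝ) →ₗ[ℝ] ℝ := fun k => LinearMap.proj k.1.2 ∘ₗ baseProj φ k.1.1
  have hL : ∀ k, L k ≠ 0 := fun k hk => by
    have := LinearMap.congr_fun hk (Pi.single k.1.2 1)
    simp [L, k.2.1.baseProj_single k.2.2] at this
  obtain ⟨s, hs, hne⟩ := exists_mem_nhds_forall_linearForm_ne_zero L hL hU
  exact ⟨s, fun e => (hs e).le, fun σ hσ e he => hne ⟨(σ, e), hσ, he⟩⟩

/-- There is a generic cost vector for which the representation `x` is cheapest. -/
theorem exists_generic_cost {φ : (ι → ℝ) →ₗ[ℝ] V} {C : Finset ι} (hC : IsFree φ C) {x : ι → ℝ}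
    (hx : ∀ e ∉ C, x e = 0) :
    ∃ w : ι → ℝ,
      (∀ σ, IsBase φ σ → ∀ f ∉ σ, w ⬝ᵥ baseProj φ σ (Pi.single f 1) ≠ w f) ∧
      ∀ σ, IsBase φ σ → (∀ e, 0 ≤ baseProj φ σ x e) → baseProj φ σ x ≠ x →
        w ⬝ᵥ x < w ⬝ᵥ baseProj φ σ x := by
  let κ := {p : Finset ι × ι // IsBase φ p.1 ∧ p.2 ∉ p.1}
  let w₀ : ι → ℝ := fun e => if e ∈ C then 0 else 1
  have hcont : ∀ y : ι → ℝ, Continuous fun w : ι → ℝ => w ⬝ᵥ y := fun y => by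
    unfold dotProduct
    fun_prop
  have hU : {w : ι → ℝ | ∀ σ, IsBase φ σ → (∀ e, 0 ≤ baseProj φ σ x e) → baseProj φ σ x ≠ x →
      w ⬝ᵥ x < w ⬝ᵥ baseProj φ σ x} ∈ nhds w₀ := by
    simp only [← Filter.eventually_iff, Filter.eventually_all]
    intro σ hσ hnn hne
    refine (isOpen_lt (hcont _) (hcont _)).mem_nhds ?_
    have h0 : w₀ ⬝ᵥ x = 0 := Finset.sum_eq_zero fun e _ => by
      by_cases he : e ∈ C
      · simp [w₀, he]
      · simp [hx e he]
    have hterm : ∀ e, 0 ≤ w₀ e * baseProj φ σ x e := fun e =>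
      mul_nonneg (by simp only [w₀]; split_ifs <;> norm_num) (hnn e)
    show w₀ ⬝ᵥ x < w₀ ⬝ᵥ baseProj φ σ x
    rw [h0]
    refine (Finset.sum_nonneg fun e _ => hterm e).lt_of_ne' fun hzero => hne ?_
    refine hC.eq (fun e he => ?_) hx (hσ.map_baseProj x)
    simpa [w₀, he] using
      (Finset.sum_eq_zero_iff_of_nonneg fun e _ => hterm e).1 hzero e (Finset.mem_univ e)
  let u : κ → ι → ℝ := fun k => baseProj φ k.1.1 (Pi.single k.1.2 1) - Pi.single k.1.2 1
  let L : κ → (ι → ℝ) →ₗ[ℝ] ℝ := fun k => ∑ e, u k e • LinearMap.proj e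
  have hLw : ∀ k w, L k w = w ⬝ᵥ u k := fun k w => by
    simp [L, dotProduct, mul_comm]
  have hL : ∀ k, L k ≠ 0 := fun k hk => by
    have := LinearMap.congr_fun hk (Pi.single k.1.2 1)
    simp [hLw, u, k.2.1.baseProj_apply_of_notMem _ k.2.2] at this
  obtain ⟨w, hw, hne⟩ := exists_mem_nhds_forall_linearForm_ne_zero L hL hU
  refine ⟨w, fun σ hσ f hf heq => hne ⟨(σ, f), hσ, hf⟩ ?_, hw⟩
  simp [hLw, u, dotProduct_sub, heq]

/-- The lattice points of height `k` in the half-open parallelepiped over the base `τ`. -/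
def halfOpenBox (ρ : ι → κ → ℤ) (s : ι → ℝ) (τ : Finset ι) (k : ℕ) : Set (κ → ℤ) :=
  {z | ∃ a : ι → ℝ, (∀ e ∉ τ, a e = 0) ∧ (realCombination ρ a = fun i => (z i : ℝ)) ∧
    ∑ e, a e = k ∧ ∀ e ∈ τ, perturbedFloor (a e) (baseProj (realCombination ρ) τ s e) = 0}

theorem halfOpenBox_subset (ρ : ι → κ → ℤ) (s : ι → ℝ) (τ : Finset ι) (k : ℕ) :
    halfOpenBox ρ s τ k ⊆ dilateLatticePoints ρ k := by
  rintro z ⟨a, hsupp, hz, hsum, hfl⟩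
  refine ⟨a, fun e => ?_, hz, hsum⟩
  by_cases he : e ∈ τ
  · exact nonneg_of_perturbedFloor_nonneg (hfl e he).ge
  · rw [hsupp e he]

theorem halfOpenBox_eq_empty (ρ : ι → κ → ℤ) (s : ι → ℝ) (τ : Finset ι) {k : ℕ}
    (hk : Fintype.card ι < k) : halfOpenBox ρ s τ k = ∅ := by
  refine Set.eq_empty_of_forall_notMem ?_
  rintro z ⟨a, hsupp, -, hsum, hfl⟩
  have hle : ∀ e, a e ≤ 1 := by
    intro e
    by_cases he : e ∈ τ
    · have := hfl e he
      unfold perturbedFloor at this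
      split_ifs at this
      · exact (Int.floor_eq_zero_iff.1 this).2.le
      · exact_mod_cast Int.ceil_le.1 (show ⌈a e⌉ ≤ 1 by omega)
    · rw [hsupp e he]
      exact zero_le_one
  have : (k : ℝ) ≤ Fintype.card ι := by
    rw [← hsum]
    simpa using Finset.sum_le_sum fun e (_ : e ∈ Finset.univ) => hle e
  exact absurd (Nat.cast_le.1 this) (not_le.2 hk)

/-- Every lattice point of the cone is, in a unique way, a lattice point of the half-open
parallelepiped over an optimal base plus a nonnegative integer combination of that base. -/
theorem card_dilateLatticePoints [Fintype κ] {ρ : ι → κ → ℤ}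
    (hρ : ∀ c, realCombination ρ c = 0 → ∑ e, c e = 0) {w s : ι → ℝ}
    (hw : ∀ σ, IsBase (realCombination ρ) σ →
      ∀ f ∉ σ, w ⬝ᵥ baseProj (realCombination ρ) σ (Pi.single f 1) ≠ w f)
    (hs0 : ∀ e, 0 ≤ s e)
    (hs : ∀ σ, IsBase (realCombination ρ) σ → ∀ e ∈ σ, baseProj (realCombination ρ) σ s e ≠ 0)
    [Fintype {τ // IsOptimalBase (realCombination ρ) w τ}] (t : ℕ) :
    Nat.card (dilateLatticePoints ρ t) =
      ∑ τ : {τ // IsOptimalBase (realCombination ρ) w τ},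
        ∑ p ∈ Finset.HasAntidiagonal.antidiagonal t,
          Nat.card (halfOpenBox ρ s τ p.1) * (τ.1.finsuppAntidiag p.2).card := by
  have hfin : ∀ (τ : Finset ι) k, Finite (halfOpenBox ρ s τ k) := fun τ k =>
    ((dilateLatticePoints_finite ρ k).subset (halfOpenBox_subset ρ s τ k)).to_subtype
  let D := Σ τ : {τ // IsOptimalBase (realCombination ρ) w τ},
    Σ p : Finset.HasAntidiagonal.antidiagonal t,
      halfOpenBox ρ s τ p.1.1 × τ.1.finsuppAntidiag p.1.2
  have hcard : Nat.card D = ∑ τ : {τ // IsOptimalBase (realCombination ρ) w τ},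
      ∑ p ∈ Finset.HasAntidiagonal.antidiagonal t,
        Nat.card (halfOpenBox ρ s τ p.1) * (τ.1.finsuppAntidiag p.2).card := by
    simp only [D, Nat.card_sigma, Nat.card_prod]
    refine Finset.sum_congr rfl fun τ _ => ?_
    rw [← Finset.sum_coe_sort (Finset.HasAntidiagonal.antidiagonal t)]
    exact Finset.sum_congr rfl fun p _ => by
      rw [Nat.card_eq_fintype_card (α := τ.1.finsuppAntidiag p.1.2), Fintype.card_coe]
  rw [← hcard]
  -- The coefficient vector of the point encoded by a box point and an integer vector.
  have hcoef : ∀ (τ : Finset ι) (k j : ℕ) (z : κ → ℤ) (n : ι →₀ ℕ), IsBase (realCombination ρ) τ →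
      z ∈ halfOpenBox ρ s τ k → n ∈ τ.finsuppAntidiag j → ∃ a : ι → ℝ, (∀ e, 0 ≤ a e) ∧
        (realCombination ρ a = fun i => ((z i + ∑ e, n e * ρ e i : ℤ) : ℝ)) ∧
        ∑ e, a e = (k + j : ℕ) ∧ baseProj (realCombination ρ) τ a = a ∧
        ∀ e ∈ τ, perturbedFloor (a e) (baseProj (realCombination ρ) τ s e) = n e := by
    rintro τ k j z n hτ ⟨a, hsupp, hz, hsum, hfl⟩ hn
    rw [Finset.mem_finsuppAntidiag] at hn
    have hn0 : ∀ e ∉ τ, n e = 0 := fun e he => by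
      by_contra h
      exact he (hn.2 (Finsupp.mem_support_iff.2 h))
    have hfl' : ∀ e ∈ τ,
        perturbedFloor (a e + n e) (baseProj (realCombination ρ) τ s e) = n e := fun e he => by
      rw [perturbedFloor_add_natCast, hfl e he, zero_add]
    refine ⟨fun e => a e + n e, fun e => ?_, ?_, ?_, ?_, hfl'⟩
    · by_cases he : e ∈ τ
      · exact nonneg_of_perturbedFloor_nonneg ((hfl' e he).symm ▸ Int.natCast_nonneg _)
      · simp [hsupp e he]
    · ext i
      have := congrFun hz i
      rw [realCombination_apply] at this
      rw [realCombination_apply]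
      push_cast
      simp only [add_mul, Finset.sum_add_distrib, this]
    · have : ∑ e, n e = j := by
        rw [← hn.1]
        exact (Finset.sum_subset (Finset.subset_univ τ) fun e _ he => hn0 e he).symm
      rw [Finset.sum_add_distrib, hsum, ← this]
      push_cast
      rfl
    · exact hτ.baseProj_self fun e he => by simp [hsupp e he, hn0 e he]
  let F : D → dilateLatticePoints ρ t := fun d =>
    ⟨fun i => d.2.2.1.1 i + ∑ e, d.2.2.2.1 e * ρ e i, by
      obtain ⟨a, ha, hφa, hsum, -⟩ := hcoef d.1 _ _ _ _ d.1.2.1 d.2.2.1.2 d.2.2.2.2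
      refine ⟨a, ha, hφa, ?_⟩
      rw [hsum, Finset.HasAntidiagonal.mem_antidiagonal.1 d.2.1.2]⟩
  symm
  refine Nat.card_eq_of_bijective F ⟨?_, ?_⟩
  · rintro ⟨⟨τ, hτ⟩, ⟨⟨k, j⟩, hp⟩, ⟨z, hz⟩, n, hn⟩
      ⟨⟨τ', hτ'⟩, ⟨⟨k', j'⟩, hp'⟩, ⟨z', hz'⟩, n', hn'⟩ hF
    obtain ⟨a, ha, hφa, hsum, hproj, hfl⟩ := hcoef τ k j z n hτ.1 hz hn
    obtain ⟨a', ha', hφa', hsum', hproj', hfl'⟩ := hcoef τ' k' j' z' n' hτ'.1 hz' hn'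
    have hzz : ∀ i, z i + ∑ e, n e * ρ e i = z' i + ∑ e, n' e * ρ e i :=
      congrFun (congrArg Subtype.val hF)
    have haa : realCombination ρ a = (realCombination ρ) a' := by
      rw [hφa, hφa']
      ext i
      rw [hzz]
    obtain rfl : τ = τ' := by
      refine (existsUnique_isOptimalBase hρ hw hs0 hs ha).unique
        ⟨hτ, fun e he => ?_⟩ ⟨hτ', fun e he => ?_⟩
      · rw [hproj, hfl e he]
        exact Int.natCast_nonneg _
      · rw [hτ'.1.baseProj_congr haa, hproj', hfl' e he]
        exact Int.natCast_nonneg _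
    obtain rfl : a = a' := by rw [← hproj, ← hproj', hτ.1.baseProj_congr haa]
    rw [Finset.mem_finsuppAntidiag] at hn hn'
    obtain rfl : n = n' := by
      ext e
      by_cases he : e ∈ τ
      · exact_mod_cast (hfl e he).symm.trans (hfl' e he)
      · rw [Finsupp.notMem_support_iff.1 fun h => he (hn.2 h),
          Finsupp.notMem_support_iff.1 fun h => he (hn'.2 h)]
    obtain rfl : z = z' := funext fun i => add_right_cancel (hzz i)
    obtain rfl : j = j' := hn.1.symm.trans hn'.1
    obtain rfl : k = k' := by
      rw [Finset.HasAntidiagonal.mem_antidiagonal] at hp hp'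
      exact add_right_cancel (hp.trans hp'.symm)
    rfl
  · rintro ⟨z, a, ha, hz, hsum⟩
    obtain ⟨τ, ⟨hτ, hfl⟩, -⟩ := existsUnique_isOptimalBase hρ hw hs0 hs ha
    let b := baseProj (realCombination ρ) τ a
    let m : ι → ℕ := fun e =>
      if e ∈ τ then (perturbedFloor (b e) (baseProj (realCombination ρ) τ s e)).toNat else 0
    have hm : ∀ e ∈ τ,
        (m e : ℤ) = perturbedFloor (b e) (baseProj (realCombination ρ) τ s e) := fun e he => by
      simp only [m, if_pos he]
      exact Int.toNat_of_nonneg (hfl e he)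
    have hm0 : ∀ e ∉ τ, m e = 0 := fun e he => if_neg he
    let n : ι →₀ ℕ := Finsupp.equivFunOnFinite.symm m
    have hbsum : ∑ e, b e = t := by
      rw [← hsum, ← sub_eq_zero, ← Finset.sum_sub_distrib]
      exact hρ (b - a) (by rw [map_sub, sub_eq_zero]; exact hτ.1.map_baseProj a)
    have hfl0 : ∀ e ∈ τ,
        perturbedFloor (b e - m e) (baseProj (realCombination ρ) τ s e) = 0 := fun e he => by
      have := perturbedFloor_add_natCast (b e - m e) (baseProj (realCombination ρ) τ s e) (m e)
      rw [sub_add_cancel, ← hm e he] at this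
      omega
    have hnn : ∀ e, (m e : ℝ) ≤ b e := by
      intro e
      by_cases he : e ∈ τ
      · exact sub_nonneg.1 (nonneg_of_perturbedFloor_nonneg (hfl0 e he).ge)
      · rw [hm0 e he]
        simp [b, hτ.1.baseProj_apply_of_notMem a he]
    have hmt : ∑ e, m e ≤ t := by
      have : ((∑ e, m e : ℕ) : ℝ) ≤ t := by
        rw [← hbsum]
        push_cast
        exact Finset.sum_le_sum fun e _ => hnn e
      exact_mod_cast this
    have hbox : (fun i => z i - ∑ e, m e * ρ e i) ∈ halfOpenBox ρ s τ (t - ∑ e, m e) := by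
      refine ⟨fun e => b e - m e, fun e he => ?_, ?_, ?_, hfl0⟩
      · simp [b, hτ.1.baseProj_apply_of_notMem a he, hm0 e he]
      · ext i
        have h1 : realCombination ρ b i = z i := by rw [hτ.1.map_baseProj a, hz]
        rw [realCombination_apply] at h1
        rw [realCombination_apply]
        push_cast
        simp only [sub_mul, Finset.sum_sub_distrib, h1]
      · rw [Finset.sum_sub_distrib, hbsum, Nat.cast_sub hmt]
        push_cast
        rfl
    refine ⟨⟨⟨τ, hτ⟩, ⟨(t - ∑ e, m e, ∑ e, m e), ?_⟩, ⟨_, hbox⟩, n, ?_⟩, ?_⟩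
    · simp [hmt]
    · rw [Finset.mem_finsuppAntidiag]
      refine ⟨Finset.sum_subset (Finset.subset_univ τ) fun e _ he => hm0 e he, fun e he => ?_⟩
      by_contra h
      exact Finsupp.mem_support_iff.1 he (hm0 e h)
    · ext i
      simp [F, n]

/-- The `h*`-vector of a lattice polytope, read off from a half-open decomposition, together with
a box point whose height is known to occur. -/
theorem exists_hStar [Fintype κ] {ρ : ι → κ → ℤ}
    (hρ : ∀ c, realCombination ρ c = 0 → ∑ e, c e = 0) {C : Finset ι}
    (hC : IsFree (realCombination ρ) C) {z : κ → ℤ} {h : ℕ} (hCh : C.card = 2 * h)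
    (hz : ∀ i, ∑ e ∈ C, ρ e i = 2 * z i) :
    ∃ β : ℕ → ℕ, (∀ k, Fintype.card ι < k → β k = 0) ∧ β h ≠ 0 ∧
      ∀ t, (Nat.card (dilateLatticePoints ρ t) : ℤ) = ∑ p ∈ Finset.HasAntidiagonal.antidiagonal t,
        (β p.1 : ℤ) * PowerSeries.coeff p.2 ((PowerSeries.mk 1 : PowerSeries ℤ) ^
          Module.finrank ℝ (LinearMap.range (realCombination ρ))) := by
  classical
  let x : ι → ℝ := fun e => if e ∈ C then 1 / 2 else 0
  have hx : ∀ e ∉ C, x e = 0 := fun e he => if_neg he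
  have hx0 : ∀ e, 0 ≤ x e := fun e => by
    simp only [x]
    split_ifs <;> norm_num
  have hφx : realCombination ρ x = fun i => (z i : ℝ) := by
    ext i
    have : (∑ e ∈ C, (ρ e i : ℝ)) = 2 * z i := by exact_mod_cast hz i
    simp only [realCombination_apply, x, ite_mul, zero_mul, Finset.sum_ite_mem, Finset.univ_inter,
      ← Finset.mul_sum, this]
    ring
  have hsumx : ∑ e, x e = h := by
    simp [x, hCh]
    ring
  obtain ⟨s, hs0, hs⟩ := exists_generic_perturbation (realCombination ρ)
  obtain ⟨w, hw, hwx⟩ := exists_generic_cost hC hx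
  refine ⟨fun k => ∑ τ : {τ // IsOptimalBase (realCombination ρ) w τ},
    Nat.card (halfOpenBox ρ s τ k), fun k hk => ?_, ?_, fun t => ?_⟩
  · simp [halfOpenBox_eq_empty ρ s _ hk]
  · obtain ⟨τ, ⟨hτ, hfl⟩, -⟩ := existsUnique_isOptimalBase hρ hw hs0 hs hx0
    have hproj : baseProj (realCombination ρ) τ x = x := by
      by_contra hne
      refine (hwx τ hτ.1 (fun e => ?_) hne).not_ge (hτ.cost_le hx0)
      by_cases he : e ∈ τ
      · exact nonneg_of_perturbedFloor_nonneg (hfl e he)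
      · rw [hτ.1.baseProj_apply_of_notMem x he]
    rw [hproj] at hfl
    have hbox : z ∈ halfOpenBox ρ s τ h := by
      refine ⟨x, fun e he => ?_, hφx, hsumx, fun e he => (hfl e he).antisymm' ?_⟩
      · rw [← hproj, hτ.1.baseProj_apply_of_notMem x he]
      · have hx1 : x e ≤ 1 / 2 := by
          simp only [x]
          split_ifs <;> norm_num
        unfold perturbedFloor
        split_ifs
        · exact Int.lt_add_one_iff.1 (Int.floor_lt.2 (by push_cast; linarith))
        · have : ⌈x e⌉ ≤ 1 := Int.ceil_le.2 (by push_cast; linarith)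
          omega
    have hfin : Finite (halfOpenBox ρ s τ h) :=
      ((dilateLatticePoints_finite ρ h).subset (halfOpenBox_subset ρ s τ h)).to_subtype
    have hpos : 0 < Nat.card (halfOpenBox ρ s τ h) :=
      Nat.card_pos_iff.2 ⟨⟨⟨z, hbox⟩⟩, hfin⟩
    intro h0
    exact hpos.ne' (Finset.sum_eq_zero_iff.1 h0 ⟨τ, hτ⟩ (Finset.mem_univ _))
  · rw [card_dilateLatticePoints hρ hw hs0 hs t, Finset.sum_comm]
    push_cast
    refine Finset.sum_congr rfl fun p _ => ?_
    rw [Finset.sum_mul]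
    refine Finset.sum_congr rfl fun τ _ => ?_
    rw [card_finsuppAntidiag_eq_coeff, τ.2.1.card_eq_finrank]

end HalfOpenDecomposition

section EdgePolytope

theorem finrank_vectorSpan_add_one {E : Type*} [AddCommGroup E] [Module ℝ E]
    [FiniteDimensional ℝ E] {S : Set E} (hS : S.Nonempty) (l : E →ₗ[ℝ] ℝ) (hl : ∀ x ∈ S, l x = 1) :
    Module.finrank ℝ (vectorSpan ℝ S) + 1 = Module.finrank ℝ (Submodule.span ℝ S) := by
  obtain ⟨p, hp⟩ := hS
  have hker : vectorSpan ℝ S ≤ LinearMap.ker l := by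
    rw [vectorSpan_def, Submodule.span_le]
    rintro _ ⟨x, hx, y, hy, rfl⟩
    simp [hl x hx, hl y hy]
  have hsup : vectorSpan ℝ S ⊔ Submodule.span ℝ {p} = Submodule.span ℝ S := by
    apply le_antisymm
    · refine sup_le ?_ (Submodule.span_mono (Set.singleton_subset_iff.2 hp))
      rw [vectorSpan_def, Submodule.span_le]
      rintro _ ⟨x, hx, y, hy, rfl⟩
      exact Submodule.sub_mem _ (Submodule.subset_span hx) (Submodule.subset_span hy)
    · rw [Submodule.span_le]
      intro x hx
      rw [← sub_add_cancel x p]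
      exact Submodule.add_mem_sup (vsub_mem_vectorSpan ℝ hx hp)
        (Submodule.mem_span_singleton_self p)
  have hinf : vectorSpan ℝ S ⊓ Submodule.span ℝ {p} = ⊥ := by
    rw [Submodule.eq_bot_iff]
    rintro x ⟨hx, hxp⟩
    obtain ⟨r, rfl⟩ := Submodule.mem_span_singleton.1 hxp
    have : l (r • p) = 0 := hker hx
    simp [show r = 0 by simpa [hl p hp] using this]
  have hp0 : p ≠ 0 := by
    rintro rfl
    simpa using hl 0 hp
  have := Submodule.finrank_sup_add_finrank_inf_eq (vectorSpan ℝ S) (Submodule.span ℝ {p})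
  rw [hsup, hinf, finrank_bot, finrank_span_singleton hp0] at this
  omega

variable {N : ℕ}

theorem deltaCoeff_eq_coeff (P : Set (Fin N → ℝ)) (i : ℕ) :
    deltaCoeff P i = PowerSeries.coeff i
      ((1 - PowerSeries.X) ^ (polyDim P + 1) * PowerSeries.mk fun t => (ehr P t : ℤ)) := by
  have hcoeff : ∀ r j : ℕ, PowerSeries.coeff j ((1 - PowerSeries.X : PowerSeries ℤ) ^ r) =
      (-1) ^ j * (r.choose j : ℤ) := by
    intro r j
    have : (1 - PowerSeries.X : PowerSeries ℤ) ^ r =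
        PowerSeries.rescale (-1) (((1 + Polynomial.X : Polynomial ℤ) ^ r : Polynomial ℤ)) := by
      simp [PowerSeries.rescale_X, sub_eq_add_neg]
    rw [this, PowerSeries.coeff_rescale, Polynomial.coeff_coe, Polynomial.coeff_one_add_X_pow]
  rw [PowerSeries.coeff_mul, Finset.Nat.sum_antidiagonal_eq_sum_range_succ_mk, deltaCoeff]
  simp [hcoeff]

theorem deltaCoeff_eq_of_ehr {P : Set (Fin N → ℝ)} {β : ℕ → ℕ}
    (h : ∀ t, (ehr P t : ℤ) = ∑ p ∈ Finset.HasAntidiagonal.antidiagonal t,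
      (β p.1 : ℤ) * PowerSeries.coeff p.2 ((PowerSeries.mk 1 : PowerSeries ℤ) ^ (polyDim P + 1)))
    (i : ℕ) : deltaCoeff P i = β i := by
  have hmk : (PowerSeries.mk fun t => (ehr P t : ℤ)) =
      PowerSeries.mk (fun k => (β k : ℤ)) * PowerSeries.mk 1 ^ (polyDim P + 1) := by
    ext t
    rw [PowerSeries.coeff_mk, h t, PowerSeries.coeff_mul]
    simp
  rw [deltaCoeff_eq_coeff, hmk, mul_left_comm, ← mul_pow, mul_comm (1 - PowerSeries.X),
    PowerSeries.mk_one_mul_one_sub_eq_one]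
  simp

/-- The incidence vector of an edge, with integer entries. -/
def edgeVector (G : SimpleGraph (Fin N)) (e : G.edgeSet) : Fin N → ℤ :=
  fun v => if v ∈ e.1 then 1 else 0

theorem edgeVector_cast (G : SimpleGraph (Fin N)) (e : G.edgeSet) :
    (fun v => (edgeVector G e v : ℝ)) = rho e.1 := by
  ext v
  simp [edgeVector, rho]

theorem rho_mk {i j : Fin N} (h : i ≠ j) : rho s(i, j) = Pi.single i 1 + Pi.single j 1 := by
  ext v
  by_cases hi : v = i
  · subst hi
    simp [rho, h]
  · simp [rho, Pi.single_apply, hi]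

theorem sum_rho {G : SimpleGraph (Fin N)} {e : Sym2 (Fin N)} (he : e ∈ G.edgeSet) :
    ∑ v, rho e v = 2 := by
  induction e with
  | _ i j =>
    rw [rho_mk (G.ne_of_adj he)]
    simp [Finset.sum_add_distrib]
    norm_num

variable (G : SimpleGraph (Fin N)) [Fintype G.edgeSet]

theorem range_realCombination_edgeVector :
    LinearMap.range (realCombination (edgeVector G)) = Submodule.span ℝ (rho '' G.edgeSet) := by
  rw [realCombination, Fintype.range_linearCombination]
  congr 1
  ext x
  simp [edgeVector_cast]

theorem sum_realCombination_edgeVector (a : G.edgeSet → ℝ) :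
    ∑ v, realCombination (edgeVector G) a v = 2 * ∑ e, a e := by
  simp only [realCombination_apply]
  rw [Finset.sum_comm, Finset.mul_sum]
  refine Finset.sum_congr rfl fun e _ => ?_
  rw [← Finset.mul_sum, ← sum_rho e.2, mul_comm]
  simp only [← edgeVector_cast]

theorem edgePolytope_eq_image :
    edgePolytope G = realCombination (edgeVector G) '' stdSimplex ℝ G.edgeSet := by
  classical
  rw [← convexHull_basis_eq_stdSimplex, LinearMap.image_convexHull, ← Set.range_comp, edgePolytope]
  congr 1
  have : ∀ e : G.edgeSet, realCombination (edgeVector G)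
      (fun f => if e = f then 1 else 0) = rho e.1 := fun e => by
    ext v
    rw [realCombination_apply, ← edgeVector_cast]
    simp
  ext x
  simp [this]

theorem ehr_edgePolytope (t : ℕ) :
    ehr (edgePolytope G) t = Nat.card (dilateLatticePoints (edgeVector G) t) := by
  rw [ehr]
  split_ifs with ht
  · subst ht
    have : dilateLatticePoints (edgeVector G) 0 = {0} := by
      ext z
      simp only [Set.mem_singleton_iff]
      constructor
      · rintro ⟨a, ha, hz, hsum⟩
        have ha0 : a = 0 := funext fun e => (Finset.sum_eq_zero_iff_of_nonneg fun e _ => ha e).1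
          (by simpa using hsum) e (Finset.mem_univ e)
        ext i
        have hzi : (0 : ℝ) = z i := by simpa [ha0] using congrFun hz i
        exact_mod_cast hzi.symm
      · rintro rfl
        exact ⟨0, fun _ => le_rfl, by ext; simp, by simp⟩
    rw [this]
    simp
  · have ht0 : (0 : ℝ) < t := by exact_mod_cast Nat.pos_of_ne_zero ht
    refine Nat.card_congr (Equiv.subtypeEquivRight fun z => ?_)
    rw [edgePolytope_eq_image]
    constructor
    · rintro ⟨_, ⟨a, ⟨ha, hsum⟩, rfl⟩, hz⟩
      refine ⟨(t : ℝ) • a, fun e => mul_nonneg ht0.le (ha e), by rw [map_smul]; exact hz, ?_⟩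
      simp [← Finset.mul_sum, hsum]
    · rintro ⟨a, ha, hz, hsum⟩
      refine ⟨_, ⟨(t : ℝ)⁻¹ • a, ⟨fun e => mul_nonneg (inv_nonneg.2 ht0.le) (ha e), ?_⟩, rfl⟩, ?_⟩
      · simp [← Finset.mul_sum, hsum, ht0.ne']
      · simp [smul_smul, ht0.ne', hz]

theorem polyDim_edgePolytope (hne : G.edgeSet.Nonempty) :
    polyDim (edgePolytope G) + 1 =
      Module.finrank ℝ (LinearMap.range (realCombination (edgeVector G))) := by
  rw [range_realCombination_edgeVector, polyDim, edgePolytope, affineSpan_convexHull,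
    direction_affineSpan]
  refine finrank_vectorSpan_add_one (hne.image _)
    ((1 / 2 : ℝ) • ∑ v, (LinearMap.proj v : (Fin N → ℝ) →ₗ[ℝ] ℝ)) ?_
  rintro _ ⟨e, he, rfl⟩
  simp [sum_rho he]

theorem isFree_of_linearIndependent_rho {C : Finset G.edgeSet}
    (hC : LinearIndependent ℝ fun e : C => rho e.1.1) :
    IsFree (realCombination (edgeVector G)) C := by
  intro a ha hφa
  ext e
  by_cases he : e ∈ C
  · refine Fintype.linearIndependent_iff.1 hC (fun e => a e.1) ?_ ⟨e, he⟩
    rw [Finset.sum_coe_sort C fun e => a e • rho e.1, ← hφa, realCombination,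
      Fintype.linearCombination_apply]
    simp only [edgeVector_cast]
    exact Finset.sum_subset (Finset.subset_univ C) fun e _ he => by simp [ha e he]
  · exact ha e he

/-- A set of linearly independent edges carrying an even `0/1`-weighting of height `h` forces the
degree of the edge polytope to be at least `h`. -/
theorem le_polyDeg_edgePolytope {C : Finset G.edgeSet}
    (hC : IsFree (realCombination (edgeVector G)) C) {z : Fin N → ℤ} {h : ℕ} (h0 : h ≠ 0)
    (hCh : C.card = 2 * h) (hz : ∀ i, ∑ e ∈ C, edgeVector G e i = 2 * z i) :
    h ≤ polyDeg (edgePolytope G) := by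
  have hsum : ∀ c, realCombination (edgeVector G) c = 0 → ∑ e, c e = 0 := fun c hc => by
    have := sum_realCombination_edgeVector G c
    simpa [hc] using this.symm
  obtain ⟨e, -⟩ : C.Nonempty := Finset.card_pos.1 (by omega)
  obtain ⟨β, hβ, hβh, hcount⟩ := exists_hStar hsum hC hCh hz
  have hδ : ∀ i, deltaCoeff (edgePolytope G) i = β i := by
    refine deltaCoeff_eq_of_ehr fun t => ?_
    rw [ehr_edgePolytope, polyDim_edgePolytope G ⟨e.1, e.2⟩]
    exact hcount t
  refine le_csSup ⟨Fintype.card G.edgeSet, fun i hi => ?_⟩ ?_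
  · by_contra! hlt
    exact hi (by rw [hδ, hβ i hlt, Nat.cast_zero])
  · show deltaCoeff _ h ≠ 0
    rw [hδ]
    exact_mod_cast hβh

end EdgePolytope

section OddCycles

open SimpleGraph

variable {N : ℕ} {G : SimpleGraph (Fin N)}

theorem sum_edges_incidence {u v : Fin N} (p : G.Walk u v) (x : Fin N) :
    (p.edges.map fun e => if x ∈ e then (1 : ℤ) else 0).sum =
      2 * p.support.count x - (if x = u then 1 else 0) - (if x = v then 1 else 0) := by
  induction p with
  | @nil u =>
    by_cases hu : x = u
    · subst hu
      simp
    · simp [hu, Ne.symm hu]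
  | @cons u v w h p ih =>
    have huv := G.ne_of_adj h
    simp only [Walk.edges_cons, List.map_cons, List.sum_cons, ih, Walk.support_cons,
      List.count_cons, Sym2.mem_iff]
    by_cases hu : x = u
    · subst hu
      simp [huv]
      ring
    · by_cases hv : x = v
      · subst hv
        simp [hu, Ne.symm hu]
        ring
      · simp [hu, hv, Ne.symm hu]

theorem single_sub_mem_of_rho_mem {U : Submodule ℝ (Fin N → ℝ)} {u v : Fin N} (p : G.Walk u v)
    (hU : ∀ e ∈ p.edges, rho e ∈ U) :
    Pi.single u 1 - (-1 : ℝ) ^ p.length • Pi.single v 1 ∈ U := by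
  induction p with
  | nil => simp
  | @cons u v w h p ih =>
    have h1 := hU s(u, v) (by simp)
    rw [rho_mk (G.ne_of_adj h)] at h1
    have h2 := U.sub_mem h1 (ih fun e he => hU e (by simp [he]))
    convert h2 using 1
    rw [Walk.length_cons, pow_succ]
    module

theorem single_mem_of_odd_closed_walk {U : Submodule ℝ (Fin N → ℝ)} {v : Fin N} (c : G.Walk v v)
    (hodd : Odd c.length) (hU : ∀ e ∈ c.edges, rho e ∈ U) {x : Fin N} (hx : x ∈ c.support) :
    Pi.single x (1 : ℝ) ∈ U := by
  have hv : Pi.single v (1 : ℝ) ∈ U := by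
    have := U.smul_mem (1 / 2 : ℝ) (single_sub_mem_of_rho_mem c hU)
    rw [hodd.neg_one_pow] at this
    convert this using 1
    module
  have h := single_sub_mem_of_rho_mem (c.takeUntil x hx).reverse fun e he =>
    hU e (c.edges_takeUntil_subset_edges hx (by simpa using he))
  simpa using U.add_mem h (U.smul_mem ((-1 : ℝ) ^ (c.takeUntil x hx).reverse.length) hv)

theorem linearIndependent_rho_of_odd_cycles {v w : Fin N} {c₁ : G.Walk v v} {c₂ : G.Walk w w}
    (hc₁ : c₁.IsCycle) (hc₂ : c₂.IsCycle) (hodd₁ : Odd c₁.length) (hodd₂ : Odd c₂.length)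
    (hdisj : ∀ x, x ∈ c₁.support → x ∉ c₂.support) {C : Finset G.edgeSet}
    (hC : ∀ e : G.edgeSet, e.1 ∈ c₁.edges ++ c₂.edges → e ∈ C)
    (hCcard : C.card = c₁.length + c₂.length) :
    LinearIndependent ℝ fun e : C => rho e.1.1 := by
  rw [linearIndependent_iff_card_le_finrank_span, Set.finrank]
  obtain ⟨U, hU⟩ : ∃ U, U = Submodule.span ℝ (Set.range fun e : C => rho e.1.1) := ⟨_, rfl⟩
  rw [← hU]
  have hU₁ : ∀ e ∈ c₁.edges, rho e ∈ U := fun e he => hU ▸ Submodule.subset_span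
    ⟨⟨⟨e, c₁.edges_subset_edgeSet he⟩, hC _ (List.mem_append_left _ he)⟩, rfl⟩
  have hU₂ : ∀ e ∈ c₂.edges, rho e ∈ U := fun e he => hU ▸ Submodule.subset_span
    ⟨⟨⟨e, c₂.edges_subset_edgeSet he⟩, hC _ (List.mem_append_right _ he)⟩, rfl⟩
  obtain ⟨T, hT⟩ : ∃ T, T = (c₁.support.tail ++ c₂.support.tail).toFinset := ⟨_, rfl⟩
  have hTcard : T.card = c₁.length + c₂.length := by
    rw [hT, List.toFinset_card_of_nodup]
    · simp
    · exact hc₁.support_nodup.append hc₂.support_nodup fun x h₁ h₂ =>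
        hdisj x (List.mem_of_mem_tail h₁) (List.mem_of_mem_tail h₂)
  have hTU : Submodule.span ℝ (Set.range fun x : T => (Pi.single x.1 1 : Fin N → ℝ)) ≤ U := by
    rw [Submodule.span_le]
    rintro _ ⟨⟨x, hx⟩, rfl⟩
    rw [hT] at hx
    rcases List.mem_append.1 (List.mem_toFinset.1 hx) with h | h
    · exact single_mem_of_odd_closed_walk c₁ hodd₁ hU₁ (List.mem_of_mem_tail h)
    · exact single_mem_of_odd_closed_walk c₂ hodd₂ hU₂ (List.mem_of_mem_tail h)
  have hTindep : LinearIndependent ℝ fun x : T => (Pi.single x.1 1 : Fin N → ℝ) :=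
    (Pi.linearIndependent_single_one (Fin N) ℝ).comp (fun x : T => x.1) Subtype.val_injective
  have hTfinrank := finrank_span_eq_card hTindep
  rw [Fintype.card_coe, hTcard] at hTfinrank
  rw [Fintype.card_coe, hCcard, ← hTfinrank]
  exact Submodule.finrank_mono hTU

end OddCycles

/-- If a finite connected simple graph `G` has two vertex-disjoint odd
cycles, then `deg(P_G) ≥ 3`. -/
theorem polyDeg_ge_three_of_two_disjoint_odd_cycles
    {N : ℕ} (G : SimpleGraph (Fin N)) (hG : G.Connected)
    {v w : Fin N} (c₁ : G.Walk v v) (c₂ : G.Walk w w)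
    (hc₁ : c₁.IsCycle) (hc₂ : c₂.IsCycle)
    (hodd₁ : Odd c₁.length) (hodd₂ : Odd c₂.length)
    (hdisj : ∀ x, x ∈ c₁.support → x ∉ c₂.support) :
    3 ≤ polyDeg (edgePolytope G) := by
  classical
  let l := c₁.edges ++ c₂.edges
  have hl : l.Nodup := by
    refine List.Nodup.append hc₁.edges_nodup hc₂.edges_nodup fun e he₁ he₂ => ?_
    induction e with
    | _ i j =>
      exact hdisj i (c₁.fst_mem_support_of_mem_edges he₁) (c₂.fst_mem_support_of_mem_edges he₂)
  have hlG : ∀ e ∈ l, e ∈ G.edgeSet := fun e he =>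
    (List.mem_append.1 he).elim (fun h => c₁.edges_subset_edgeSet h)
      fun h => c₂.edges_subset_edgeSet h
  have hll : l.length = c₁.length + c₂.length := by simp [l]
  let C : Finset G.edgeSet := l.toFinset.subtype (· ∈ G.edgeSet)
  have hCmap : C.map (Function.Embedding.subtype _) = l.toFinset := by
    rw [Finset.subtype_map, Finset.filter_true_of_mem]
    exact fun e he => hlG e (List.mem_toFinset.1 he)
  have hCcard : C.card = c₁.length + c₂.length := by
    rw [← Finset.card_map (Function.Embedding.subtype _), hCmap, List.toFinset_card_of_nodup hl,
      hll]
  have h3₁ := hc₁.three_le_length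
  have h3₂ := hc₂.three_le_length
  obtain ⟨h, hh⟩ := hodd₁.add_odd hodd₂
  refine le_trans (show 3 ≤ h by omega) (le_polyDeg_edgePolytope G (C := C)
    (z := fun x => c₁.support.count x - (if x = v then 1 else 0) +
      (c₂.support.count x - (if x = w then 1 else 0))) ?_ (by omega) (by omega) fun x => ?_)
  · exact isFree_of_linearIndependent_rho G (linearIndependent_rho_of_odd_cycles hc₁ hc₂ hodd₁
      hodd₂ hdisj (fun e he => by simpa [C, l] using he) hCcard)
  · have hsum : ∑ e ∈ C, edgeVector G e x =
        (l.map fun e => if x ∈ e then (1 : ℤ) else 0).sum := by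
      rw [← List.sum_toFinset _ hl, ← hCmap, Finset.sum_map]
      rfl
    rw [hsum, List.map_append, List.sum_append, sum_edges_incidence, sum_edges_incidence]
    ring
end
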